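/- Let N > 6, and suppose R_N is tiled by triangles all similar to a triangle whose angles α, β, γ are rational multiples of π. Then, after a suitable permutation of α, β, γ and a suitable choice of the angle-labeling of the vertices of each tile, the equations at the N vertices of R_N are all the same; more precisely, one of the following holds: (i) the equation at every vertex V_j is α = δ_N (one tile at each vertex, with angle α = δ_N there); (ii) the equation at every vertex V_j is α + β = δ_N (two tiles at each vertex, one with angle α and one with angle β there); (iii) the equation at every vertex V_j is 2α = δ_N (two tiles at each vertex, both with angle α there). -/

import Mathlib

/-!
The heart of the matter is that an angle equation at a vertex of `R_N` stays true after Galois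
conjugation. Let `M` be an even multiple of `N` such that the angles of the tiles are the multiples
`n l * π / M`, and put `ζ = exp (2 π i / M)`.

*Cancellation.* For any function `G` of a line and a point on it, the sums of `G (line, end) -
G (line, start)` over the oriented edges of the tiles add up to the sum over the edges of `R_N`
(`tiling_chain`). The coefficient of a point on a line is isolated by comparing crossing numbers
of rays whose starting points lie on the two sides of the line (`chain`), and these crossing
numbers are the indicators of the triangles (`crossing_sum`).

*The sides lie in a cyclotomic field.* Choosing for `G` the area form restricted to lines whose
direction is an `M`-th root of unity shows that all tiles have sides in such directions
(`dirn_good`). For a `ℚ(ζ)`-linear projection `Ψ` of `ℂ` onto `ℚ(ζ)`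
commuting with complex conjugation, the image of the tiling has the same total area, and so does
its image under `(1 + Ψ) / 2`. As the area of a tile of given shape is a positive definite quadratic
form in a side, `Ψ` fixes all sides (`side_mem`).

*Conjugation.* For `k` coprime to `M` let `Φ` be an additive extension of `ζ ↦ ζ ^ k` commuting with
conjugation (`exists_phi`). It maps `R_N` to the star polygon with vertices `ω ^ (k j)`,
`ω = exp (2 π i / N)`, and the tiles to triangles with angles `π * fract (k n / M)` after a possible
common reversal of orientation. By cancellation these triangles cover each generic point as often,
up to a common sign, as the star polygon winds around it (`exists_star`). Near one of its vertices
this number is `0` or `1` when `fract (k / N) < 1 / 2`, so the triangles with a corner there do not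
overlap and their angles add up to at most `π` (`angle_le`). As the sum is determined modulo `π` by
the original one, the conjugate equation `∑ fract (k n / M) = 1 - 2 fract (k / N)` holds at every
vertex (`angle_eq`).

*Arithmetic.* If three or more tiles met at a vertex, one of the angles, used at least twice there,
would satisfy `fract (k n / M) + fract (k / N) < 1 / 2` for all admissible `k`; a `k` close to half or a
quarter of the common denominator contradicts this (`no_double`). So at most two tiles meet at each vertex.
Vertices with different equations, compared using `α + β + γ = π` and `δ_N > 2 π / 3`, force the
tile to be isosceles (`classify`): either the two angles at some vertex are the apex angle and a
base angle, in which case another conjugate gives a negative apex angle (`no_iso`), or all angles at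
vertices are base angles. In the latter case the two base angles of each tile can be labeled so that
every vertex gets one of each: the pairs of base angles in one tile and the pairs meeting at one
vertex form two matchings, whose union is bipartite (`exists_coloring`).
-/


open Real EuclideanGeometry

noncomputable section

/-- The Euclidean plane. -/
abbrev Pt : Type := EuclideanSpace ℝ (Fin 2)

/-- The `j`-th vertex of the regular `N`-gon inscribed in the unit circle. -/
noncomputable def ngonVertex (N : ℕ) (j : ℕ) : Pt :=
  (WithLp.equiv 2 (Fin 2 → ℝ)).symm ![Real.cos (2 * π * j / N), Real.sin (2 * π * j / N)]

/-- The regular `N`-gon `R_N`. -/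
noncomputable def ngon (N : ℕ) : Set Pt :=
  convexHull ℝ (Set.range fun j : Fin N => ngonVertex N j)

/-- The interior angle `δ_N = (N-2)π/N` of the regular `N`-gon. -/
noncomputable def ngonAngle (N : ℕ) : ℝ := ((N : ℝ) - 2) * π / N

/-- The closed triangular region spanned by the three points `T 0, T 1, T 2`. -/
noncomputable def triRegion (T : Fin 3 → Pt) : Set Pt :=
  convexHull ℝ (Set.range T)

/-- The angle of the triangle `T` at its `i`-th vertex. -/
noncomputable def angleAt (T : Fin 3 → Pt) (i : Fin 3) : ℝ :=
  EuclideanGeometry.angle (T (i + 1)) (T i) (T (i + 2))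

/-- `T` is a tiling of the regular `N`-gon by finitely many nondegenerate triangles:
the tiles have pairwise disjoint interiors and their union is `R_N`. -/
def IsTiling (N : ℕ) {m : ℕ} (T : Fin m → Fin 3 → Pt) : Prop :=
  (∀ t, AffineIndependent ℝ (T t)) ∧
  (Pairwise fun t s => Disjoint (interior (triRegion (T t))) (interior (triRegion (T s)))) ∧
  (⋃ t, triRegion (T t)) = ngon N

/-- The triangle `T` has angles `α, β, γ` at its vertices `0, 1, 2` (a labeling of its
vertices by the three angles). -/
def HasAngles (T : Fin 3 → Pt) (α β γ : ℝ) : Prop :=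
  angleAt T 0 = α ∧ angleAt T 1 = β ∧ angleAt T 2 = γ

/-- The triangle `T` is similar to a triangle with angles `α, β, γ`:
its angles are `α, β, γ` in some order (sizes and orientation are unrestricted). -/
def SimilarTo (T : Fin 3 → Pt) (α β γ : ℝ) : Prop :=
  ∃ σ : Equiv.Perm (Fin 3), HasAngles (fun i => T (σ i)) α β γ

/-- The number of tiles of the (labeled) tiling `T` whose vertex labeled `i`
lies at the point `V`. -/
noncomputable def countAt {m : ℕ} (T : Fin m → Fin 3 → Pt) (i : Fin 3) (V : Pt) : ℕ :=
  Nat.card {t : Fin m // T t i = V}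

/-- The tiling `T`, by triangles similar to the triangle with angles `α, β, γ`, is
regular: one can label the vertices of each tile by the angles `α, β, γ` of the tile
at those vertices so that, for two of the labels, at every point of the plane the
number of tiles having their vertex carrying the first label at that point equals the
number of tiles having their vertex carrying the second label there. -/
def IsRegularTiling {m : ℕ} (T : Fin m → Fin 3 → Pt) (α β γ : ℝ) : Prop :=
  ∃ L : Fin m → Equiv.Perm (Fin 3),
    (∀ t, HasAngles (fun i => T t (L t i)) α β γ) ∧
    ∃ i j : Fin 3, i ≠ j ∧
      ∀ V : Pt, countAt (fun t i' => T t (L t i')) i V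
              = countAt (fun t i' => T t (L t i')) j V

open Filter Topology

/-! ### Edges, lines and crossing numbers -/

/-- The oriented area form on `ℂ`: `cr a b > 0` when `b` lies counterclockwise of `a`. -/
def cr (a b : ℂ) : ℝ := a.re * b.im - a.im * b.re

/-- The direction of the line spanned by `u`, encoded as the unit number `u / ū`, the square of
the unit vector along `u`; `u` and `-u` have the same direction. -/
def dirn (u : ℂ) : ℂ := u / (starRingEnd ℂ) u

/-- The line through `p` and `q`, encoded as the pair `(δ, c)` for which it is the set
`{z | z - δ z̄ = c}`. -/
def lineOf (p q : ℂ) : ℂ × ℂ := (dirn (q - p), p - dirn (q - p) * (starRingEnd ℂ) p)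

/-- `1` if the open ray from `x` in direction `w` meets the line `ℓ` transversally, `0` otherwise.
For `ℓ` parallel to `w` the quotient is `0` by the convention for division. -/
def hit (x w : ℂ) (ℓ : ℂ × ℂ) : ℤ :=
  if 0 < ((ℓ.2 - x + ℓ.1 * (starRingEnd ℂ) x) / (w - ℓ.1 * (starRingEnd ℂ) w)).re then 1 else 0

/-- `1` if `p` lies to the left of the line through `x` with direction `w`, `0` otherwise. -/
def side (x w p : ℂ) : ℤ := if 0 < cr w (p - x) then 1 else 0

/-- The contribution to the boundary sum of the oriented edge from `p` to `q`, for a function `G`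
of a line and a point on it. -/
def edge {A : Type*} [AddCommGroup A] (G : ℂ × ℂ → ℂ → A) (p q : ℂ) : A :=
  G (lineOf p q) q - G (lineOf p q) p

/-- The boundary sum of the oriented triangle `Q`. -/
def bd {A : Type*} [AddCommGroup A] (G : ℂ × ℂ → ℂ → A) (Q : Fin 3 → ℂ) : A :=
  ∑ i, edge G (Q i) (Q (i + 1))

/-- The signed indicator of the open triangle `Q`: at its points it is `1` if `Q` is
counterclockwise and `-1` if `Q` is clockwise; it is `0` elsewhere. -/
def sind (Q : Fin 3 → ℂ) (x : ℂ) : ℤ :=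
  if ∀ i, 0 < cr (Q i - x) (Q (i + 1) - x) then 1
  else if ∀ i, cr (Q i - x) (Q (i + 1) - x) < 0 then -1 else 0

lemma dirn_neg (u : ℂ) : dirn (-u) = dirn u := by simp [dirn, neg_div_neg_eq]

lemma dirn_mul_conj (u : ℂ) : dirn u * (starRingEnd ℂ) u = u := by
  by_cases h : u = 0
  · simp [h]
  · have : (starRingEnd ℂ) u ≠ 0 := by simpa using h
    unfold dirn; field_simp

lemma dirn_norm {u : ℂ} (h : u ≠ 0) : ‖dirn u‖ = 1 := by
  simp [dirn, h]

lemma lineOf_comm (p q : ℂ) : lineOf q p = lineOf p q := by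
  have h := dirn_mul_conj (q - p)
  have h2 : dirn (p - q) = dirn (q - p) := by rw [← neg_sub, dirn_neg]
  unfold lineOf
  rw [h2]
  ext1
  · rfl
  · simp only [map_sub] at h ⊢
    linear_combination -h

lemma edge_comm {A : Type*} [AddCommGroup A] (G : ℂ × ℂ → ℂ → A) (p q : ℂ) :
    edge G q p = - edge G p q := by
  simp [edge, lineOf_comm p q]

/-- The signed crossing number of the ray from `x` in direction `w` with the oriented edge from
`p` to `q`. -/
def crossing (x w p q : ℂ) : ℤ :=
  if cr w (p - x) < 0 ∧ 0 < cr w (q - x) ∧ 0 < cr (p - x) (q - x) then 1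
  else if cr w (q - x) < 0 ∧ 0 < cr w (p - x) ∧ cr (p - x) (q - x) < 0 then -1 else 0

lemma hit_quot {x w p q δ : ℂ} (hδ : q - p = δ * (starRingEnd ℂ) (q - p))
    (hne : cr w (q - x) - cr w (p - x) ≠ 0) :
    ((p - δ * (starRingEnd ℂ) p - x + δ * (starRingEnd ℂ) x) / (w - δ * (starRingEnd ℂ) w)) =
      ((cr (p - x) (q - x) / (cr w (q - x) - cr w (p - x)) : ℝ) : ℂ) := by
  set c := (starRingEnd ℂ) with hc
  have hu : c (q - p) ≠ 0 := by
    intro h0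
    have : q = p := by
      have := (map_eq_zero (starRingEnd ℂ)).1 h0
      exact sub_eq_zero.1 this
    apply hne; rw [this]; ring
  have e1 : (p - δ * c p - x + δ * c x) * c (q - p) =
      (-2 * Complex.I) * (cr (p - x) (q - x) : ℂ) := by
    have : (p - δ * c p - x + δ * c x) * c (q - p) =
      (p - x) * c (q - p) - (q - p) * c (p - x) := by
      simp only [map_sub] at hδ ⊢
      linear_combination (c p - c x) * hδ
    rw [this]
    apply Complex.ext <;> simp [cr, hc] <;> ring
  have e2 : (w - δ * c w) * c (q - p) =
      (-2 * Complex.I) * ((cr w (q - x) - cr w (p - x) : ℝ) : ℂ) := by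
    have : (w - δ * c w) * c (q - p) = w * c (q - p) - (q - p) * c w := by
      simp only [map_sub] at hδ ⊢
      linear_combination (c w) * hδ
    rw [this]
    apply Complex.ext <;> simp [cr, hc] <;> ring
  have hI : (-2 * Complex.I) ≠ 0 := by simp
  have hne' : ((cr w (q - x) - cr w (p - x) : ℝ) : ℂ) ≠ 0 := by exact_mod_cast hne
  rw [← mul_div_mul_right _ _ hu, e1, e2, mul_div_mul_left _ _ hI]
  push_cast; rfl

lemma hit_mul {x w p q δ c : ℂ} (hδ : q - p = δ * (starRingEnd ℂ) (q - p))
    (hc : c = p - δ * (starRingEnd ℂ) p)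
    (hp : cr w (p - x) ≠ 0) (hq : cr w (q - x) ≠ 0) :
    hit x w (δ, c) * (side x w q - side x w p) = crossing x w p q := by
  by_cases hne : cr w (q - x) - cr w (p - x) = 0
  · have h : cr w (q - x) = cr w (p - x) := by linarith
    have : side x w q = side x w p := by simp [side, h]
    rw [this, crossing, if_neg (by rw [h]; intro h; linarith [h.1, h.2.1]),
      if_neg (by rw [h]; intro h; linarith [h.1, h.2.1])]
    simp
  · have h := hit_quot hδ hne
    unfold hit
    subst hc
    simp only [h, Complex.ofReal_re]
    unfold side crossing
    rcases lt_or_gt_of_ne hp with hp | hp <;> rcases lt_or_gt_of_ne hq with hq | hq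
    · simp [hp, hq, hp.not_gt, hq.not_gt]
    · have : 0 < cr w (q - x) - cr w (p - x) := by linarith
      simp [hp, hq, hp.not_gt, hq.not_gt, div_pos_iff_of_pos_right this]
    · have : cr w (q - x) - cr w (p - x) < 0 := by linarith
      have e : 0 < cr (p - x) (q - x) / (cr w (q - x) - cr w (p - x)) ↔
        cr (p - x) (q - x) < 0 := by
        rw [div_pos_iff]; constructor
        · rintro (h | h) <;> linarith [h.1, h.2]
        · intro h; right; exact ⟨h, this⟩
      simp only [e]
      simp [hp, hq, hp.not_gt, hq.not_gt]
      split_ifs <;> rfl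
    · simp [hp, hq, hp.not_gt, hq.not_gt]

/-- For a counterclockwise or clockwise triangle, the crossings of a ray with the boundary count
the starting point of the ray. -/
lemma crossing_sum (Q : Fin 3 → ℂ) (x w : ℂ) (hw : ∀ i, cr w (Q i - x) ≠ 0)
    (hQ : ∀ i, cr (Q i - x) (Q (i + 1) - x) ≠ 0) :
    ∑ i, crossing x w (Q i) (Q (i + 1)) = sind Q x := by
  unfold sind
  simp only [Fin.sum_univ_three, Fin.forall_fin_succ, Fin.isValue] at *
  simp only [crossing]
  have e1 : (1 : Fin 3) + 1 = 2 := rfl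
  have e2 : (2 : Fin 3) + 1 = 0 := rfl
  have e3 : (0 : Fin 3) + 1 = 1 := rfl
  simp only [Fin.isValue, Fin.succ_zero_eq_one, Fin.succ_one_eq_two, IsEmpty.forall_iff, and_true,
    e1, e2, e3] at *
  set a := Q 0 - x
  set b := Q 1 - x
  set c := Q 2 - x
  have key : cr w a * cr b c + cr w b * cr c a + cr w c * cr a b = 0 := by
    simp [cr]; ring
  obtain ⟨h0, h1, h2⟩ := hw
  obtain ⟨k0, k1, k2⟩ := hQ
  generalize cr w a = A at *
  generalize cr w b = B at *
  generalize cr w c = C at *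
  generalize cr a b = X at *
  generalize cr b c = Y at *
  generalize cr c a = Z at *
  rcases lt_or_gt_of_ne h0 with h0 | h0 <;> rcases lt_or_gt_of_ne h1 with h1 | h1 <;>
  rcases lt_or_gt_of_ne h2 with h2 | h2 <;> rcases lt_or_gt_of_ne k0 with k0 | k0 <;>
  rcases lt_or_gt_of_ne k1 with k1 | k1 <;> rcases lt_or_gt_of_ne k2 with k2 | k2 <;>
  first
  | (simp [h0, h1, h2, k0, k1, k2, h0.not_gt, h1.not_gt, h2.not_gt, k0.not_gt, k1.not_gt,
      k2.not_gt]; done)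
  | (exfalso
     have t0 := mul_pos_of_neg_of_neg h0 k1
     have t1 := mul_pos_of_neg_of_neg h1 k2
     have t2 := mul_pos_of_neg_of_neg h2 k0
     linarith)
  | (exfalso
     have t0 : A * Y < 0 := by first | exact mul_neg_of_neg_of_pos h0 k1 | exact mul_neg_of_pos_of_neg h0 k1
     have t1 : B * Z < 0 := by first | exact mul_neg_of_neg_of_pos h1 k2 | exact mul_neg_of_pos_of_neg h1 k2
     have t2 : C * X < 0 := by first | exact mul_neg_of_neg_of_pos h2 k0 | exact mul_neg_of_pos_of_neg h2 k0
     linarith)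
  | (exfalso
     have t0 : 0 < A * Y := by first | exact mul_pos_of_neg_of_neg h0 k1 | exact mul_pos h0 k1
     have t1 : 0 < B * Z := by first | exact mul_pos_of_neg_of_neg h1 k2 | exact mul_pos h1 k2
     have t2 : 0 < C * X := by first | exact mul_pos_of_neg_of_neg h2 k0 | exact mul_pos h2 k0
     linarith)

/-! ### Cancellation of boundaries -/

/-- The point `z` lies on the line `ℓ`. -/
def OnL (ℓ : ℂ × ℂ) (z : ℂ) : Prop := z - ℓ.1 * (starRingEnd ℂ) z = ℓ.2

lemma onL_left (p q : ℂ) : OnL (lineOf p q) p := rfl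

lemma onL_right (p q : ℂ) : OnL (lineOf p q) q := by
  rw [← lineOf_comm]; exact onL_left q p

lemma conj_ne {u : ℂ} (hu : u ≠ 0) : (starRingEnd ℂ) u ≠ 0 := by simpa using hu

lemma onL_add {ℓ : ℂ × ℂ} {P u : ℂ} (hℓ : ℓ.1 = dirn u) (hP : OnL ℓ P) (τ : ℝ) :
    OnL ℓ (P + τ * u) := by
  have := dirn_mul_conj u
  unfold OnL at *
  rw [← hℓ] at this
  simp only [map_add, map_mul, Complex.conj_ofReal]
  linear_combination hP - τ * this

lemma eventually_not_onL {ℓ ℓ' : ℂ × ℂ} {P u : ℂ} (hu : u ≠ 0) (hℓ : ℓ.1 = dirn u)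
    (hP : OnL ℓ P) (hne : ℓ' ≠ ℓ) : ∀ᶠ τ : ℝ in 𝓝[≠] 0, ¬ OnL ℓ' (P + τ * u) := by
  have hs : Set.Subsingleton {τ : ℝ | OnL ℓ' (P + τ * u)} := by
    intro a ha b hb
    by_contra hab
    apply hne
    simp only [Set.mem_ofPred_eq, OnL, map_add, map_mul, Complex.conj_ofReal] at ha hb
    have h1 : ((a - b : ℝ) : ℂ) * (u - ℓ'.1 * (starRingEnd ℂ) u) = 0 := by
      push_cast; linear_combination ha - hb
    have h2 : ((a - b : ℝ) : ℂ) ≠ 0 := by exact_mod_cast sub_ne_zero.2 hab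
    have h3 : u - ℓ'.1 * (starRingEnd ℂ) u = 0 := (mul_eq_zero.1 h1).resolve_left h2
    have h4 : ℓ'.1 = ℓ.1 := by
      rw [hℓ, dirn, eq_div_iff (conj_ne hu)]; linear_combination -h3
    have h5 := onL_add hℓ hP a
    simp only [OnL, map_add, map_mul, Complex.conj_ofReal] at h5
    ext1
    · exact h4
    · rw [← ha, ← h5, h4]
  exact nhdsNE_le_cofinite 0 hs.finite.eventually_cofinite_notMem

lemma cr_rot (u z : ℂ) (τ : ℝ) :
    cr (Complex.I * u) (z - τ * u) = cr (Complex.I * u) z + τ * Complex.normSq u := by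
  simp [cr, Complex.normSq_apply]; ring

lemma eventually_cr_ne {u : ℂ} (hu : u ≠ 0) (z P : ℂ) :
    ∀ᶠ τ : ℝ in 𝓝[≠] 0, cr (Complex.I * u) (z - (P + τ * u)) ≠ 0 := by
  have hs : Set.Subsingleton {τ : ℝ | cr (Complex.I * u) (z - (P + τ * u)) = 0} := by
    intro a ha b hb
    simp only [Set.mem_ofPred_eq, ← sub_sub, cr_rot] at ha hb
    have : Complex.normSq u ≠ 0 := by simpa using hu
    apply mul_right_cancel₀ this
    linarith
  exact nhdsNE_le_cofinite 0 hs.finite.eventually_cofinite_notMem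

/-- Moving along a line past the point `P`, the side of a point `z` of the line changes only if
`z = P`. -/
lemma eventually_side {ℓ : ℂ × ℂ} {P u z : ℂ} (hu : u ≠ 0) (hℓ : ℓ.1 = dirn u)
    (hP : OnL ℓ P) (hz : OnL ℓ z) : ∀ᶠ τ : ℝ in 𝓝[>] 0,
      side (P + τ * u) (Complex.I * u) z - side (P + (-τ : ℝ) * u) (Complex.I * u) z =
        if z = P then 1 else 0 := by
  have hn : 0 < Complex.normSq u := by simpa [Complex.normSq_pos] using hu
  split_ifs with h
  · filter_upwards [self_mem_nhdsWithin] with τ hτ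
    have hτ : 0 < τ := hτ
    subst h
    simp only [side, ← sub_sub, cr_rot]
    have := mul_pos hτ hn
    rw [if_pos (by simp [cr]; nlinarith), if_neg (by simp [cr]; nlinarith)]
    rfl
  · have h0 : cr (Complex.I * u) (z - P) ≠ 0 := by
      intro h0
      apply h
      have e : z - P = dirn u * (starRingEnd ℂ) (z - P) := by
        unfold OnL at hP hz
        rw [hℓ] at hP hz
        simp only [map_sub]
        linear_combination hz - hP
      rw [dirn, div_mul_eq_mul_div, eq_div_iff (conj_ne hu)] at e
      -- the real part of `(z - P) ū` is the vanishing area form, the imaginary part vanishes by `e`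
      have h1 := congrArg Complex.im e
      have h2 : (z - P) * (starRingEnd ℂ) u = 0 := by
        apply Complex.ext
        · simp [cr] at h0 ⊢; linarith
        · simp at h1 ⊢; linarith
      exact sub_eq_zero.1 ((mul_eq_zero.1 h2).resolve_right (conj_ne hu))
    have c1 : Tendsto (fun τ : ℝ => cr (Complex.I * u) (z - P) + τ * Complex.normSq u) (𝓝[>] 0)
        (𝓝 (cr (Complex.I * u) (z - P))) := by
      have : Continuous (fun τ : ℝ => cr (Complex.I * u) (z - P) + τ * Complex.normSq u) := by
        fun_prop
      simpa using (this.tendsto 0).mono_left nhdsWithin_le_nhds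
    have c2 : Tendsto (fun τ : ℝ => cr (Complex.I * u) (z - P) + (-τ) * Complex.normSq u) (𝓝[>] 0)
        (𝓝 (cr (Complex.I * u) (z - P))) := by
      have : Continuous (fun τ : ℝ => cr (Complex.I * u) (z - P) + (-τ) * Complex.normSq u) := by
        fun_prop
      simpa using (this.tendsto 0).mono_left nhdsWithin_le_nhds
    rcases lt_or_gt_of_ne h0 with h0 | h0
    · filter_upwards [c1.eventually (gt_mem_nhds h0), c2.eventually (gt_mem_nhds h0)] with τ h1 h2
      simp only [side, ← sub_sub, cr_rot]
      rw [if_neg h1.not_gt, if_neg h2.not_gt]; rfl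
    · filter_upwards [c1.eventually (lt_mem_nhds h0), c2.eventually (lt_mem_nhds h0)] with τ h1 h2
      simp only [side, ← sub_sub, cr_rot]
      rw [if_pos h1, if_pos h2]; rfl

lemma hit_on {ℓ : ℂ × ℂ} {y u : ℂ} (hu : u ≠ 0) (hℓ : ℓ.1 = dirn u) (hy : OnL ℓ y) (η : ℝ) :
    hit (y + η * (Complex.I * u)) (Complex.I * u) ℓ = if η < 0 then 1 else 0 := by
  have hd := dirn_mul_conj u
  rw [← hℓ] at hd
  have e : Complex.I * u - ℓ.1 * (starRingEnd ℂ) (Complex.I * u) ≠ 0 := by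
    have : Complex.I * u - ℓ.1 * (starRingEnd ℂ) (Complex.I * u) = 2 * Complex.I * u := by
      simp only [map_mul, Complex.conj_I]; linear_combination Complex.I * hd
    rw [this]; simp [hu]
  have : (ℓ.2 - (y + η * (Complex.I * u)) +
      ℓ.1 * (starRingEnd ℂ) (y + η * (Complex.I * u))) /
      (Complex.I * u - ℓ.1 * (starRingEnd ℂ) (Complex.I * u)) = ((-η : ℝ) : ℂ) := by
    rw [div_eq_iff e]
    unfold OnL at hy
    simp only [map_add, map_mul, Complex.conj_ofReal]
    push_cast
    linear_combination -hy
  unfold hit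
  rw [this]
  simp

lemma eventually_hit {ℓ' : ℂ × ℂ} {y w : ℂ}
    (hr : w - ℓ'.1 * (starRingEnd ℂ) w = 0 ∨ 
      ((ℓ'.2 - y + ℓ'.1 * (starRingEnd ℂ) y) / (w - ℓ'.1 * (starRingEnd ℂ) w)).re ≠ 0) :
    ∀ᶠ η : ℝ in 𝓝 0, hit (y + η * w) w ℓ' = hit y w ℓ' := by
  rcases hr with hr | hr
  · exact Eventually.of_forall fun η => by simp [hit, hr]
  · have hc : Continuous (fun η : ℝ => ((ℓ'.2 - (y + η * w) + ℓ'.1 * (starRingEnd ℂ) (y + η * w)) /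
        (w - ℓ'.1 * (starRingEnd ℂ) w)).re) := by
      have := Complex.continuous_conj
      fun_prop
    have := hc.tendsto 0
    simp only [Complex.ofReal_zero, zero_mul, add_zero] at this
    rcases lt_or_gt_of_ne hr with h | h
    · filter_upwards [this.eventually (gt_mem_nhds h)] with η h1
      simp only [hit]; rw [if_neg h1.not_gt, if_neg h.not_gt]
    · filter_upwards [this.eventually (lt_mem_nhds h)] with η h1
      simp only [hit]; rw [if_pos h1, if_pos h]

/-- The quotient deciding `hit` is real, since the line is preserved by its own reflection. -/
lemma hit_quot_ne {ℓ' : ℂ × ℂ} {y w p : ℂ} (hn : ‖ℓ'.1‖ = 1) (hp : OnL ℓ' p) (hy : ¬ OnL ℓ' y) :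
    w - ℓ'.1 * (starRingEnd ℂ) w = 0 ∨ 
      ((ℓ'.2 - y + ℓ'.1 * (starRingEnd ℂ) y) / (w - ℓ'.1 * (starRingEnd ℂ) w)).re ≠ 0 := by
  by_cases h0 : w - ℓ'.1 * (starRingEnd ℂ) w = 0
  · exact Or.inl h0
  right
  have hd : ℓ'.1 * (starRingEnd ℂ) ℓ'.1 = 1 := by
    rw [Complex.mul_conj, Complex.normSq_eq_norm_sq, hn]; simp
  have e2 : ℓ'.2 - y + ℓ'.1 * (starRingEnd ℂ) y = (p - y) - ℓ'.1 * (starRingEnd ℂ) (p - y) := by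
    unfold OnL at hp; rw [← hp, map_sub]; ring
  have hk : ∀ z, (starRingEnd ℂ) (z - ℓ'.1 * (starRingEnd ℂ) z) =
      - (starRingEnd ℂ) ℓ'.1 * (z - ℓ'.1 * (starRingEnd ℂ) z) := by
    intro z
    simp only [map_sub, map_mul, Complex.conj_conj]
    linear_combination - (starRingEnd ℂ) z * hd
  have hδ : (starRingEnd ℂ) ℓ'.1 ≠ 0 := by
    intro h; rw [h] at hd; simp at hd
  have hne : (ℓ'.2 - y + ℓ'.1 * (starRingEnd ℂ) y) / (w - ℓ'.1 * (starRingEnd ℂ) w) ≠ 0 := by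
    apply div_ne_zero _ h0
    intro h; apply hy; unfold OnL; linear_combination -h
  have hreal : (starRingEnd ℂ) ((ℓ'.2 - y + ℓ'.1 * (starRingEnd ℂ) y) /
      (w - ℓ'.1 * (starRingEnd ℂ) w)) =
      (ℓ'.2 - y + ℓ'.1 * (starRingEnd ℂ) y) / (w - ℓ'.1 * (starRingEnd ℂ) w) := by
    rw [e2, map_div₀, hk, hk, mul_div_mul_left _ _ (neg_ne_zero.2 hδ)]
  intro h
  apply hne
  apply Complex.ext
  · exact h
  · have := congrArg Complex.im hreal
    simp only [Complex.conj_im] at this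
    simp only [Complex.zero_im]; linarith

/-- If the weighted crossing numbers of a finite family of oriented segments vanish for all rays
starting off finitely many lines, then the formal boundary of the family vanishes on every line:
its boundary sum is zero for every function `G`. The coefficient of a point `P` on a line `ℓ` is
isolated by letting the starting point of the ray jump across `ℓ` near `P`, on both sides of
`P`. -/
theorem chain {E : Type*} [Fintype E] (c : E → ℤ) (p q : E → ℂ) (hpq : ∀ e, p e ≠ q e)
    (S : Finset (ℂ × ℂ))
    (h : ∀ x w, (∀ ℓ ∈ S, ¬ OnL ℓ x) →
      (∀ e, cr w (p e - x) ≠ 0 ∧ cr w (q e - x) ≠ 0) →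
      ∑ e, c e * (hit x w (lineOf (p e) (q e)) * (side x w (q e) - side x w (p e))) = 0)
    {A : Type*} [AddCommGroup A] (G : ℂ × ℂ → ℂ → A) :
    ∑ e, c e • edge G (p e) (q e) = 0 := by
  classical
  set L : E → ℂ × ℂ := fun e => lineOf (p e) (q e) with hL
  have hLn : ∀ e, ‖(L e).1‖ = 1 := fun e => dirn_norm (sub_ne_zero.2 (hpq e).symm)
  let D : ℂ × ℂ → ℂ → ℤ := fun ℓ P => ∑ e, if L e = ℓ then
    c e * ((if q e = P then 1 else 0) - (if p e = P then 1 else 0)) else 0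
  -- the jump across a line at a generic point
  have step : ∀ (e0 : E) (y : ℂ), OnL (L e0) y → (∀ ℓ ∈ S, ℓ ≠ L e0 → ¬ OnL ℓ y) →
      (∀ e, L e ≠ L e0 → ¬ OnL (L e) y) → 
      (∀ e, cr (Complex.I * (q e0 - p e0)) (p e - y) ≠ 0 ∧
        cr (Complex.I * (q e0 - p e0)) (q e - y) ≠ 0) →
      ∑ e, (if L e = L e0 then c e * (side y (Complex.I * (q e0 - p e0)) (q e) -
        side y (Complex.I * (q e0 - p e0)) (p e)) else 0) = 0 := by
    intro e0 y hy hS hE hcr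
    set u := q e0 - p e0 with hu
    have hu0 : u ≠ 0 := sub_ne_zero.2 (hpq e0).symm
    set w := Complex.I * u with hw
    have hℓ : (L e0).1 = dirn u := rfl
    have hside : ∀ (η : ℝ) z, side (y + η * w) w z = side y w z := by
      intro η z
      simp only [side]
      congr 2
      simp [cr]; ring
    have hcr' : ∀ (η : ℝ) z, cr w (z - (y + η * w)) = cr w (z - y) := by
      intro η z
      simp [cr]; ring
    have ev1 : ∀ᶠ η : ℝ in 𝓝[≠] 0, ∀ ℓ ∈ S, ¬ OnL ℓ (y + η * w) := by
      rw [Filter.eventually_all_finset]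
      intro ℓ hℓS
      by_cases hne : ℓ = L e0
      · filter_upwards [self_mem_nhdsWithin] with η hη hon
        have hη : η ≠ 0 := hη
        rw [hne] at hon
        unfold OnL at hon hy
        have hd := dirn_mul_conj u
        rw [← hℓ] at hd
        have : (η : ℂ) * (2 * w) = 0 := by
          simp only [map_add, map_mul, Complex.conj_ofReal, hw, Complex.conj_I] at hon ⊢
          linear_combination hon - hy - η * Complex.I * hd
        simp [hη, hw, hu0] at this
      · have := hS ℓ hℓS hne
        have hc : Continuous (fun η : ℝ => (y + η * w) - ℓ.1 * (starRingEnd ℂ) (y + η * w)) := by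
          have := Complex.continuous_conj
          fun_prop
        have hc := hc.tendsto 0
        simp only [Complex.ofReal_zero, zero_mul, add_zero] at hc
        exact (hc.eventually_ne this).filter_mono nhdsWithin_le_nhds
    have ev2 : ∀ᶠ η : ℝ in 𝓝 0, ∀ e, L e ≠ L e0 → hit (y + η * w) w (L e) = hit y w (L e) := by
      rw [Filter.eventually_all]
      intro e
      by_cases hne : L e = L e0
      · exact Eventually.of_forall fun _ h => absurd hne h
      · filter_upwards [eventually_hit
          (hit_quot_ne (w := w) (hLn e) (onL_left _ _) (hE e hne))] with η h1 _ using h1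
    have ev3 : ∀ᶠ η : ℝ in 𝓝[>] 0, (∀ ℓ ∈ S, ¬ OnL ℓ (y + η * w)) ∧
        (∀ ℓ ∈ S, ¬ OnL ℓ (y + (-η : ℝ) * w)) ∧
        (∀ e, L e ≠ L e0 → hit (y + η * w) w (L e) = hit y w (L e)) ∧ 
        (∀ e, L e ≠ L e0 → hit (y + (-η : ℝ) * w) w (L e) = hit y w (L e)) ∧ 0 < η := by
      have hneg : Tendsto (fun η : ℝ => -η) (𝓝[>] 0) (𝓝[≠] 0) := by
        apply tendsto_nhdsWithin_of_tendsto_nhds_of_eventually_within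
        · have := (continuous_neg (G := ℝ)).tendsto 0
          rw [neg_zero] at this
          exact this.mono_left nhdsWithin_le_nhds
        · filter_upwards [self_mem_nhdsWithin] with η hη
          have hη : 0 < η := hη
          simp [hη.ne']
      have hle : 𝓝[>] (0:ℝ) ≤ 𝓝[≠] 0 := nhdsWithin_mono _ fun x hx => ne_of_gt hx
      filter_upwards [ev1.filter_mono hle, hneg.eventually ev1, ev2.filter_mono nhdsWithin_le_nhds,
        (hneg.mono_right nhdsWithin_le_nhds).eventually ev2, self_mem_nhdsWithin]
        with η h1 h2 h3 h4 h5
      exact ⟨h1, h2, h3, h4, h5⟩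
    obtain ⟨η, a1, a2, a3, a4, a5⟩ := ev3.exists
    have b1 := h (y + η * w) w a1 (by simpa only [hcr'] using hcr)
    have b2 := h (y + (-η : ℝ) * w) w a2 (by simpa only [hcr'] using hcr)
    have b3 := sub_eq_zero.2 (b1.trans b2.symm)
    rw [← Finset.sum_sub_distrib] at b3
    refine Eq.trans ?_ (neg_eq_zero.2 b3)
    rw [← Finset.sum_neg_distrib]
    apply Finset.sum_congr rfl
    intro e _
    simp only [hside]
    by_cases hne : L e = L e0
    · have k1 := hit_on hu0 hℓ hy η
      have k2 := hit_on hu0 hℓ hy (-η)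
      rw [← hne] at k1 k2
      simp only [hL] at k1 k2
      rw [k1, k2, if_pos hne, if_neg a5.not_gt, if_pos (by linarith)]
      ring
    · rw [if_neg hne]
      have k1 := a3 e hne
      have k2 := a4 e hne
      simp only [hL] at k1 k2
      rw [k1, k2]; ring
  have hD : ∀ e0 P, D (L e0) P = 0 := by
    intro e0 P
    by_cases hP : OnL (L e0) P
    · set u := q e0 - p e0 with hu
      have hu0 : u ≠ 0 := sub_ne_zero.2 (hpq e0).symm
      have hℓ : (L e0).1 = dirn u := rfl
      have ev : ∀ᶠ τ : ℝ in 𝓝[≠] 0, (∀ ℓ ∈ S, ℓ ≠ L e0 → ¬ OnL ℓ (P + τ * u)) ∧ 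
          (∀ e, L e ≠ L e0 → ¬ OnL (L e) (P + τ * u)) ∧
          (∀ e, cr (Complex.I * u) (p e - (P + τ * u)) ≠ 0 ∧
            cr (Complex.I * u) (q e - (P + τ * u)) ≠ 0) := by
        refine Filter.Eventually.and ?_ (Filter.Eventually.and ?_ ?_)
        · rw [Filter.eventually_all_finset]
          intro ℓ _
          by_cases hne : ℓ = L e0
          · exact Eventually.of_forall fun _ h => absurd hne h
          · filter_upwards [eventually_not_onL hu0 hℓ hP hne] with τ h1 _ using h1
        · rw [Filter.eventually_all]
          intro e
          by_cases hne : L e = L e0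
          · exact Eventually.of_forall fun _ h => absurd hne h
          · filter_upwards [eventually_not_onL hu0 hℓ hP hne] with τ h1 _ using h1
        · rw [Filter.eventually_all]
          intro e
          exact (eventually_cr_ne hu0 _ _).and (eventually_cr_ne hu0 _ _)
      have hneg : Tendsto (fun η : ℝ => -η) (𝓝[>] 0) (𝓝[≠] 0) := by
        apply tendsto_nhdsWithin_of_tendsto_nhds_of_eventually_within
        · have := (continuous_neg (G := ℝ)).tendsto 0
          rw [neg_zero] at this
          exact this.mono_left nhdsWithin_le_nhds
        · filter_upwards [self_mem_nhdsWithin] with η hη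
          have hη : 0 < η := hη
          simp [hη.ne']
      have hle : 𝓝[>] (0:ℝ) ≤ 𝓝[≠] 0 := nhdsWithin_mono _ fun x hx => ne_of_gt hx
      have ev4 : ∀ᶠ τ : ℝ in 𝓝[>] 0, ∀ e, L e = L e0 → 
          (side (P + τ * u) (Complex.I * u) (p e) - side (P + (-τ : ℝ) * u) (Complex.I * u) (p e) =
            if p e = P then 1 else 0) ∧ 
          (side (P + τ * u) (Complex.I * u) (q e) - side (P + (-τ : ℝ) * u) (Complex.I * u) (q e) =
            if q e = P then 1 else 0) := by
        rw [Filter.eventually_all]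
        intro e
        by_cases hne : L e = L e0
        · filter_upwards [eventually_side hu0 hℓ hP (by rw [← hne]; exact onL_left (p e) (q e)),
            eventually_side hu0 hℓ hP (by rw [← hne]; exact onL_right (p e) (q e))] with τ h1 h2 _ using ⟨h1, h2⟩
        · exact Eventually.of_forall fun _ h => absurd h hne
      obtain ⟨τ, a1, a2, a3⟩ := ((ev.filter_mono hle).and ((hneg.eventually ev).and ev4)).exists
      have b1 := step e0 _ (onL_add hℓ hP τ) a1.1 a1.2.1 a1.2.2
      have b2 := step e0 _ (onL_add hℓ hP (-τ)) a2.1 a2.2.1 a2.2.2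
      have b3 := sub_eq_zero.2 (b1.trans b2.symm)
      rw [← Finset.sum_sub_distrib] at b3
      refine Eq.trans ?_ b3
      apply Finset.sum_congr rfl
      intro e _
      by_cases hne : L e = L e0
      · simp only [if_pos hne]
        rw [← (a3 e hne).1, ← (a3 e hne).2]; ring
      · simp [if_neg hne]
    · apply Finset.sum_eq_zero
      intro e _
      split_ifs with h1 h2 h3 h3
      · ring
      · exact absurd (h1 ▸ h2 ▸ onL_right (p e) (q e)) hP
      · exact absurd (h1 ▸ h3 ▸ onL_left (p e) (q e)) hP
      · ring
      · rfl
  set Ls := Finset.univ.image L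
  set Ps := Finset.univ.image p ∪ Finset.univ.image q
  have key : ∀ e, c e • edge G (p e) (q e) = ∑ ℓ ∈ Ls, ∑ P ∈ Ps, (if L e = ℓ then
    c e * ((if q e = P then 1 else 0) - (if p e = P then 1 else 0)) else 0) • G ℓ P := by
    intro e
    rw [Finset.sum_eq_single (L e)]
    · simp only [if_true, mul_sub, sub_smul, Finset.sum_sub_distrib, mul_ite, mul_one, mul_zero,
        ite_smul, zero_smul, Finset.sum_ite_eq]
      rw [if_pos (by simp [Ps]), if_pos (by simp [Ps]), edge, smul_sub]
    · intro b _ hb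
      apply Finset.sum_eq_zero
      intro P _
      rw [if_neg (Ne.symm hb), zero_smul]
    · intro h1; simp [Ls] at h1
  simp only [key]
  rw [Finset.sum_comm]
  apply Finset.sum_eq_zero
  intro ℓ hℓ
  rw [Finset.sum_comm]
  apply Finset.sum_eq_zero
  intro P _
  rw [← Finset.sum_smul]
  obtain ⟨e0, _, rfl⟩ := Finset.mem_image.1 hℓ
  have := hD e0 P
  simp only [D] at this
  rw [this, zero_smul]

/-! ### Triangles and the fan of the regular polygon -/

/-- The `j`-th vertex of the regular `N`-gon, as a complex number. -/
def vtx (N j : ℕ) : ℂ := Complex.exp ((2 * π * j / N : ℝ) * Complex.I)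

lemma vtx_re (N j : ℕ) : (vtx N j).re = cos (2 * π * j / N) := Complex.exp_ofReal_mul_I_re _
lemma vtx_im (N j : ℕ) : (vtx N j).im = sin (2 * π * j / N) := Complex.exp_ofReal_mul_I_im _

lemma onL_of_cr {p q x : ℂ} (hpq : p ≠ q) (h : cr (p - x) (q - x) = 0) : OnL (lineOf p q) x := by
  have h0 := conj_ne (sub_ne_zero.2 hpq.symm)
  have hd : dirn (q - p) * (starRingEnd ℂ) (q - p) = q - p := dirn_mul_conj _
  have e : (p - x) * (starRingEnd ℂ) (q - p) = (starRingEnd ℂ) (p - x) * (q - p) := by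
    apply Complex.ext
    · simp; ring
    · simp [cr] at h ⊢; linarith
  simp only [OnL, lineOf]
  apply mul_right_cancel₀ h0
  simp only [map_sub] at *
  linear_combination (-1 : ℂ) * e + (-(starRingEnd ℂ) x + (starRingEnd ℂ) p) * hd

lemma cr_sum (Q : Fin 3 → ℂ) (x : ℂ) :
    cr (Q 0 - x) (Q 1 - x) + cr (Q 1 - x) (Q 2 - x) + cr (Q 2 - x) (Q 0 - x) =
      cr (Q 1 - Q 0) (Q 2 - Q 0) := by
  simp [cr]; ring

lemma cr_convex (p q : ℂ) : Convex ℝ {x : ℂ | 0 ≤ cr (p - x) (q - x)} := by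
  intro x hx y hy a b ha hb hab
  simp only [Set.mem_ofPred_eq] at *
  have : cr (p - (a • x + b • y)) (q - (a • x + b • y)) =
      a * cr (p - x) (q - x) + b * cr (p - y) (q - y) := by
    have hb' : b = 1 - a := by linarith
    subst hb'
    simp [cr]; ring
  rw [this]; positivity

lemma cr_nonneg_of_mem {Q : Fin 3 → ℂ} (hQ : 0 < cr (Q 1 - Q 0) (Q 2 - Q 0)) {x : ℂ}
    (hx : x ∈ convexHull ℝ (Set.range Q)) (i : Fin 3) : 0 ≤ cr (Q i - x) (Q (i + 1) - x) := by
  have : convexHull ℝ (Set.range Q) ⊆ {x : ℂ | 0 ≤ cr (Q i - x) (Q (i + 1) - x)} := by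
    apply convexHull_min _ (cr_convex _ _)
    rintro _ ⟨j, rfl⟩
    simp only [Set.mem_ofPred_eq]
    fin_cases i <;> fin_cases j <;> simp [cr] at * <;> nlinarith
  exact this hx

lemma mem_of_cr_nonneg {Q : Fin 3 → ℂ} (hQ : 0 < cr (Q 1 - Q 0) (Q 2 - Q 0)) {x : ℂ}
    (hx : ∀ i, 0 ≤ cr (Q i - x) (Q (i + 1) - x)) : x ∈ convexHull ℝ (Set.range Q) := by
  have hs := cr_sum Q x
  have h0 := hx 0
  have h1 := hx 1
  have h2 := hx 2
  simp only [Fin.isValue, zero_add, show (1 + 1 : Fin 3) = 2 from rfl,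
    show (2 + 1 : Fin 3) = 0 from rfl] at h0 h1 h2
  set D := cr (Q 1 - Q 0) (Q 2 - Q 0) with hD
  have hm := (convex_convexHull ℝ (Set.range Q)).sum_mem (t := Finset.univ)
    (w := ![cr (Q 1 - x) (Q 2 - x) / D, cr (Q 2 - x) (Q 0 - x) / D, cr (Q 0 - x) (Q 1 - x) / D])
    (z := Q) ?_ ?_ ?_
  · convert hm using 1
    rw [Fin.sum_univ_three]
    simp only [Matrix.cons_val_zero, Matrix.cons_val_one, Matrix.cons_val_two, Matrix.head_cons,
      Matrix.tail_cons, Matrix.cons_val]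
    apply Complex.ext
    · simp
      field_simp
      rw [hD]; simp [cr]; ring
    · simp
      field_simp
      rw [hD]; simp [cr]; ring
  · intro i _
    fin_cases i <;> simp <;> positivity
  · rw [Fin.sum_univ_three]
    simp only [Matrix.cons_val_zero, Matrix.cons_val_one, Matrix.cons_val]
    field_simp
    linarith
  · intro i _
    exact subset_convexHull _ _ ⟨i, rfl⟩

lemma mem_interior_of_cr {Q : Fin 3 → ℂ} (hQ : 0 < cr (Q 1 - Q 0) (Q 2 - Q 0)) {x : ℂ}
    (hx : ∀ i, 0 < cr (Q i - x) (Q (i + 1) - x)) : x ∈ interior (convexHull ℝ (Set.range Q)) := by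
  rw [mem_interior]
  refine ⟨⋂ i, {x : ℂ | 0 < cr (Q i - x) (Q (i + 1) - x)}, ?_, ?_, ?_⟩
  · intro y hy
    simp only [Set.mem_iInter, Set.mem_ofPred_eq] at hy
    exact mem_of_cr_nonneg hQ fun i => (hy i).le
  · apply isOpen_iInter_of_finite
    intro i
    apply isOpen_lt continuous_const
    unfold cr
    fun_prop
  · simpa using hx

open Classical in
lemma sind_eq {Q : Fin 3 → ℂ} (hQ : 0 < cr (Q 1 - Q 0) (Q 2 - Q 0)) {x : ℂ}
    (hx : ∀ i, cr (Q i - x) (Q (i + 1) - x) ≠ 0) :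
    sind Q x = if x ∈ convexHull ℝ (Set.range Q) then 1 else 0 := by
  unfold sind
  by_cases h : ∀ i, 0 < cr (Q i - x) (Q (i + 1) - x)
  · rw [if_pos h, if_pos (mem_of_cr_nonneg hQ fun i => (h i).le)]
  · have h2 : x ∉ convexHull ℝ (Set.range Q) := fun hm =>
      h fun i => lt_of_le_of_ne (cr_nonneg_of_mem hQ hm i) (hx i).symm
    rw [if_neg h, if_neg h2, if_neg]
    intro h3
    have hs := cr_sum Q x
    have h0 := h3 0
    have h1 := h3 1
    have h2 := h3 2
    simp only [Fin.isValue, zero_add, show (1 + 1 : Fin 3) = 2 from rfl,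
      show (2 + 1 : Fin 3) = 0 from rfl] at h0 h1 h2
    linarith

/-- The `j`-th triangle of the fan of the regular `N`-gon around its centre. -/
def fan (N j : ℕ) : Fin 3 → ℂ := ![0, vtx N j, vtx N (j + 1)]

lemma sin_two_pi_div_pos {N : ℕ} (hN : 3 ≤ N) : 0 < sin (2 * π / N) := by
  have : (3:ℝ) ≤ N := by exact_mod_cast hN
  apply sin_pos_of_pos_of_lt_pi
  · positivity
  · rw [div_lt_iff₀ (by linarith)]; nlinarith [pi_pos]

lemma fan_pos {N : ℕ} (hN : 3 ≤ N) (j : ℕ) :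
    0 < cr (fan N j 1 - fan N j 0) (fan N j 2 - fan N j 0) := by
  have h := sin_two_pi_div_pos hN
  have : (2 * π * (j + 1 : ℕ) / N : ℝ) = 2 * π / N + 2 * π * j / N := by push_cast; ring
  simp only [fan, cr, Matrix.cons_val_zero, Matrix.cons_val_one, Matrix.cons_val, sub_zero,
    vtx_re, vtx_im, this, sin_add, cos_add]
  have := sin_sq_add_cos_sq (2 * π * j / N)
  nlinarith

lemma vtx_N {N : ℕ} (hN : 0 < N) : vtx N N = vtx N 0 := by
  have : (N : ℝ) ≠ 0 := by positivity
  unfold vtx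
  rw [mul_div_assoc, div_self this]
  simp

lemma vtx_mem {N : ℕ} {j : ℕ} (hj : j ≤ N) (hN : 0 < N) :
    vtx N j ∈ convexHull ℝ (Set.range fun j : Fin N => vtx N j) := by
  apply subset_convexHull
  rcases hj.lt_or_eq with h | h
  · exact ⟨⟨j, h⟩, rfl⟩
  · rw [h, vtx_N hN]; exact ⟨⟨0, hN⟩, rfl⟩

lemma vtx_pow (N j : ℕ) : vtx N j = Complex.exp (2 * π * Complex.I / N) ^ j := by
  rw [vtx, ← Complex.exp_nat_mul]; congr 1; push_cast; ring

lemma zero_mem_hull {N : ℕ} (hN : 3 ≤ N) :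
    (0 : ℂ) ∈ convexHull ℝ (Set.range fun j : Fin N => vtx N j) := by
  have hN0 : (N : ℝ) ≠ 0 := by positivity
  have h := (convex_convexHull ℝ (Set.range fun j : Fin N => vtx N j)).sum_mem
    (t := Finset.univ) (w := fun _ : Fin N => (1 / N : ℝ)) (z := fun j : Fin N => vtx N j)
    (fun _ _ => by positivity) (by simp [hN0]) (fun i _ => subset_convexHull _ _ ⟨i, rfl⟩)
  convert h using 1
  rw [← Finset.smul_sum, Fin.sum_univ_eq_sum_range (fun j => vtx N j)]
  simp only [vtx_pow]
  rw [(Complex.isPrimitiveRoot_exp N (by omega)).geom_sum_eq_zero (by omega), smul_zero]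

lemma fan_subset {N : ℕ} (hN : 3 ≤ N) {j : ℕ} (hj : j < N) :
    convexHull ℝ (Set.range (fan N j)) ⊆ convexHull ℝ (Set.range fun j : Fin N => vtx N j) := by
  apply convexHull_min _ (convex_convexHull _ _)
  rintro _ ⟨i, rfl⟩
  fin_cases i
  · exact zero_mem_hull hN
  · exact vtx_mem hj.le (by omega)
  · exact vtx_mem (j := j + 1) hj (by omega)

/-- The product formula for twice the area of a triangle inscribed in the unit circle. -/
lemma sin_prod (a b c : ℝ) : sin (b - a) + sin (a - c) + sin (c - b) =
    4 * sin ((b - a) / 2) * (sin ((c - b) / 2) * sin ((c - a) / 2)) := by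
  obtain ⟨A, rfl⟩ : ∃ A, a = 2 * A := ⟨a / 2, by ring⟩
  obtain ⟨B, rfl⟩ : ∃ B, b = 2 * B := ⟨b / 2, by ring⟩
  obtain ⟨C, rfl⟩ : ∃ C, c = 2 * C := ⟨c / 2, by ring⟩
  rw [show 2 * B - 2 * A = 2 * (B - A) by ring, show 2 * A - 2 * C = 2 * (A - C) by ring,
    show 2 * C - 2 * B = 2 * (C - B) by ring, show 2 * C - 2 * A = 2 * (C - A) by ring]
  simp only [mul_div_cancel_left₀ _ (two_ne_zero' ℝ), sin_two_mul, sin_sub, cos_sub]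
  have h1 := sin_sq_add_cos_sq A
  have h2 := sin_sq_add_cos_sq B
  have h3 := sin_sq_add_cos_sq C
  rw [← eq_sub_iff_add_eq'] at h1 h2 h3
  ring_nf
  simp only [h1, h2, h3]
  ring

lemma hull_inner {N : ℕ} (hN : 3 ≤ N) {j : ℕ} (hj : j < N) {x : ℂ}
    (hx : x ∈ convexHull ℝ (Set.range fun j : Fin N => vtx N j)) :
    0 ≤ cr (vtx N j - x) (vtx N (j + 1) - x) := by
  have hN0 : (0 : ℝ) < N := by positivity
  have : convexHull ℝ (Set.range fun j : Fin N => vtx N j) ⊆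
      {x : ℂ | 0 ≤ cr (vtx N j - x) (vtx N (j + 1) - x)} := by
    apply convexHull_min _ (cr_convex _ _)
    rintro _ ⟨k, rfl⟩
    simp only [Set.mem_ofPred_eq]
    have e : cr (vtx N j - vtx N k) (vtx N (j + 1) - vtx N k) =
        sin (2 * π * (j + 1 : ℕ) / N - 2 * π * j / N) + sin (2 * π * j / N - 2 * π * k / N)
          + sin (2 * π * k / N - 2 * π * (j + 1 : ℕ) / N) := by
      simp only [cr, Complex.sub_re, Complex.sub_im, vtx_re, vtx_im, sin_sub]; ring
    rw [e, sin_prod]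
    have e1 : (2 * π * (j + 1 : ℕ) / N - 2 * π * j / N) / 2 = π / N := by push_cast; ring
    have e2 : (2 * π * k / N - 2 * π * (j + 1 : ℕ) / N) / 2 = π * ((k - j - 1 : ℝ) / N) := by
      push_cast; ring
    have e3 : (2 * π * k / N - 2 * π * j / N) / 2 = π * ((k - j : ℝ) / N) := by ring
    rw [e1, e2, e3]
    have s1 : 0 ≤ sin (π / N) := by
      apply sin_nonneg_of_nonneg_of_le_pi (by positivity)
      apply div_le_self pi_pos.le; norm_cast; omega
    have hk : (k : ℝ) + 1 ≤ N := by exact_mod_cast k.2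
    have hj' : (j : ℝ) + 1 ≤ N := by exact_mod_cast hj
    have hj0 : (0 : ℝ) ≤ j := by positivity
    have hk0 : (0 : ℝ) ≤ k := by positivity
    have s2 : 0 ≤ sin (π * ((k - j - 1 : ℝ) / N)) * sin (π * ((k - j : ℝ) / N)) := by
      rcases Nat.lt_or_ge j k with h | h
      · have h : (j : ℝ) + 1 ≤ k := by exact_mod_cast h
        apply mul_nonneg <;> apply sin_nonneg_of_nonneg_of_le_pi
        · exact mul_nonneg pi_pos.le (div_nonneg (by linarith) hN0.le)
        · exact mul_le_of_le_one_right pi_pos.le ((div_le_one hN0).2 (by linarith))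
        · exact mul_nonneg pi_pos.le (div_nonneg (by linarith) hN0.le)
        · exact mul_le_of_le_one_right pi_pos.le ((div_le_one hN0).2 (by linarith))
      · have h : (k : ℝ) ≤ j := by exact_mod_cast h
        apply mul_nonneg_of_nonpos_of_nonpos <;> apply sin_nonpos_of_nonpos_of_neg_pi_le
        · exact mul_nonpos_of_nonneg_of_nonpos pi_pos.le
            (div_nonpos_of_nonpos_of_nonneg (by linarith) hN0.le)
        · have : -1 ≤ (k - j - 1 : ℝ) / N := by rw [le_div_iff₀ hN0]; linarith
          nlinarith [pi_pos]
        · exact mul_nonpos_of_nonneg_of_nonpos pi_pos.le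
            (div_nonpos_of_nonpos_of_nonneg (by linarith) hN0.le)
        · have : -1 ≤ (k - j : ℝ) / N := by rw [le_div_iff₀ hN0]; linarith
          nlinarith [pi_pos]
    positivity
  exact this hx

/-! ### Boundaries of tilings -/

/-- Only the integer part `j = ⌊s⌋` of `s` makes both sines positive. -/
lemma sector_unique {N : ℕ} (hN : 3 ≤ N) {s : ℝ} (h0 : 0 ≤ s) (h1 : s < N) {j : ℕ} (hj : j < N)
    (hs : 0 < sin (2 * π * (s - j) / N)) (hs' : 0 < sin (2 * π * (j + 1 - s) / N)) :
    (j : ℝ) < s ∧ s < j + 1 := by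
  have hN0 : (3 : ℝ) ≤ N := by exact_mod_cast hN
  have hNp : (0 : ℝ) < N := by linarith
  have hj' : (j : ℝ) + 1 ≤ N := by exact_mod_cast hj
  have hj0 : (0 : ℝ) ≤ j := by positivity
  have hp := pi_pos
  -- the sine is nonpositive outside the open half periods `(-N, -N/2)` and `(0, N/2)`
  have key : ∀ t : ℝ, 0 < sin (2 * π * t / N) → -N ≤ t → t ≤ N →
      (t < -N / 2 ∨ (0 < t ∧ t < N / 2)) := by
    intro t ht hl hu
    by_contra! hc
    rcases le_or_gt t 0 with h | h
    · have : 2 * π * t / N ≤ 0 := div_nonpos_of_nonpos_of_nonneg (by nlinarith) hNp.le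
      have h2 : -π ≤ 2 * π * t / N := by
        rw [le_div_iff₀ hNp]; nlinarith [hc.1]
      linarith [sin_nonpos_of_nonpos_of_neg_pi_le this h2]
    · have h3 := hc.2 h
      have h4 : sin (2 * π * t / N) = sin (2 * π * t / N - 2 * π) := (sin_sub_two_pi _).symm
      have : 2 * π * t / N - 2 * π ≤ 0 := by
        rw [sub_nonpos, div_le_iff₀ hNp]; nlinarith
      have h2 : -π ≤ 2 * π * t / N - 2 * π := by
        rw [le_sub_iff_add_le, le_div_iff₀ hNp]; nlinarith
      rw [h4] at ht
      linarith [sin_nonpos_of_nonpos_of_neg_pi_le this h2]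
  have a := key _ hs (by linarith) (by linarith)
  have b := key _ hs' (by linarith) (by linarith)
  rcases a with a | a <;> rcases b with b | b
  · linarith
  · linarith
  · linarith
  · constructor <;> linarith

open Classical in
/-- A generic point of the regular polygon lies in exactly one triangle of the fan. -/
lemma fan_sum {N : ℕ} (hN : 3 ≤ N) {x : ℂ}
    (hx : ∀ j < N, ∀ i, cr (fan N j i - x) (fan N j (i + 1) - x) ≠ 0) :
    ∑ j ∈ Finset.range N, sind (fan N j) x =
      if x ∈ convexHull ℝ (Set.range fun j : Fin N => vtx N j) then 1 else 0 := by
  have hN0 : (3 : ℝ) ≤ N := by exact_mod_cast hN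
  have hNp : (0 : ℝ) < N := by linarith
  have hp := pi_pos
  split_ifs with hm
  swap
  · apply Finset.sum_eq_zero
    intro j hj
    rw [Finset.mem_range] at hj
    rw [sind_eq (fan_pos hN j) (hx j hj), if_neg]
    exact fun h => hm (fan_subset hN hj h)
  obtain ⟨r, s, hs0, hs1, hr, hxr⟩ : ∃ r s : ℝ, 0 ≤ s ∧ s < N ∧ 0 < r ∧
      x = r * Complex.exp ((2 * π * s / N : ℝ) * Complex.I) := by
    have hx0 : x ≠ 0 := by
      intro h
      apply hx 0 (by omega) 0
      simp [fan, h, cr]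
    have hxn : 0 < ‖x‖ := norm_pos_iff.2 hx0
    rcases le_or_gt 0 x.arg with h | h
    · refine ⟨‖x‖, x.arg * N / (2 * π), by positivity, ?_, hxn, ?_⟩
      · rw [div_lt_iff₀ (by positivity)]
        nlinarith [Complex.arg_le_pi x]
      · conv_lhs => rw [← Complex.norm_mul_exp_arg_mul_I x]
        congr 3
        norm_cast; field_simp
    · refine ⟨‖x‖, (x.arg + 2 * π) * N / (2 * π), ?_, ?_, hxn, ?_⟩
      · have := Complex.neg_pi_lt_arg x
        have : 0 ≤ x.arg + 2 * π := by linarith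
        positivity
      · rw [div_lt_iff₀ (by positivity)]
        nlinarith [Complex.arg_le_pi x]
      · conv_lhs => rw [← Complex.norm_mul_exp_arg_mul_I x]
        congr 1
        have : (2 * π * ((x.arg + 2 * π) * N / (2 * π)) / N : ℝ) = x.arg + 2 * π := by field_simp
        rw [this]; push_cast
        rw [add_mul, Complex.exp_add, Complex.exp_two_pi_mul_I, mul_one]
  have hre : x.re = r * cos (2 * π * s / N) := by
    rw [hxr, Complex.re_ofReal_mul, Complex.exp_ofReal_mul_I_re]
  have him : x.im = r * sin (2 * π * s / N) := by
    rw [hxr, Complex.im_ofReal_mul, Complex.exp_ofReal_mul_I_im]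
  have e0 : ∀ j : ℕ, cr (fan N j 0 - x) (fan N j (0 + 1) - x) = r * sin (2 * π * (s - j) / N) := by
    intro j
    rw [show 2 * π * (s - j) / N = 2 * π * s / N - 2 * π * j / N by ring, sin_sub]
    simp [fan, cr, vtx_re, vtx_im, hre, him]; ring
  have e2 : ∀ j : ℕ, cr (fan N j 2 - x) (fan N j (2 + 1) - x) =
      r * sin (2 * π * (j + 1 - s) / N) := by
    intro j
    rw [show 2 * π * (j + 1 - s) / N = 2 * π * (j + 1 : ℕ) / N - 2 * π * s / N by push_cast; ring,
      sin_sub]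
    simp [fan, cr, vtx_re, vtx_im, hre, him, show (2 + 1 : Fin 3) = 0 from rfl]; ring
  have hpos : ∀ j : ℕ, sind (fan N j) x = 1 → j < N → ((j : ℝ) < s ∧ s < j + 1) := by
    intro j h hj
    have h' : ∀ i, 0 < cr (fan N j i - x) (fan N j (i + 1) - x) := by
      by_contra hc
      rw [sind, if_neg hc] at h
      split_ifs at h <;> omega
    have h0 := h' 0
    have h2 := h' 2
    rw [e0] at h0
    rw [e2] at h2
    exact sector_unique hN hs0 hs1 hj (pos_of_mul_pos_right h0 hr.le)
      (pos_of_mul_pos_right h2 hr.le)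
  have hfl : ⌊s⌋₊ < N := (Nat.floor_lt hs0).2 hs1
  have hfl1 := Nat.floor_le hs0
  have hfl2 := Nat.lt_floor_add_one s
  rw [Finset.sum_eq_single ⌊s⌋₊]
  · rw [sind, if_pos]
    intro i
    apply lt_of_le_of_ne _ (hx _ hfl i).symm
    fin_cases i
    · simp only [Fin.zero_eta]
      rw [e0]
      apply mul_nonneg hr.le
      apply sin_nonneg_of_nonneg_of_le_pi
      · have : 0 ≤ s - ⌊s⌋₊ := by linarith
        positivity
      · rw [div_le_iff₀ hNp]; nlinarith
    · exact hull_inner hN hfl hm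
    · simp only [Fin.reduceFinMk]
      rw [e2]
      apply mul_nonneg hr.le
      apply sin_nonneg_of_nonneg_of_le_pi
      · have : 0 ≤ ⌊s⌋₊ + 1 - s := by linarith
        positivity
      · rw [div_le_iff₀ hNp]; nlinarith
  · intro j hj hne
    rw [Finset.mem_range] at hj
    have := sind_eq (fan_pos hN j) (hx j hj)
    split_ifs at this with hmem
    · exfalso
      have h := hpos j this hj
      apply hne
      symm
      rw [Nat.floor_eq_iff hs0]
      exact ⟨h.1.le, h.2⟩
    · exact this
  · intro h
    exact absurd (Finset.mem_range.2 hfl) h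

lemma ne_of_cr_pos {Q : Fin 3 → ℂ} (hQ : 0 < cr (Q 1 - Q 0) (Q 2 - Q 0)) (i : Fin 3) :
    Q i ≠ Q (i + 1) := by
  intro h
  fin_cases i <;> simp [cr] at h hQ <;> rw [h] at hQ <;> linarith

/-- **Cancellation along the edges of a tiling.** The boundary sums of the tiles add up to that of
the polygon, for every function `G` of a line and of a point on it. -/
theorem tiling_chain {N : ℕ} (hN : 3 ≤ N) {m : ℕ} {P : Fin m → Fin 3 → ℂ}
    (hor : ∀ t, 0 < cr (P t 1 - P t 0) (P t 2 - P t 0))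
    (hdisj : Pairwise fun t s => Disjoint (interior (convexHull ℝ (Set.range (P t))))
      (interior (convexHull ℝ (Set.range (P s)))))
    (hun : ⋃ t, convexHull ℝ (Set.range (P t)) =
      convexHull ℝ (Set.range fun j : Fin N => vtx N j))
    {A : Type*} [AddCommGroup A] (G : ℂ × ℂ → ℂ → A) :
    ∑ t, bd G (P t) = ∑ j ∈ Finset.range N, edge G (vtx N j) (vtx N (j + 1)) := by
  classical
  let Q : Fin m ⊕ Fin N → Fin 3 → ℂ := Sum.elim P (fun j => fan N j)
  have hQ : ∀ e, 0 < cr (Q e 1 - Q e 0) (Q e 2 - Q e 0) := by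
    rintro (t | j)
    · exact hor t
    · exact fan_pos hN j
  have hne : ∀ e i, Q e i ≠ Q e (i + 1) := fun e i => ne_of_cr_pos (hQ e) i
  have hch := chain (E := (Fin m ⊕ Fin N) × Fin 3)
    (fun e => Sum.elim (fun _ => 1) (fun _ => -1) e.1) (fun e => Q e.1 e.2)
    (fun e => Q e.1 (e.2 + 1)) (fun e => hne e.1 e.2)
    (Finset.univ.image fun e : (Fin m ⊕ Fin N) × Fin 3 => lineOf (Q e.1 e.2) (Q e.1 (e.2 + 1)))
    ?_ G
  · rw [Fintype.sum_prod_type, Fintype.sum_sum_type] at hch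
    simp only [Sum.elim_inl, Sum.elim_inr, one_smul, neg_smul, Finset.sum_neg_distrib, Q] at hch
    rw [add_neg_eq_zero] at hch
    unfold bd
    rw [hch, Fin.sum_univ_eq_sum_range (fun j => ∑ i, edge G (fan N j i) (fan N j (i + 1)))]
    simp only [Fin.sum_univ_three, fan, Fin.isValue, zero_add, show (1 + 1 : Fin 3) = 2 from rfl,
      show (2 + 1 : Fin 3) = 0 from rfl, Matrix.cons_val_zero, Matrix.cons_val_one,
      Matrix.cons_val]
    simp only [edge_comm G 0 (vtx N (_ + 1))]
    have : ∀ j, edge G 0 (vtx N j) + edge G (vtx N j) (vtx N (j + 1)) + - edge G 0 (vtx N (j + 1))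
        = edge G (vtx N j) (vtx N (j + 1)) -
          (edge G 0 (vtx N (j + 1)) - edge G 0 (vtx N j)) := by
      intro j; abel
    simp only [this]
    rw [Finset.sum_sub_distrib, Finset.sum_range_sub (fun j => edge G 0 (vtx N j)),
      vtx_N (by omega), sub_self, sub_zero]
  · intro x w hxS hw
    have hx : ∀ e i, cr (Q e i - x) (Q e (i + 1) - x) ≠ 0 := by
      intro e i h
      exact hxS _ (Finset.mem_image.2 ⟨(e, i), Finset.mem_univ _, rfl⟩) (onL_of_cr (hne e i) h)
    have h1 : ∀ e : Fin m ⊕ Fin N, ∑ i, hit x w (lineOf (Q e i) (Q e (i + 1))) *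
        (side x w (Q e (i + 1)) - side x w (Q e i)) = sind (Q e) x := by
      intro e
      rw [← crossing_sum (Q e) x w (fun i => (hw (e, i)).1) (hx e)]
      apply Finset.sum_congr rfl
      intro i _
      exact hit_mul (dirn_mul_conj _).symm rfl (hw (e, i)).1 (hw (e, i)).2
    rw [Fintype.sum_prod_type]
    simp only [← Finset.mul_sum, h1]
    rw [Fintype.sum_sum_type]
    simp only [Sum.elim_inl, Sum.elim_inr, one_mul, neg_mul, Finset.sum_neg_distrib, Q]
    rw [add_neg_eq_zero, Fin.sum_univ_eq_sum_range (fun j => sind (fan N j) x),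
      fan_sum hN fun j hj => hx (Sum.inr ⟨j, hj⟩)]
    have h2 : ∀ t, sind (P t) x = if x ∈ convexHull ℝ (Set.range (P t)) then 1 else 0 :=
      fun t => sind_eq (hor t) (hx (Sum.inl t))
    split_ifs with hm
    · rw [← hun, Set.mem_iUnion] at hm
      obtain ⟨t, ht⟩ := hm
      have hxin : ∀ s, x ∈ convexHull ℝ (Set.range (P s)) →
          x ∈ interior (convexHull ℝ (Set.range (P s))) := fun s hs =>
        mem_interior_of_cr (hor s) fun i =>
          lt_of_le_of_ne (cr_nonneg_of_mem (hor s) hs i) (hx (Sum.inl s) i).symm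
      rw [Finset.sum_eq_single t]
      · rw [h2, if_pos ht]
      · intro s _ hs
        rw [h2, if_neg]
        intro hxs
        exact Set.disjoint_left.1 (hdisj hs) (hxin s hxs) (hxin t ht)
      · simp
    · apply Finset.sum_eq_zero
      intro t _
      rw [h2, if_neg]
      intro h
      exact hm (hun ▸ Set.mem_iUnion.2 ⟨t, h⟩)

/-! ### Tilings with rational angles -/

/-- The standard primitive `M`-th root of unity. -/
def zt (M : ℕ) : ℂ := Complex.exp (2 * π * Complex.I / M)

/-- A tiling of the regular `N`-gon by positively oriented triangles `P t`, recorded through the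
cancellation property of its boundary. The angle of `P t` at its `i`-th vertex is `n t i * π / M`,
which is expressed by the directions (modulo sign) of the two sides meeting there, and up to
order the three angles are the same for all tiles. -/
structure CTiling (N M m : ℕ) (P : Fin m → Fin 3 → ℂ) (n : Fin m → Fin 3 → ℕ) : Prop where
  hN : 6 < N
  hM : 0 < M
  even : Even M
  dvd : N ∣ M
  hor : ∀ t, 0 < cr (P t 1 - P t 0) (P t 2 - P t 0)
  chain : ∀ (A : Type) [AddCommGroup A] (G : ℂ × ℂ → ℂ → A),
    ∑ t, bd G (P t) = ∑ j ∈ Finset.range N, edge G (vtx N j) (vtx N (j + 1))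
  n_pos : ∀ t i, 0 < n t i
  n_sum : ∀ t, n t 0 + n t 1 + n t 2 = M
  geo : ∀ t i, dirn (P t (i + 2) - P t i) = zt M ^ n t i * dirn (P t (i + 1) - P t i)
  perm : ∃ n0 : Fin 3 → ℕ, ∀ t, ∃ τ : Equiv.Perm (Fin 3), ∀ i, n t i = n0 (τ i)

lemma zt_prim {M : ℕ} (hM : 0 < M) : IsPrimitiveRoot (zt M) M :=
  Complex.isPrimitiveRoot_exp M hM.ne'

lemma zt_conj (M : ℕ) : (starRingEnd ℂ) (zt M) = (zt M)⁻¹ := by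
  rw [zt, ← Complex.exp_conj, ← Complex.exp_neg]; congr 1; simp [neg_div, map_ofNat]

lemma zt_ne (M : ℕ) : zt M ≠ 0 := Complex.exp_ne_zero _

lemma vtx_zt {N M : ℕ} (hN : 0 < N) (hd : N ∣ M) (hM : 0 < M) (j : ℕ) :
    vtx N j = zt M ^ (M / N * j) := by
  obtain ⟨c, rfl⟩ := hd
  have hc : 0 < c := Nat.pos_of_mul_pos_left hM
  have h1 : (N : ℂ) ≠ 0 := by exact_mod_cast hN.ne'
  have h2 : (c : ℂ) ≠ 0 := by exact_mod_cast hc.ne'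
  rw [Nat.mul_div_cancel_left _ hN, vtx_pow, zt, pow_mul]
  congr 1
  rw [← Complex.exp_nat_mul]; congr 1; push_cast; field_simp

lemma vtx_conj (N j : ℕ) : (starRingEnd ℂ) (vtx N j) = (vtx N j)⁻¹ := by
  rw [vtx, ← Complex.exp_conj, ← Complex.exp_neg, map_mul, Complex.conj_ofReal,
    Complex.conj_I, mul_neg]

lemma vtx_ne (N j : ℕ) : vtx N j ≠ 0 := Complex.exp_ne_zero _

lemma vtx_succ_ne {N : ℕ} (hN : 3 ≤ N) (j : ℕ) : vtx N (j + 1) - vtx N j ≠ 0 := by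
  have := ne_of_cr_pos (fan_pos hN j) 1
  exact sub_ne_zero.2 (Ne.symm this)

/-- The reflection multiplier of the direction of the `j`-th side of the polygon. -/
lemma dirn_vtx {N : ℕ} (hN : 3 ≤ N) (j : ℕ) :
    dirn (vtx N (j + 1) - vtx N j) = - (vtx N j * vtx N (j + 1)) := by
  have h := conj_ne (vtx_succ_ne hN j)
  rw [dirn, div_eq_iff h, map_sub, vtx_conj, vtx_conj]
  have h1 := vtx_ne N j
  have h2 := vtx_ne N (j + 1)
  field_simp
  ring

namespace CTiling
variable {N M m : ℕ} {P : Fin m → Fin 3 → ℂ} {n : Fin m → Fin 3 → ℕ}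

lemma vtx_eq (T : CTiling N M m P n) (j : ℕ) : vtx N j = zt M ^ (M / N * j) :=
  vtx_zt (by have := T.hN; omega) T.dvd T.hM j

lemma dirn_vtx_pow (T : CTiling N M m P n) (j : ℕ) :
    dirn (vtx N (j + 1) - vtx N j) ^ M = 1 := by
  rw [dirn_vtx (by have := T.hN; omega), T.even.neg_pow, mul_pow, T.vtx_eq, T.vtx_eq, ← pow_mul,
    ← pow_mul, mul_comm _ M, mul_comm _ M, pow_mul _ M, pow_mul _ M, (zt_prim T.hM).pow_eq_one]
  simp

lemma ne (T : CTiling N M m P n) (t : Fin m) (i : Fin 3) : P t (i + 1) - P t i ≠ 0 :=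
  sub_ne_zero.2 (ne_of_cr_pos (T.hor t) i).symm

lemma ne2 (T : CTiling N M m P n) (t : Fin m) (i : Fin 3) : P t (i + 2) - P t i ≠ 0 := by
  have := T.ne t (i + 2)
  rw [add_assoc, show (2 + 1 : Fin 3) = 0 from rfl, add_zero] at this
  rw [← neg_sub]; exact neg_ne_zero.2 this

/-- The sides of one tile have the same direction modulo the `M`-th roots of unity. -/
lemma dirn_pow (T : CTiling N M m P n) (t : Fin m) (i : Fin 3) :
    dirn (P t (i + 1) - P t i) ^ M = dirn (P t 1 - P t 0) ^ M := by
  have h : ∀ i, dirn (P t (i + 2 + 1) - P t (i + 2)) ^ M = dirn (P t (i + 1) - P t i) ^ M := by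
    intro i
    have := T.geo t i
    rw [add_assoc, show (2 + 1 : Fin 3) = 0 from rfl, add_zero, ← neg_sub, dirn_neg, this, mul_pow,
      ← pow_mul, mul_comm _ M, pow_mul, (zt_prim T.hM).pow_eq_one, one_pow, one_mul]
  have h0 := h 0
  have h1 := h 1
  fin_cases i
  · rfl
  · exact h1.symm
  · exact h0

/-- The sides of a tile at a vertex, related by the algebraic form of the law of sines. -/
lemma geo' (T : CTiling N M m P n) (t : Fin m) (i : Fin 3) :
    (1 - zt M ^ (n t i + n t (i + 1))) * (P t (i + 2) - P t i) =
      zt M ^ n t i * (1 - zt M ^ n t (i + 1)) * (P t (i + 1) - P t i) := by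
  have h1 := T.geo t i
  have h2 := T.geo t (i + 1)
  rw [add_assoc, add_assoc, show (1 + 2 : Fin 3) = 0 from rfl, add_zero,
    show (1 + 1 : Fin 3) = 2 from rfl] at h2
  set u := P t (i + 1) - P t i with hu
  set z := P t (i + 2) - P t i with hz
  have hu0 : u ≠ 0 := T.ne t i
  have hz0 : z ≠ 0 := T.ne2 t i
  have hzu : P t (i + 2) - P t (i + 1) = z - u := by rw [hu, hz]; ring
  have hzu0 : z - u ≠ 0 := by
    rw [← hzu]
    have := T.ne t (i + 1)
    rwa [add_assoc, show (1 + 1 : Fin 3) = 2 from rfl] at this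
  rw [hzu, ← neg_sub, dirn_neg, ← hu] at h2
  have c1 := conj_ne hu0
  have c2 := conj_ne hz0
  have c3 := conj_ne hzu0
  have hP := pow_ne_zero (n t i) (zt_ne M)
  have hQ := pow_ne_zero (n t (i + 1)) (zt_ne M)
  simp only [dirn] at h1 h2
  rw [div_eq_iff c2] at h1
  rw [div_eq_iff c1, mul_assoc, div_mul_eq_mul_div, mul_div_assoc', eq_div_iff c3, map_sub] at h2
  rw [mul_div_assoc', div_mul_eq_mul_div, eq_div_iff c1] at h1
  rw [pow_add]
  have : (starRingEnd ℂ) u * ((1 - zt M ^ n t i * zt M ^ n t (i + 1)) * z -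
      zt M ^ n t i * (1 - zt M ^ n t (i + 1)) * u) = 0 := by
    linear_combination h1 + zt M ^ n t i * h2
  have := (mul_eq_zero.1 this).resolve_left c1
  linear_combination this
end CTiling

/-! ### Semilinear extensions of Galois conjugations -/

section
open IntermediateField Polynomial

/-- The cyclotomic subfield of `ℂ` generated by the `M`-th roots of unity. -/
abbrev cyc (M : ℕ) : IntermediateField ℚ ℂ := IntermediateField.adjoin ℚ {zt M}

lemma zt_mem (M : ℕ) : zt M ∈ cyc M := IntermediateField.mem_adjoin_simple_self ℚ _

/-- The generator of the cyclotomic field. -/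
def ztK (M : ℕ) : cyc M := ⟨zt M, zt_mem M⟩

lemma zt_int {M : ℕ} (hM : 0 < M) : IsIntegral ℚ (zt M) :=
  ((zt_prim hM).isIntegral hM).tower_top

lemma exists_sigma {M k : ℕ} (hM : 0 < M) (hk : k.Coprime M) :
    ∃ σ : cyc M →ₐ[ℚ] ℂ, σ (ztK M) = zt M ^ k := by
  have h1 : zt M ^ k ∈ (minpoly ℚ (zt M)).aroots ℂ := by
    have h := (zt_prim hM).minpoly_eq_pow_coprime hk
    have hz := minpoly.isIntegrallyClosed_eq_field_fractions' ℚ ((zt_prim hM).isIntegral hM)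
    rw [mem_aroots, hz]
    refine ⟨?_, ?_⟩
    · rw [← hz]; exact minpoly.ne_zero (zt_int hM)
    · rw [aeval_map_algebraMap, h]; exact minpoly.aeval _ _
  refine ⟨(algHomAdjoinIntegralEquiv ℚ (zt_int hM)).symm ⟨_, h1⟩, ?_⟩
  exact algHomAdjoinIntegralEquiv_symm_apply_gen ℚ (zt_int hM) ⟨_, h1⟩

lemma cyc_poly {M : ℕ} (hM : 0 < M) (r : cyc M) : ∃ p : ℚ[X], r = aeval (ztK M) p := by
  have h := r.2
  have h2 : (r : ℂ) ∈ (cyc M).toSubalgebra := h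
  rw [adjoin_simple_toSubalgebra_of_isAlgebraic (zt_int hM).isAlgebraic,
    Algebra.adjoin_singleton_eq_range_aeval] at h2
  obtain ⟨p, hp⟩ := h2
  refine ⟨p, Subtype.ext ?_⟩
  rw [← hp]
  exact (aeval_algHom_apply (cyc M).val (ztK M) p)

lemma conj_aeval (z : ℂ) (p : ℚ[X]) :
    (starRingEnd ℂ) (aeval z p) = aeval ((starRingEnd ℂ) z) p := by
  rw [aeval_def, aeval_def, hom_eval₂]
  congr 1
  exact Subsingleton.elim _ _

/-- Complex conjugation on the cyclotomic field. -/
lemma exists_conj {M : ℕ} (hM : 0 < M) (r : cyc M) :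
    ∃ s : cyc M, (s : ℂ) = (starRingEnd ℂ) r ∧ 
      ∀ (k : ℕ) (σ : cyc M →ₐ[ℚ] ℂ), σ (ztK M) = zt M ^ k → σ s = (starRingEnd ℂ) (σ r) := by
  obtain ⟨p, rfl⟩ := cyc_poly hM r
  refine ⟨aeval (ztK M)⁻¹ p, ?_, ?_⟩
  · have h1 := (aeval_algHom_apply (cyc M).val (ztK M)⁻¹ p)
    have h2 := (aeval_algHom_apply (cyc M).val (ztK M) p)
    change _ = ((aeval (ztK M)⁻¹ p : cyc M) : ℂ) at h1
    change _ = ((aeval (ztK M) p : cyc M) : ℂ) at h2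
    rw [← h1, ← h2, conj_aeval]
    congr 2
    change ((ztK M)⁻¹ : ℂ) = _
    exact (zt_conj M).symm
  · intro k σ hσ
    rw [← aeval_algHom_apply σ, ← aeval_algHom_apply σ, conj_aeval, map_inv₀, hσ, map_pow,
      zt_conj, inv_pow]

/-- The Galois conjugation `ζ ↦ ζ ^ k` of the cyclotomic field extends to an additive map of the
whole plane which is semilinear over that field and commutes with complex conjugation. -/
lemma exists_phi {M k : ℕ} (hM : 0 < M) (hk : k.Coprime M) :
    ∃ Φ : ℂ →+ ℂ, (∀ z, Φ (zt M * z) = zt M ^ k * Φ z) ∧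
      (∀ z, Φ ((starRingEnd ℂ) z) = (starRingEnd ℂ) (Φ z)) ∧ Φ 1 = 1 ∧
      (∀ v ∈ cyc M, v ≠ 0 → Φ v ≠ 0) ∧ (k = 1 → ∀ z, Φ z ∈ cyc M) := by
  obtain ⟨σ, hσ⟩ := exists_sigma hM hk
  choose cj hcj1 hcj2 using exists_conj hM
  obtain ⟨pr, hπ⟩ := LinearMap.exists_leftInverse_of_injective (Algebra.linearMap (cyc M) ℂ)
    (LinearMap.ker_eq_bot.2 (algebraMap (cyc M) ℂ).injective)
  have hπ' : ∀ r : cyc M, pr (r : ℂ) = r := fun r => LinearMap.congr_fun hπ r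
  have hπζ : ∀ z, pr (zt M * z) = ztK M * pr z := by
    intro z
    have := pr.map_smul (ztK M) z
    exact this
  have hπζ' : ∀ z, pr ((zt M)⁻¹ * z) = (ztK M)⁻¹ * pr z := by
    intro z
    have := pr.map_smul (ztK M)⁻¹ z
    exact this
  refine ⟨AddMonoidHom.mk' (fun z => (σ (pr z) + (starRingEnd ℂ) (σ (pr ((starRingEnd ℂ) z)))) / 2)
    ?_, ?_, ?_, ?_, ?_, ?_⟩
  · intro a b; simp only [map_add]; ring
  · intro z
    simp only [AddMonoidHom.mk'_apply, hπζ, map_mul, zt_conj, hπζ', map_inv₀, hσ, map_pow, inv_pow,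
      inv_inv]
    ring
  · intro z
    simp only [AddMonoidHom.mk'_apply, map_div₀, map_add, Complex.conj_conj, map_ofNat]
    ring
  · simp only [AddMonoidHom.mk'_apply, map_one]
    have : pr 1 = 1 := by simpa using hπ' 1
    rw [this]; simp
  · intro v hv hv0
    have h1 := hcj1 ⟨v, hv⟩
    have h2 := hcj2 ⟨v, hv⟩ k σ hσ
    simp only [AddMonoidHom.mk'_apply]
    have h3 := hπ' ⟨v, hv⟩
    simp only at h1 h3
    rw [← h1, hπ', h3, h2, Complex.conj_conj, ← two_mul, mul_div_cancel_left₀ _ two_ne_zero]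
    rw [Ne, map_eq_zero]
    intro h; exact hv0 (congrArg Subtype.val h)
  · rintro rfl z
    have hs : ∀ r, σ r = r := by
      intro r
      obtain ⟨p, rfl⟩ := cyc_poly hM r
      rw [← aeval_algHom_apply σ, hσ, pow_one]
      exact (aeval_algHom_apply (cyc M).val (ztK M) p)
    simp only [AddMonoidHom.mk'_apply, hs]
    rw [← hcj1]
    exact (cyc M).div_mem ((cyc M).add_mem (pr z).2 (cj _).2)
      (by simp)

end

/-! ### The sides of the tiles lie in the cyclotomic field -/

/-- `Φ` is additive, commutes with conjugation, is semilinear for `ζ ↦ ζ ^ k` and fixes `1`. -/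
structure Semi (M k : ℕ) (Φ : ℂ →+ ℂ) : Prop where
  zeta : ∀ z, Φ (zt M * z) = zt M ^ k * Φ z
  conj : ∀ z, Φ ((starRingEnd ℂ) z) = (starRingEnd ℂ) (Φ z)
  one : Φ 1 = 1

namespace Semi
variable {M k : ℕ} {Φ : ℂ →+ ℂ}

lemma pow (h : Semi M k Φ) (l : ℕ) (z : ℂ) : Φ (zt M ^ l * z) = zt M ^ (k * l) * Φ z := by
  induction l with
  | zero => simp
  | succ l ih => rw [pow_succ', mul_assoc, h.zeta, ih, mul_add, pow_add]; ring

lemma root (h : Semi M k Φ) (hM : 0 < M) {δ : ℂ} (hδ : δ ^ M = 1) (z : ℂ) :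
    Φ (δ * z) = δ ^ k * Φ z := by
  have : NeZero M := ⟨hM.ne'⟩
  obtain ⟨l, _, rfl⟩ := (zt_prim hM).eq_pow_of_pow_eq_one hδ
  rw [h.pow, ← pow_mul, mul_comm l]

lemma vtx (h : Semi M k Φ) {N : ℕ} (hN : 0 < N) (hd : N ∣ M) (hM : 0 < M) (j : ℕ) :
    Φ (vtx N j) = vtx N (k * j) := by
  rw [vtx_zt hN hd hM, vtx_zt hN hd hM, ← mul_one (zt M ^ _), h.pow, h.one, mul_one]
  congr 1; ring

lemma sub_eq (h : Semi M k Φ) (hM : 0 < M) {p q : ℂ} (hδ : dirn (q - p) ^ M = 1) :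
    Φ q - Φ p = dirn (q - p) ^ k * (starRingEnd ℂ) (Φ q - Φ p) := by
  rw [← map_sub Φ, ← h.conj, ← h.root hM hδ, dirn_mul_conj]

end Semi

/-- The function on lines with direction in the group of `M`-th roots of unity whose boundary sums
are the signed areas of the images under `Φ`. -/
def areaG (M : ℕ) (Φ : ℂ → ℂ) (ℓ : ℂ × ℂ) (q : ℂ) : ℝ :=
  open Classical in if ℓ.1 ^ M = 1 then (ℓ.1 * (starRingEnd ℂ) (Φ q) ^ 2).im else 0

lemma area_edge_aux {δ p q : ℂ} (h : q - p = δ * (starRingEnd ℂ) (q - p)) :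
    (δ * (starRingEnd ℂ) q ^ 2).im - (δ * (starRingEnd ℂ) p ^ 2).im = 2 * cr p q := by
  have : δ * (starRingEnd ℂ) q ^ 2 - δ * (starRingEnd ℂ) p ^ 2 =
      (q - p) * ((starRingEnd ℂ) q + (starRingEnd ℂ) p) := by
    rw [map_sub] at h
    linear_combination (-((starRingEnd ℂ) q + (starRingEnd ℂ) p)) * h
  rw [← Complex.sub_im, this]
  simp [cr]; ring

lemma area_edge {M : ℕ} (hM : 0 < M) {Φ : ℂ →+ ℂ} (h : Semi M 1 Φ) {p q : ℂ}
    (hδ : dirn (q - p) ^ M = 1) :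
    edge (areaG M Φ) p q = 2 * cr (Φ p) (Φ q) := by
  have := h.sub_eq hM hδ
  rw [pow_one] at this
  rw [← area_edge_aux this]
  simp [edge, areaG, lineOf, hδ]

namespace CTiling
variable {N M m : ℕ} {P : Fin m → Fin 3 → ℂ} {n : Fin m → Fin 3 → ℕ}

open Classical in
lemma area (T : CTiling N M m P n) {Φ : ℂ →+ ℂ} (h : Semi M 1 Φ) :
    ∑ t, (if dirn (P t 1 - P t 0) ^ M = 1 then
        cr (Φ (P t 1) - Φ (P t 0)) (Φ (P t 2) - Φ (P t 0)) else 0) =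
      ∑ j ∈ Finset.range N, cr (vtx N j) (vtx N (j + 1)) := by
  have hN := T.hN
  have hc := T.chain ℝ (areaG M Φ)
  have e1 : ∀ t, bd (areaG M Φ) (P t) = 2 * (if dirn (P t 1 - P t 0) ^ M = 1 then
        cr (Φ (P t 1) - Φ (P t 0)) (Φ (P t 2) - Φ (P t 0)) else 0) := by
    intro t
    split_ifs with hd
    · simp only [bd]
      rw [Finset.sum_congr rfl fun i _ => area_edge T.hM h ((T.dirn_pow t i).trans hd)]
      simp [Fin.sum_univ_three, cr, show (2 + 1 : Fin 3) = 0 from rfl,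
        show (1 + 1 : Fin 3) = 2 from rfl]
      ring
    · simp only [bd, mul_zero]
      apply Finset.sum_eq_zero
      intro i _
      have := T.dirn_pow t i
      simp [edge, areaG, lineOf, this, hd]
  have e2 : ∀ j, edge (areaG M Φ) (vtx N j) (vtx N (j + 1)) =
      2 * cr (vtx N j) (vtx N (j + 1)) := by
    intro j
    rw [area_edge T.hM h (T.dirn_vtx_pow j), h.vtx (by omega) T.dvd T.hM,
      h.vtx (by omega) T.dvd T.hM, one_mul, one_mul]
  simp only [e1, e2, ← Finset.mul_sum] at hc
  linarith

lemma area' (T : CTiling N M m P n) :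
    ∑ t, cr (P t 1 - P t 0) (P t 2 - P t 0) =
      ∑ j ∈ Finset.range N, cr (vtx N j) (vtx N (j + 1)) := by
  have hN := T.hN
  have hc := T.chain ℝ (fun ℓ q => (ℓ.1 * (starRingEnd ℂ) q ^ 2).im)
  have e0 : ∀ p q, edge (fun (ℓ : ℂ × ℂ) q => (ℓ.1 * (starRingEnd ℂ) q ^ 2).im) p q =
      2 * cr p q := fun p q => area_edge_aux (dirn_mul_conj _).symm
  have e1 : ∀ t, bd (fun (ℓ : ℂ × ℂ) q => (ℓ.1 * (starRingEnd ℂ) q ^ 2).im) (P t) =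
      2 * cr (P t 1 - P t 0) (P t 2 - P t 0) := by
    intro t
    simp only [bd, e0]
    simp [Fin.sum_univ_three, cr, show (2 + 1 : Fin 3) = 0 from rfl,
        show (1 + 1 : Fin 3) = 2 from rfl]
    ring
  simp only [e1, e0, ← Finset.mul_sum] at hc
  linarith

lemma semi_id (M : ℕ) : Semi M 1 (AddMonoidHom.id ℂ) := ⟨by simp, by simp, by simp⟩

/-- The directions of all sides of all tiles are `M`-th roots of unity. Tiles for which this fails
would not contribute to the boundary sum of `areaG`, which is the area of the whole polygon. -/
lemma dirn_good (T : CTiling N M m P n) (t : Fin m) (i : Fin 3) :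
    dirn (P t (i + 1) - P t i) ^ M = 1 := by
  classical
  rw [T.dirn_pow]
  have h := (T.area (semi_id M)).trans T.area'.symm
  simp only [AddMonoidHom.id_apply] at h
  by_contra hd
  apply h.not_lt
  apply Finset.sum_lt_sum
  · intro s _
    split_ifs
    · rfl
    · exact (T.hor s).le
  · exact ⟨t, Finset.mem_univ _, by rw [if_neg hd]; exact T.hor t⟩

lemma one_sub_ne (T : CTiling N M m P n) (t : Fin m) (i : Fin 3) {k : ℕ} (hk : k.Coprime M) :
    1 - zt M ^ (k * (n t i + n t (i + 1))) ≠ 0 := by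
  intro h
  have h := (sub_eq_zero.1 h).symm
  rw [(zt_prim T.hM).pow_eq_one_iff_dvd] at h
  have h := Nat.Coprime.dvd_of_dvd_mul_left hk.symm h
  have h0 := T.n_pos t 0
  have h1 := T.n_pos t 1
  have h2 := T.n_pos t 2
  have hs := T.n_sum t
  have := Nat.le_of_dvd (by have := T.n_pos t i; omega) h
  fin_cases i <;> simp [show (1 + 1 : Fin 3) = 2 from rfl, show (2 + 1 : Fin 3) = 0 from rfl] at this
    <;> omega

/-- The law of sines for the images of the tiles. -/
lemma geo_phi (T : CTiling N M m P n) {k : ℕ} (hk : k.Coprime M) {Φ : ℂ →+ ℂ} (h : Semi M k Φ)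
    (t : Fin m) (i : Fin 3) :
    Φ (P t (i + 2)) - Φ (P t i) = zt M ^ (k * n t i) * (1 - zt M ^ (k * n t (i + 1))) /
      (1 - zt M ^ (k * (n t i + n t (i + 1)))) * (Φ (P t (i + 1)) - Φ (P t i)) := by
  have := T.geo' t i
  rw [div_mul_eq_mul_div, eq_div_iff (T.one_sub_ne t i hk)]
  have e : (1 - zt M ^ (n t i + n t (i + 1))) * (P t (i + 2) - P t i) =
      (P t (i + 2) - P t i) - zt M ^ (n t i + n t (i + 1)) * (P t (i + 2) - P t i) := by ring
  have e' : zt M ^ n t i * (1 - zt M ^ n t (i + 1)) * (P t (i + 1) - P t i) =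
      zt M ^ n t i * (P t (i + 1) - P t i) -
        zt M ^ (n t i + n t (i + 1)) * (P t (i + 1) - P t i) := by rw [pow_add]; ring
  rw [e, e'] at this
  have := congrArg Φ this
  simp only [map_sub, h.pow] at this
  simp only [mul_add, pow_add] at this
  rw [mul_add, pow_add]
  linear_combination this

/-- The total area is a positive definite quadratic form in the sides `P t 1 - P t 0`, and it is the
same for the images of the tiling under a conjugation-equivariant linear projection `Ψ` onto the
cyclotomic field and under `(1 + Ψ) / 2`. By the parallelogram law `Ψ` fixes all sides, which
therefore lie in that field. -/
lemma side_mem (T : CTiling N M m P n) (t : Fin m) : P t 1 - P t 0 ∈ cyc M := by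
  obtain ⟨Ψ, h1, h2, h3, h4, h5⟩ := exists_phi T.hM (Nat.coprime_one_left M)
  have hΨ : Semi M 1 Ψ := ⟨h1, h2, h3⟩
  let half : ℂ →+ ℂ := AddMonoidHom.mulLeft (1 / 2)
  let Θ : ℂ →+ ℂ := half.comp (AddMonoidHom.id ℂ + Ψ)
  have hΘ' : ∀ z, Θ z = (1 / 2) * (z + Ψ z) := fun z => rfl
  have hΘ : Semi M 1 Θ := by
    refine ⟨?_, ?_, ?_⟩
    · intro z; rw [hΘ', hΘ', h1]; ring
    · intro z; rw [hΘ', hΘ', h2]; simp [map_ofNat]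
    · rw [hΘ', h3]; norm_num
  let ρ : Fin m → ℂ := fun t => zt M ^ (n t 0) * (1 - zt M ^ (n t 1)) /
      (1 - zt M ^ (n t 0 + n t 1))
  have hρ : ∀ (Φ : ℂ →+ ℂ), Semi M 1 Φ → ∀ t, Φ (P t 2) - Φ (P t 0) =
      ρ t * (Φ (P t 1) - Φ (P t 0)) := by
    intro Φ h t
    have := T.geo_phi (Nat.coprime_one_left M) h t 0
    simpa using this
  have hcr : ∀ r u : ℂ, cr u (r * u) = r.im * Complex.normSq u := by
    intro r u; simp [cr, Complex.normSq_apply]; ring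
  have hsum : ∀ (Φ : ℂ →+ ℂ), Semi M 1 Φ → ∑ t, (ρ t).im * Complex.normSq (Φ (P t 1 - P t 0)) =
      ∑ j ∈ Finset.range N, cr (vtx N j) (vtx N (j + 1)) := by
    intro Φ h
    rw [← T.area h]
    apply Finset.sum_congr rfl
    intro t _
    have hd := T.dirn_good t 0
    simp only [zero_add] at hd
    rw [if_pos hd, hρ Φ h, hcr, map_sub]
  have hpos : ∀ t, 0 < (ρ t).im := by
    intro t
    have h0 := T.hor t
    have := hρ _ (semi_id M) t
    simp only [AddMonoidHom.id_apply] at this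
    rw [this, hcr] at h0
    exact pos_of_mul_pos_left h0 (Complex.normSq_nonneg _)
  have s1 := hsum _ (semi_id M)
  have s2 := hsum _ hΨ
  have s3 := hsum _ hΘ
  have hz : ∑ t, (ρ t).im * Complex.normSq ((P t 1 - P t 0) - Ψ (P t 1 - P t 0)) = 0 := by
    have : ∀ t, (ρ t).im * Complex.normSq ((P t 1 - P t 0) - Ψ (P t 1 - P t 0)) =
        2 * ((ρ t).im * Complex.normSq (AddMonoidHom.id ℂ (P t 1 - P t 0))) +
        2 * ((ρ t).im * Complex.normSq (Ψ (P t 1 - P t 0))) -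
        4 * ((ρ t).im * Complex.normSq (Θ (P t 1 - P t 0))) := by
      intro t
      rw [hΘ']
      generalize P t 1 - P t 0 = v
      generalize Ψ v = w
      simp [Complex.normSq_apply]; ring
    simp only [this, Finset.sum_sub_distrib, Finset.sum_add_distrib, ← Finset.mul_sum, s1, s2, s3]
    ring
  rw [Finset.sum_eq_zero_iff_of_nonneg
    (fun t _ => mul_nonneg (hpos t).le (Complex.normSq_nonneg _))] at hz
  have := (mul_eq_zero.1 (hz t (Finset.mem_univ t))).resolve_left (hpos t).ne'
  rw [Complex.normSq_eq_zero, sub_eq_zero] at this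
  rw [this]
  exact h5 rfl _

/-- The Galois conjugation `ζ ↦ ζ ^ k` extends to a semilinear map which does not collapse the
sides of the tiles. -/
theorem exists_semi (T : CTiling N M m P n) {k : ℕ} (hk : k.Coprime M) :
    ∃ Φ : ℂ →+ ℂ, Semi M k Φ ∧ ∀ t i, Φ (P t (i + 1)) - Φ (P t i) ≠ 0 := by
  obtain ⟨Φ, h1, h2, h3, h4, -⟩ := exists_phi T.hM hk
  have h : Semi M k Φ := ⟨h1, h2, h3⟩
  refine ⟨Φ, h, ?_⟩
  intro t
  have a0 : Φ (P t 1) - Φ (P t 0) ≠ 0 := by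
    rw [← map_sub]
    exact h4 _ (T.side_mem t) (by simpa using T.ne t 0)
  have step : ∀ i, Φ (P t (i + 1)) - Φ (P t i) ≠ 0 →
      Φ (P t (i + 2 + 1)) - Φ (P t (i + 2)) ≠ 0 := by
    intro i hi
    rw [add_assoc, show (2 + 1 : Fin 3) = 0 from rfl, add_zero, ← neg_sub, neg_ne_zero,
      T.geo_phi hk h t i]
    refine mul_ne_zero (div_ne_zero (mul_ne_zero (pow_ne_zero _ (zt_ne M)) ?_)
      (T.one_sub_ne t i hk)) hi
    intro h
    have h := (sub_eq_zero.1 h).symm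
    rw [(zt_prim T.hM).pow_eq_one_iff_dvd] at h
    have h := Nat.Coprime.dvd_of_dvd_mul_left hk.symm h
    have h0 := T.n_pos t 0
    have h1 := T.n_pos t 1
    have h2 := T.n_pos t 2
    have hs := T.n_sum t
    have := Nat.le_of_dvd (T.n_pos t _) h
    generalize i + 1 = l at this
    fin_cases l <;> simp at this <;> omega
  have a2 := step 0 a0
  have a1 := step 2 a2
  intro i
  fin_cases i
  · exact a0
  · exact a1
  · exact a2
end CTiling

/-! ### The conjugate of a tiling -/

lemma sum_range_shift {A : Type*} [AddCommMonoid A] {N : ℕ} {g : ℕ → A} (hg : ∀ j, g (j + N) = g j)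
    (c : ℕ) : ∑ j ∈ Finset.range N, g (c + j) = ∑ j ∈ Finset.range N, g j := by
  induction c with
  | zero => simp
  | succ c ih =>
    rw [← ih]
    cases N with
    | zero => simp
    | succ N =>
      rw [Finset.sum_range_succ, Finset.sum_range_succ' (fun j => g (c + j))]
      congr 1
      · apply Finset.sum_congr rfl
        intro j _
        congr 1; ring
      · rw [add_right_comm, add_assoc, hg, add_zero]

lemma vtx_add {N : ℕ} (hN : 0 < N) (j : ℕ) : vtx N (j + N) = vtx N j := by
  rw [vtx_pow, vtx_pow, pow_add, (Complex.isPrimitiveRoot_exp N hN.ne').pow_eq_one, mul_one]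

lemma vtx_mul (N i j : ℕ) : vtx N (i + j) = vtx N i * vtx N j := by
  rw [vtx_pow, vtx_pow, vtx_pow, pow_add]

lemma vtx_eq_iff {N : ℕ} (hN : 0 < N) (i j : ℕ) : vtx N i = vtx N j ↔ i ≡ j [MOD N] := by
  have h := Complex.isPrimitiveRoot_exp N hN.ne'
  have hf : IsOfFinOrder (Complex.exp (2 * π * Complex.I / N)) :=
    isOfFinOrder_iff_pow_eq_one.2 ⟨N, hN, h.pow_eq_one⟩
  rw [vtx_pow, vtx_pow, hf.pow_eq_pow_iff_modEq, ← h.eq_orderOf]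

namespace CTiling
variable {N M m : ℕ} {P : Fin m → Fin 3 → ℂ} {n : Fin m → Fin 3 → ℕ}

open Classical in
/-- The crossing numbers of the image of the tiling add up to those of the star polygon with
vertices `ω ^ (k * j)`. -/
lemma crossing_phi (T : CTiling N M m P n) {k : ℕ} {Φ : ℂ →+ ℂ} (h : Semi M k Φ) (x w : ℂ)
    (hP : ∀ t i, cr w (Φ (P t i) - x) ≠ 0) (hV : ∀ j, cr w (vtx N (k * j) - x) ≠ 0) :
    ∑ t, ∑ i, crossing x w (Φ (P t i)) (Φ (P t (i + 1))) =
      ∑ j ∈ Finset.range N, crossing x w (vtx N (k * j)) (vtx N (k * (j + 1))) := by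
  have hN := T.hN
  have key : ∀ p q : ℂ, dirn (q - p) ^ M = 1 → cr w (Φ p - x) ≠ 0 → cr w (Φ q - x) ≠ 0 →
      edge (fun ℓ q => if ℓ.1 ^ M = 1 then hit x w (ℓ.1 ^ k, Φ ℓ.2) * side x w (Φ q) else 0) p q =
        crossing x w (Φ p) (Φ q) := by
    intro p q hδ hp hq
    rw [← hit_mul (h.sub_eq T.hM hδ) (c := Φ (p - dirn (q - p) * (starRingEnd ℂ) p)) ?_ hp hq]
    · have hδ' : (lineOf p q).1 ^ M = 1 := hδ
      simp only [edge]
      rw [if_pos hδ', if_pos hδ']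
      simp only [lineOf]
      ring
    · rw [map_sub, h.root T.hM hδ, h.conj]
  have hc := T.chain ℤ
    (fun ℓ q => if ℓ.1 ^ M = 1 then hit x w (ℓ.1 ^ k, Φ ℓ.2) * side x w (Φ q) else 0)
  simp only [bd] at hc
  have hv : ∀ j, Φ (vtx N j) = vtx N (k * j) := h.vtx (by omega) T.dvd T.hM
  rw [Finset.sum_congr rfl fun t _ => Finset.sum_congr rfl fun i _ =>
    key _ _ (T.dirn_good t i) (hP t i) (hP t (i + 1)),
    Finset.sum_congr rfl fun j _ => key _ _ (T.dirn_vtx_pow j) (by rw [hv]; exact hV j)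
      (by rw [hv]; exact hV (j + 1))] at hc
  simpa only [hv] using hc

open Classical in
/-- The sum of the angles at a vertex of the polygon, modulo `π`, in units of `π / M`. -/
lemma angle_sum_mod (T : CTiling N M m P n) {j : ℕ} (hj : j < N) :
    ∃ l : ℤ, ((∑ t, ∑ i, if P t i = vtx N (j + 1) then n t i else 0 : ℕ) : ℝ) / M =
      l - 2 / N := by
  have hN := T.hN
  have hM := T.hM
  have hMr : (M : ℝ) ≠ 0 := by positivity
  have hNr : (N : ℝ) ≠ 0 := by positivity
  set V := vtx N (j + 1) with hV
  have hc := T.chain Real.Angle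
    (fun ℓ q => if q = V then (ℓ.1.arg : Real.Angle) else 0)
  have hd0 : ∀ {u : ℂ}, u ≠ 0 → dirn u ≠ 0 := fun hu => div_ne_zero hu (conj_ne hu)
  have hζ : ∀ l : ℕ, ((zt M ^ l).arg : Real.Angle) = ((2 * π * l / M : ℝ) : Real.Angle) := by
    intro l
    have : zt M ^ l = Complex.exp ((2 * π * l / M : ℝ) * Complex.I) := by
      rw [zt, ← Complex.exp_nat_mul]; congr 1; push_cast; ring
    rw [this, Complex.arg_exp_mul_I]
    simp
  have e1 : ∀ t, bd (fun ℓ q => if q = V then (ℓ.1.arg : Real.Angle) else 0) (P t) =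
      ∑ i, if P t i = V then ((2 * π * n t i / M : ℝ) : Real.Angle) else 0 := by
    intro t
    have g : ∀ i, ((dirn (P t (i + 2) - P t i)).arg : Real.Angle) -
        (dirn (P t (i + 1) - P t i)).arg = ((2 * π * n t i / M : ℝ) : Real.Angle) := by
      intro i
      rw [T.geo t i, Complex.arg_mul_coe_angle (pow_ne_zero _ (zt_ne M)) (hd0 (T.ne t i)), hζ]
      abel
    have g0 := g 0
    have g1 := g 1
    have g2 := g 2
    simp only [zero_add, show (1 + 1 : Fin 3) = 2 from rfl, show (2 + 1 : Fin 3) = 0 from rfl,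
      show (1 + 2 : Fin 3) = 0 from rfl, show (2 + 2 : Fin 3) = 1 from rfl] at g0 g1 g2
    rw [← neg_sub (P t 0) (P t 2), dirn_neg] at g0
    rw [← neg_sub (P t 1) (P t 0), dirn_neg] at g1
    rw [← neg_sub (P t 2) (P t 1), dirn_neg] at g2
    simp only [bd, edge, Fin.sum_univ_three, zero_add, show (1 + 1 : Fin 3) = 2 from rfl,
      show (2 + 1 : Fin 3) = 0 from rfl, lineOf, ← g0, ← g1, ← g2]
    split_ifs <;> abel
  have hper : ∀ i, (if vtx N (i + N) = V then
      ((dirn (vtx N (i + N + 1) - vtx N (i + N))).arg : Real.Angle) else 0) =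
      if vtx N i = V then ((dirn (vtx N (i + 1) - vtx N i)).arg : Real.Angle) else 0 := by
    intro i
    rw [add_right_comm i N 1, vtx_add (by omega), vtx_add (by omega)]
  have e2 : ∑ i ∈ Finset.range N, edge (fun ℓ q => if q = V then (ℓ.1.arg : Real.Angle) else 0)
      (vtx N i) (vtx N (i + 1)) = ((-(2 * π * 2 / N) : ℝ) : Real.Angle) := by
    simp only [edge, lineOf, Finset.sum_sub_distrib]
    rw [← sum_range_shift (g := fun i => if vtx N i = V then
      ((dirn (vtx N (i + 1) - vtx N i)).arg : Real.Angle) else 0) hper 1, ← Finset.sum_sub_distrib]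
    rw [Finset.sum_eq_single j]
    · rw [if_pos rfl, if_pos (by rw [add_comm])]
      rw [dirn_vtx (by omega), dirn_vtx (by omega), add_comm 1 j, ← mul_neg, ← neg_mul,
        show j + 1 + 1 = j + 2 from rfl, vtx_mul N j 2]
      have hv := vtx_ne N
      rw [show -vtx N (j + 1) * (vtx N j * vtx N 2) = vtx N j * -vtx N (j + 1) * vtx N 2 by ring,
        Complex.arg_mul_coe_angle
          (mul_ne_zero (hv _) (neg_ne_zero.2 (hv _))) (hv _)]
      have h2 : ((vtx N 2).arg : Real.Angle) = ((2 * π * 2 / N : ℝ) : Real.Angle) := by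
        rw [vtx, Complex.arg_exp_mul_I]; simp
      rw [h2, Real.Angle.coe_neg]; abel
    · intro i hi hne
      have : vtx N (i + 1) ≠ V := by
        rw [hV, Ne, vtx_eq_iff (by omega)]
        intro h
        have := Nat.ModEq.add_right_cancel' 1 h
        rw [Finset.mem_range] at hi
        exact hne (Nat.ModEq.eq_of_lt_of_lt this hi hj)
      rw [add_comm 1 i, if_neg this, if_neg this, sub_zero]
    · intro h; exact absurd (Finset.mem_range.2 hj) h
  simp only [e1, e2] at hc
  have e3 : ∑ t, ∑ i, (if P t i = V then ((2 * π * n t i / M : ℝ) : Real.Angle) else 0) =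
      ((2 * π * (((∑ t, ∑ i, if P t i = V then n t i else 0 : ℕ) : ℝ) / M) : ℝ) :
        Real.Angle) := by
    have : ∀ t i, (if P t i = V then ((2 * π * n t i / M : ℝ) : Real.Angle) else 0) =
        Real.Angle.coeHom (2 * π * (((if P t i = V then n t i else 0 : ℕ) : ℝ) / M)) := by
      intro t i
      split_ifs
      · simp [mul_div_assoc]
      · simp
    simp only [this]
    simp only [← map_sum, ← Finset.mul_sum, ← Finset.sum_div]
    push_cast
    rfl
  rw [e3, Real.Angle.angle_eq_iff_two_pi_dvd_sub] at hc
  obtain ⟨l, hl⟩ := hc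
  refine ⟨l, ?_⟩
  have : 2 * π * ((((∑ t, ∑ i, if P t i = V then n t i else 0 : ℕ) : ℝ) / M) - (l - 2 / N)) = 0 := by
    linear_combination hl
  have := (mul_eq_zero.1 this).resolve_left (by positivity)
  linarith

/-- The image of a corner under the conjugation `ζ ↦ ζ ^ k` is a corner whose angle is `k` times
the original one modulo `π`, and all image tiles have the same orientation, given by the sign
of `S`. -/
lemma img (T : CTiling N M m P n) {k : ℕ} (hk : k.Coprime M) :
    ∃ S : ℝ, S ≠ 0 ∧ ∀ {Φ : ℂ →+ ℂ}, Semi M k Φ → ∀ t i, ∃ r : ℝ,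
      Φ (P t (i + 2)) - Φ (P t i) = r * Complex.exp ((π * (k * n t i / M) : ℝ) * Complex.I) *
        (Φ (P t (i + 1)) - Φ (P t i)) ∧ 0 < (r * sin (π * (k * n t i / M))) * S := by
  have hM := T.hM
  have hMr : (M : ℝ) ≠ 0 := by positivity
  have hs : ∀ t i, sin (π * (k * n t i / M)) ≠ 0 := by
    intro t i h
    rw [sin_eq_zero_iff] at h
    obtain ⟨l, hl⟩ := h
    have h1 : (l : ℝ) * M = k * n t i := by
      field_simp at hl
      linarith
    have h2 : l * M = k * n t i := by exact_mod_cast h1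
    have h3 : M ∣ k * n t i := by
      have : (M : ℤ) ∣ (k * n t i : ℕ) := ⟨l, by push_cast; linarith⟩
      exact_mod_cast this
    have := Nat.le_of_dvd (T.n_pos t i) (Nat.Coprime.dvd_of_dvd_mul_left hk.symm h3)
    have h0 := T.n_pos t 0
    have h1 := T.n_pos t 1
    have h2 := T.n_pos t 2
    have hs := T.n_sum t
    fin_cases i <;> simp at this <;> omega
  obtain ⟨n0, hn0⟩ := T.perm
  have hprod : ∀ t, ∏ i, sin (π * (k * n t i / M)) = ∏ i, sin (π * (k * n0 i / M)) := by
    intro t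
    obtain ⟨τ, hτ⟩ := hn0 t
    simp only [hτ]
    exact Equiv.prod_comp τ (fun i => sin (π * (k * n0 i / M)))
  have hodd : Odd k := by
    rw [← Nat.not_even_iff_odd]
    intro h
    have := Nat.dvd_gcd h.two_dvd T.even.two_dvd
    rw [hk] at this
    omega
  refine ⟨∏ i, sin (π * (k * n0 i / M)) + (if m = 0 then
    1 - ∏ i, sin (π * (k * n0 i / M)) else 0), ?_, ?_⟩
  · split_ifs with h0
    · simp
    · rw [add_zero, ← hprod ⟨0, Nat.pos_of_ne_zero h0⟩]
      exact Finset.prod_ne_zero_iff.2 fun i _ => hs _ i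
  intro Φ h t i
  have hm : m ≠ 0 := by rintro rfl; exact t.elim0
  rw [if_neg hm, add_zero, ← hprod t]
  have hsum : n t i + n t (i + 1) + n t (i + 2) = M := by
    have := T.n_sum t
    fin_cases i
    · exact this
    · simp only [Fin.mk_one, show (1 + 1 : Fin 3) = 2 from rfl, show (1 + 2 : Fin 3) = 0 from rfl]
      omega
    · simp only [Fin.reduceFinMk, show (2 + 1 : Fin 3) = 0 from rfl,
        show (2 + 2 : Fin 3) = 1 from rfl]
      omega
  have hprod3 : ∏ l, sin (π * (k * n t l / M)) = sin (π * (k * n t i / M)) *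
      sin (π * (k * n t (i + 1) / M)) * sin (π * (k * n t (i + 2) / M)) := by
    rw [Fin.prod_univ_three]
    fin_cases i
    · rfl
    · simp only [Fin.mk_one, show (1 + 1 : Fin 3) = 2 from rfl, show (1 + 2 : Fin 3) = 0 from rfl]
      ring
    · simp only [Fin.reduceFinMk, show (2 + 1 : Fin 3) = 0 from rfl,
        show (2 + 2 : Fin 3) = 1 from rfl]
      ring
  refine ⟨sin (π * (k * n t (i + 1) / M)) / sin (π * (k * n t (i + 2) / M)), ?_, ?_⟩
  · rw [T.geo_phi hk h t i]
    congr 1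
    have h1 : ∀ a : ℕ, zt M ^ (k * a) = Complex.exp ((π * (k * a / M) : ℝ) * Complex.I) ^ 2 := by
      intro a
      rw [zt, ← Complex.exp_nat_mul, ← Complex.exp_nat_mul]; congr 1; push_cast; ring
    have h2 : ∀ α : ℝ, 1 - Complex.exp (α * Complex.I) ^ 2 =
        -2 * Complex.I * sin α * Complex.exp (α * Complex.I) := by
      intro α
      have e1 : Complex.exp (α * Complex.I) = cos α + sin α * Complex.I := by
        rw [Complex.exp_mul_I]; push_cast; ring
      have e2 : (cos α : ℂ) ^ 2 + (sin α : ℂ) ^ 2 = 1 := by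
        exact_mod_cast cos_sq_add_sin_sq α
      rw [e1]
      linear_combination (-1 : ℂ) * e2 + (sin α : ℂ) ^ 2 * Complex.I_sq
    have h3 : (π * (k * (n t i + n t (i + 1) : ℕ) / M) : ℝ) =
        π * (k * n t i / M) + π * (k * n t (i + 1) / M) := by push_cast; ring
    have h4 : sin (π * (k * n t i / M) + π * (k * n t (i + 1) / M)) =
        sin (π * (k * n t (i + 2) / M)) := by
      have : π * (k * n t i / M) + π * (k * n t (i + 1) / M) =
          k * π - π * (k * n t (i + 2) / M) := by
        have : (M : ℝ) = n t i + n t (i + 1) + n t (i + 2) := by exact_mod_cast hsum.symm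
        field_simp
        rw [this]; ring
      rw [this, sin_sub, sin_nat_mul_pi, cos_nat_mul_pi, hodd.neg_one_pow]; ring
    rw [h1, h1, h1, h2, h2, h3, h4, Complex.ofReal_add, add_mul, Complex.exp_add]
    have := hs t (i + 2)
    have c1 : (sin (π * (k * n t (i + 2) / M)) : ℂ) ≠ 0 := by exact_mod_cast this
    have c2 := Complex.exp_ne_zero ((π * (k * n t i / M) : ℝ) * Complex.I)
    have c3 := Complex.exp_ne_zero ((π * (k * n t (i + 1) / M) : ℝ) * Complex.I)
    rw [Complex.ofReal_div]
    generalize Complex.exp ((π * (k * n t i / M) : ℝ) * Complex.I) = E1 at *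
    generalize Complex.exp ((π * (k * n t (i + 1) / M) : ℝ) * Complex.I) = E2 at *
    have c4 := Complex.I_ne_zero
    generalize (sin (π * (k * n t i / M)) : ℂ) = s0 at *
    generalize (sin (π * (k * n t (i + 1) / M)) : ℂ) = s1 at *
    generalize (sin (π * (k * n t (i + 2) / M)) : ℂ) = s2 at *
    field_simp
  · rw [hprod3]
    have a0 := hs t i
    have a1 := hs t (i + 1)
    have a2 := hs t (i + 2)
    generalize sin (π * (k * n t i / M)) = s0 at *
    generalize sin (π * (k * n t (i + 1) / M)) = s1 at *
    generalize sin (π * (k * n t (i + 2) / M)) = s2 at *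
    have : s1 / s2 * s0 * (s0 * s1 * s2) = (s0 * s1) ^ 2 := by field_simp
    rw [this]
    positivity
end CTiling

/-! ### Families of triangles covering a star polygon -/

lemma cr_continuous (a b : ℂ) : Continuous fun x : ℂ => cr a (b - x) := by
  unfold cr; fun_prop

lemma cr_continuous2 (a b : ℂ) : Continuous fun x : ℂ => cr (a - x) (b - x) := by
  unfold cr; fun_prop

/-- A nonempty open set is not covered by countably many lines. -/
lemma generic {ι : Type*} [Countable ι] (a b : ι → ℂ) (ha : ∀ i, a i ≠ 0) {U : Set ℂ}
    (hU : IsOpen U) (hne : U.Nonempty) : ∃ x ∈ U, ∀ i, cr (a i) (b i - x) ≠ 0 := by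
  have hd : Dense (⋂ i, {x : ℂ | cr (a i) (b i - x) ≠ 0}) := by
    apply dense_iInter_of_isOpen
    · intro i
      exact isOpen_ne_fun (cr_continuous _ _) continuous_const
    · intro i x
      by_cases hx : cr (a i) (b i - x) ≠ 0
      · exact subset_closure hx
      rw [not_not] at hx
      have hn : 0 < (a i).re * (a i).re + (a i).im * (a i).im := by
        have := Complex.normSq_pos.2 (ha i)
        rwa [Complex.normSq_apply] at this
      have ht : Tendsto (fun ε : ℝ => x + ε * (Complex.I * a i)) (𝓝[>] 0) (𝓝 x) := by
        have : Continuous fun ε : ℝ => x + ε * (Complex.I * a i) := by fun_prop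
        simpa using (this.tendsto 0).mono_left nhdsWithin_le_nhds
      refine mem_closure_of_tendsto ht ?_
      filter_upwards [self_mem_nhdsWithin] with ε hε
      have : cr (a i) (b i - (x + ε * (Complex.I * a i))) = cr (a i) (b i - x) -
          ε * ((a i).re * (a i).re + (a i).im * (a i).im) := by
        simp [cr]; ring
      simp only [this, hx]
      have := mul_pos hε hn
      intro h; linarith
  obtain ⟨x, hx, hx'⟩ := hd.inter_open_nonempty U hU hne
  exact ⟨x, hx, fun i => by simpa using Set.mem_iInter.1 hx' i⟩

lemma crossing_zero {x w p q : ℂ} (hp : ((p - x) * (starRingEnd ℂ) w).re ≤ 0)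
    (hq : ((q - x) * (starRingEnd ℂ) w).re ≤ 0) : crossing x w p q = 0 := by
  rcases eq_or_ne w 0 with rfl | hw
  · simp [crossing, cr]
  have h0 := Complex.normSq_pos.2 hw
  rw [Complex.normSq_apply] at h0
  simp only [Complex.mul_re, Complex.conj_re, Complex.conj_im] at hp hq
  unfold crossing
  -- the components of `p - x` and `q - x` along `w` determine the sign of `cr (p - x) (q - x)`
  have key : (w.re * w.re + w.im * w.im) * cr (p - x) (q - x) =
      ((p - x).re * w.re + (p - x).im * w.im) * cr w (q - x) -
      ((q - x).re * w.re + (q - x).im * w.im) * cr w (p - x) := by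
    unfold cr; ring
  generalize hA : cr (p - x) (q - x) = A at *
  generalize cr w (p - x) = B at *
  generalize cr w (q - x) = C at *
  split_ifs with c1 c2
  · nlinarith [mul_pos h0 c1.2.2]
  · nlinarith [mul_neg_of_pos_of_neg h0 c2.2.2]
  · rfl

/-- Barycentric coordinates relative to the corner `i` of a triangle. -/
lemma cr_bary (Q : Fin 3 → ℂ) (i : Fin 3) (a b : ℝ) {s : ℝ}
    (hs : 0 < s * cr (Q 1 - Q 0) (Q 2 - Q 0)) (ha : 0 < a) (hb : 0 < b) (hab : a + b < 1)
    (l : Fin 3) : 0 < s * cr (Q l - (Q i + (a * (Q (i + 1) - Q i) + b * (Q (i + 2) - Q i))))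
      (Q (l + 1) - (Q i + (a * (Q (i + 1) - Q i) + b * (Q (i + 2) - Q i)))) := by
  have h1 := mul_pos hs ha
  have h2 := mul_pos hs hb
  have h3 := mul_pos hs (sub_pos.2 hab)
  fin_cases i <;> fin_cases l <;>
  simp [cr, show (2 + 1 : Fin 3) = 0 from rfl, show (2 + 2 : Fin 3) = 1 from rfl,
    show (1 + 1 : Fin 3) = 2 from rfl, show (1 + 2 : Fin 3) = 0 from rfl] at * <;> nlinarith

/-- Data of a family of triangles all of the same orientation `s` whose signed indicators add up,
at generic points, to the crossing numbers of the star polygon with vertices `ω ^ (k * j)`. The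
angle of the triangle `Q t` at its vertex `i` is `φ t i`. -/
structure StarData (N k m : ℕ) (Q : Fin m → Fin 3 → ℂ) (s : ℤ) (φ : Fin m → Fin 3 → ℝ) : Prop where
  hN : 6 < N
  cop : k.Coprime N
  hs : s = 1 ∨ s = -1
  hφ : ∀ t i, 0 < φ t i ∧ φ t i < π
  hQ : ∀ t, 0 < (s : ℝ) * cr (Q t 1 - Q t 0) (Q t 2 - Q t 0)
  corner : ∀ t i, ∃ r : ℝ, 0 < s * r ∧
    Q t (i + 2) - Q t i = r * Complex.exp (φ t i * Complex.I) * (Q t (i + 1) - Q t i)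
  star : ∀ x w : ℂ, (∀ t i, cr w (Q t i - x) ≠ 0) → (∀ j, cr w (vtx N (k * j) - x) ≠ 0) →
    ∑ t, ∑ i, crossing x w (Q t i) (Q t (i + 1)) =
      ∑ j ∈ Finset.range N, crossing x w (vtx N (k * j)) (vtx N (k * (j + 1)))

namespace StarData
variable {N k m : ℕ} {Q : Fin m → Fin 3 → ℂ} {s : ℤ} {φ : Fin m → Fin 3 → ℝ}

lemma ne (S : StarData N k m Q s φ) (t : Fin m) (i : Fin 3) : Q t (i + 1) - Q t i ≠ 0 := by
  intro h
  have hQ := S.hQ t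
  rw [sub_eq_zero] at h
  fin_cases i <;> simp [cr, show (2 + 1 : Fin 3) = 0 from rfl,
    show (1 + 1 : Fin 3) = 2 from rfl] at h hQ <;> rw [h] at hQ <;> linarith

/-- The interior of the triangle `Q t`. -/
def inn (Q : Fin m → Fin 3 → ℂ) (s : ℤ) (t : Fin m) : Set ℂ :=
  {x | ∀ i, 0 < (s : ℝ) * cr (Q t i - x) (Q t (i + 1) - x)}

lemma inn_open (t : Fin m) : IsOpen (inn Q s t) := by
  have : inn Q s t = ⋂ i, {x | 0 < (s : ℝ) * cr (Q t i - x) (Q t (i + 1) - x)} := by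
    ext; simp [inn]
  rw [this]
  exact isOpen_iInter_of_finite fun i =>
    isOpen_lt continuous_const (continuous_const.mul (cr_continuous2 _ _))

open Classical in
/-- In every nonempty open set there is a point at which the number of triangles covering it equals,
up to the sign `s`, the sum of the crossing numbers of the star polygon. -/
lemma exists_generic (S : StarData N k m Q s φ) {w : ℂ} (hw : w ≠ 0) {U : Set ℂ} (hU : IsOpen U)
    (hne : U.Nonempty) : ∃ x ∈ U, (∀ j, cr w (vtx N (k * j) - x) ≠ 0) ∧
      s * ((Finset.univ.filter fun t => x ∈ inn Q s t).card : ℤ) =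
        ∑ j ∈ Finset.range N, crossing x w (vtx N (k * j)) (vtx N (k * (j + 1))) := by
  obtain ⟨x, hx, hg⟩ := generic (ι := (Fin m × Fin 3) ⊕ (Fin m × Fin 3) ⊕ ℕ)
    (Sum.elim (fun _ => w) (Sum.elim (fun c => Q c.1 (c.2 + 1) - Q c.1 c.2) fun _ => w))
    (Sum.elim (fun c => Q c.1 c.2) (Sum.elim (fun c => Q c.1 c.2) fun j => vtx N (k * j)))
    (by rintro (c | c | j) <;> simp [hw, S.ne]) hU hne
  have h1 : ∀ t i, cr w (Q t i - x) ≠ 0 := fun t i => hg (Sum.inl (t, i))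
  have h2 : ∀ t i, cr (Q t i - x) (Q t (i + 1) - x) ≠ 0 := by
    intro t i h
    refine hg (Sum.inr (Sum.inl (t, i))) ?_
    simp only [Sum.elim_inr, Sum.elim_inl]
    rw [← neg_eq_zero, ← h]
    simp [cr]; ring
  have h3 : ∀ j, cr w (vtx N (k * j) - x) ≠ 0 := fun j => hg (Sum.inr (Sum.inr j))
  refine ⟨x, hx, h3, ?_⟩
  rw [← S.star x w h1 h3, Finset.card_filter]
  push_cast
  rw [Finset.mul_sum]
  refine Finset.sum_congr rfl fun t _ => ?_
  rw [crossing_sum _ _ _ (h1 t) (h2 t)]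
  have hsum := cr_sum (Q t) x
  have hQ := S.hQ t
  simp only [sind, inn, Set.mem_ofPred_eq]
  rcases S.hs with rfl | rfl
  · simp only [Int.cast_one, one_mul] at hQ ⊢
    rw [if_neg (c := ∀ i, cr (Q t i - x) (Q t (i + 1) - x) < 0)]
    intro h
    have a0 := h 0
    have a1 := h 1
    have a2 := h 2
    simp only [zero_add, show (1 + 1 : Fin 3) = 2 from rfl,
      show (2 + 1 : Fin 3) = 0 from rfl] at a0 a1 a2
    linarith
  · simp only [Int.cast_neg, Int.cast_one, neg_mul, one_mul, Left.neg_pos_iff] at hQ ⊢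
    rw [if_neg (c := ∀ i, 0 < cr (Q t i - x) (Q t (i + 1) - x))]
    · split_ifs <;> rfl
    intro h
    have a0 := h 0
    have a1 := h 1
    have a2 := h 2
    simp only [zero_add, show (1 + 1 : Fin 3) = 2 from rfl,
      show (2 + 1 : Fin 3) = 0 from rfl] at a0 a1 a2
    linarith

/-- Points of the triangle close to its corner. -/
lemma eventually_inn (S : StarData N k m Q s φ) (t : Fin m) (i : Fin 3) {a b : ℝ} (ha : 0 < a)
    (hb : 0 < b) : ∀ᶠ ε : ℝ in 𝓝[>] 0,
      Q t i + ε * (a * (Q t (i + 1) - Q t i) + b * (Q t (i + 2) - Q t i)) ∈ inn Q s t := by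
  have h : ∀ᶠ ε : ℝ in 𝓝[>] 0, ε * (a + b) < 1 := by
    have : Tendsto (fun ε : ℝ => ε * (a + b)) (𝓝[>] 0) (𝓝 (0 * (a + b))) :=
      ((continuous_id.mul continuous_const).tendsto 0).mono_left nhdsWithin_le_nhds
    rw [zero_mul] at this
    exact this.eventually (gt_mem_nhds one_pos)
  filter_upwards [h, self_mem_nhdsWithin] with ε hε h0
  intro l
  have := cr_bary (Q t) i (ε * a) (ε * b) (S.hQ t) (mul_pos h0 ha) (mul_pos h0 hb)
    (by linarith) l
  convert this using 4 <;> push_cast <;> ring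

lemma vtx_conj_self (N j : ℕ) : (vtx N j * (starRingEnd ℂ) (vtx N j)) = 1 := by
  rw [vtx_conj, mul_inv_cancel₀ (vtx_ne N j)]

lemma vtx_norm (N j : ℕ) : ‖vtx N j‖ = 1 := Complex.norm_exp_ofReal_mul_I _

lemma re_le (a b : ℕ) : (vtx N a * (starRingEnd ℂ) (vtx N b)).re ≤ 1 := by
  refine (Complex.re_le_norm _).trans ?_
  simp [vtx_norm]

lemma re_lt {a b : ℕ} (h : vtx N a ≠ vtx N b) :
    (vtx N a * (starRingEnd ℂ) (vtx N b)).re < 1 := by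
  refine lt_of_le_of_ne (re_le a b) fun h1 => h ?_
  have hn : ‖vtx N a * (starRingEnd ℂ) (vtx N b)‖ = 1 := by simp [vtx_norm]
  have h2 : vtx N a * (starRingEnd ℂ) (vtx N b) = 1 := by
    have := Complex.sq_norm (vtx N a * (starRingEnd ℂ) (vtx N b))
    rw [hn, Complex.normSq_apply, h1] at this
    apply Complex.ext
    · simpa using h1
    · have : (vtx N a * (starRingEnd ℂ) (vtx N b)).im * (vtx N a * (starRingEnd ℂ) (vtx N b)).im = 0 := by
        linarith
      simpa using mul_self_eq_zero.1 this
  rw [vtx_conj] at h2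
  exact (mul_inv_eq_one₀ (vtx_ne N b)).1 h2

open Classical in
/-- The triangles lie on the inner side of the tangent to the unit circle at a vertex of the
star polygon. -/
lemma below (S : StarData N k m Q s φ) (b : ℕ) (t : Fin m) (i : Fin 3) :
    (Q t i * (starRingEnd ℂ) (vtx N b)).re ≤ 1 := by
  by_contra! hcon
  set V := vtx N b with hV
  have hUo : IsOpen {x : ℂ | 1 < (x * (starRingEnd ℂ) V).re} :=
    isOpen_lt continuous_const (by fun_prop)
  have hne : (inn Q s t ∩ {x : ℂ | 1 < (x * (starRingEnd ℂ) V).re}).Nonempty := by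
    have h1 := S.eventually_inn t i one_pos one_pos
    have ht : Tendsto (fun ε : ℝ => Q t i + ε * (((1 : ℝ) : ℂ) * (Q t (i + 1) - Q t i) +
        ((1 : ℝ) : ℂ) * (Q t (i + 2) - Q t i))) (𝓝[>] 0) (𝓝 (Q t i)) := by
      have : Continuous fun ε : ℝ => Q t i + ε * (((1 : ℝ) : ℂ) * (Q t (i + 1) - Q t i) +
        ((1 : ℝ) : ℂ) * (Q t (i + 2) - Q t i)) := by fun_prop
      simpa using (this.tendsto 0).mono_left nhdsWithin_le_nhds
    obtain ⟨ε, h1, h2⟩ := (h1.and (ht.eventually (hUo.mem_nhds hcon))).exists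
    exact ⟨_, h1, h2⟩
  obtain ⟨x, ⟨hx1, hx2⟩, -, hx⟩ := S.exists_generic (vtx_ne N b) ((inn_open t).inter hUo) hne
  have h0 : ∀ a, ((vtx N a - x) * (starRingEnd ℂ) V).re ≤ 0 := by
    intro a
    rw [sub_mul, Complex.sub_re]
    have := re_le (N := N) a b
    have hx2 : 1 < (x * (starRingEnd ℂ) V).re := hx2
    linarith
  rw [Finset.sum_eq_zero fun j _ => crossing_zero (h0 _) (h0 _)] at hx
  have : (Finset.univ.filter fun t => x ∈ inn Q s t).card ≠ 0 := by
    rw [Finset.card_ne_zero]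
    exact ⟨t, by simpa using hx1⟩
  rcases mul_eq_zero.1 hx with h | h
  · rcases S.hs with h1 | h1 <;> omega
  · exact this (by exact_mod_cast h)


lemma vtx_sub_im (a b : ℕ) (h : b ≤ a) : cr (vtx N b) (vtx N a) = sin (2 * π * (a - b : ℕ) / N) := by
  rcases Nat.eq_zero_or_pos N with rfl | hN
  · simp [cr, vtx_re, vtx_im]
  have : (2 * π * (a - b : ℕ) / N : ℝ) = 2 * π * a / N - 2 * π * b / N := by
    rw [Nat.cast_sub h]; ring
  rw [this, sin_sub, cr, vtx_re, vtx_im, vtx_re, vtx_im]; ring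

/-- At generic points near a vertex of the star polygon, the sum of the crossing numbers of
the star polygon with the outward ray is `0` or `1`. -/
lemma near (S : StarData N k m Q s φ) (hsin : 0 < sin (2 * π * k / N)) (j : ℕ) :
    ∀ᶠ x in 𝓝 (vtx N (k * (j + 1))),
      (∀ i, cr (vtx N (k * (j + 1))) (vtx N (k * i) - x) ≠ 0) →
      ∑ i ∈ Finset.range N, crossing x (vtx N (k * (j + 1))) (vtx N (k * i)) (vtx N (k * (i + 1)))
        = 0 ∨
      ∑ i ∈ Finset.range N, crossing x (vtx N (k * (j + 1))) (vtx N (k * i)) (vtx N (k * (i + 1)))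
        = 1 := by
  have hN := S.hN
  set V := vtx N (k * (j + 1)) with hV
  have hVV : (V * (starRingEnd ℂ) V).re = 1 := by rw [hV, vtx_conj_self]; rfl
  have e1 : ∀ᶠ x in 𝓝 V, ∀ l ∈ Finset.range (N + 1), vtx N (k * (j + l)) ≠ V →
      (vtx N (k * (j + l)) * (starRingEnd ℂ) V).re < (x * (starRingEnd ℂ) V).re := by
    rw [Filter.eventually_all_finset]
    intro l _
    by_cases h : vtx N (k * (j + l)) = V
    · simp [h]
    · have h1 := re_lt h
      rw [← hV, ← hVV] at h1
      have hc : Continuous fun x : ℂ => (x * (starRingEnd ℂ) V).re := by fun_prop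
      filter_upwards [(hc.tendsto V).eventually (lt_mem_nhds h1)] with x hx _ using hx
  have c1 : cr V (vtx N (k * j) - V) < 0 := by
    have : cr V (vtx N (k * j) - V) = - cr (vtx N (k * j)) V := by simp [cr]; ring
    rw [this, hV, vtx_sub_im _ _ (by gcongr; omega)]
    have : k * (j + 1) - k * j = k := by rw [mul_add]; omega
    rw [this]; linarith
  have c2 : 0 < cr V (vtx N (k * (j + 2)) - V) := by
    have : cr V (vtx N (k * (j + 2)) - V) = cr V (vtx N (k * (j + 2))) := by simp [cr]; ring
    rw [this, hV, vtx_sub_im _ _ (by gcongr; omega)]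
    have : k * (j + 2) - k * (j + 1) = k := by rw [mul_add, mul_add]; omega
    rw [this]; exact hsin
  have e2 : ∀ᶠ x in 𝓝 V, cr V (vtx N (k * j) - x) < 0 :=
    ((cr_continuous _ _).tendsto V).eventually (gt_mem_nhds c1)
  have e3 : ∀ᶠ x in 𝓝 V, 0 < cr V (vtx N (k * (j + 2)) - x) :=
    ((cr_continuous _ _).tendsto V).eventually (lt_mem_nhds c2)
  filter_upwards [e1, e2, e3] with x h1 h2 h3 hne
  have hper : ∀ i, crossing x V (vtx N (k * (i + N))) (vtx N (k * (i + N + 1))) =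
      crossing x V (vtx N (k * i)) (vtx N (k * (i + 1))) := by
    intro i
    have hp : ∀ i, vtx N (k * (i + N)) = vtx N (k * i) := by
      intro i
      rw [vtx_eq_iff (by omega), mul_add]
      simp [Nat.ModEq]
    rw [show i + N + 1 = i + 1 + N by ring, hp, hp]
  rw [← sum_range_shift (g := fun i => crossing x V (vtx N (k * i)) (vtx N (k * (i + 1)))) hper j]
  have hd : ∀ l, vtx N (k * (j + l)) = V → l ≡ 1 [MOD N] := by
    intro l hl
    rw [hV, vtx_eq_iff (by omega)] at hl
    exact Nat.ModEq.add_left_cancel' j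
      (Nat.ModEq.cancel_left_of_coprime (by rw [Nat.gcd_comm]; exact S.cop) hl)
  obtain ⟨N', rfl⟩ : ∃ N', N = N' + 2 := ⟨N - 2, by omega⟩
  rw [Finset.sum_range_succ', Finset.sum_range_succ', Finset.sum_eq_zero, zero_add]
  · have hVe : vtx (N' + 2) (k * (j + (0 + 1))) = V := hV.symm
    rw [hVe, add_zero, show j + (0 + 1) + 1 = j + 2 by ring]
    have h4 : cr V (V - x) ≠ 0 := hne (j + 1)
    unfold crossing
    rcases lt_or_gt_of_ne h4 with h4 | h4
    · simp only [h2, h3, h4, h4.not_gt, h2.not_gt, h3.not_gt, true_and, false_and, if_false, and_false]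
      split_ifs <;> simp
    · simp only [h2, h3, h4, h4.not_gt, h2.not_gt, h3.not_gt, true_and, false_and, if_false, and_false]
      split_ifs <;> simp
  · intro l hl
    rw [Finset.mem_range] at hl
    apply crossing_zero
    · rw [sub_mul, Complex.sub_re, sub_nonpos]
      refine (h1 (l + 1 + 1) (by simp; omega) fun h => ?_).le
      have := (hd _ h).eq_of_lt_of_lt (by omega) (by omega)
      omega
    · rw [sub_mul, Complex.sub_re, sub_nonpos]
      refine (h1 (l + 1 + 1 + 1) (by simp; omega) fun h => ?_).le
      have := hd _ h
      have := Nat.ModEq.add_right_cancel' 1 this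
      have h5 : l + 1 + 1 ≤ N' + 1 := by omega
      have := this.eq_of_lt_of_lt (by omega) (by omega)
      omega

end StarData

/-! ### Angles at a vertex of the star polygon -/

namespace StarData
variable {N k m : ℕ} {Q : Fin m → Fin 3 → ℂ} {s : ℤ} {φ : Fin m → Fin 3 → ℝ}

open Classical in
/-- The triangles with a corner at a vertex of the star polygon are counterclockwise, and no two of
them overlap near that vertex. -/
lemma count_near (S : StarData N k m Q s φ) (hsin : 0 < sin (2 * π * k / N)) {j : ℕ}
    {ι : Type*} {l : Filter ι} [l.NeBot] {f : ι → ℂ} (hf : Tendsto f l (𝓝 (vtx N (k * (j + 1)))))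
    {C : Finset (Fin m)} (hne : C.Nonempty) (hC : ∀ᶠ ε in l, ∀ t ∈ C, f ε ∈ inn Q s t) :
    s = 1 ∧ C.card ≤ 1 := by
  obtain ⟨U, hU, hUo, hUV⟩ := eventually_nhds_iff.1 (S.near hsin j)
  obtain ⟨ε, h1, h2⟩ := (hC.and (hf.eventually (hUo.mem_nhds hUV))).exists
  have hO : IsOpen (U ∩ ⋂ t ∈ C, inn Q s t) :=
    hUo.inter (isOpen_biInter_finset fun t _ => inn_open t)
  obtain ⟨x, ⟨hxU, hxC⟩, hx0, hx⟩ := S.exists_generic (vtx_ne N (k * (j + 1))) hO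
    ⟨f ε, h2, by simpa using h1⟩
  have hsub : C ⊆ Finset.univ.filter fun t => x ∈ inn Q s t := by
    intro t ht
    simp only [Set.mem_iInter] at hxC
    simpa using hxC t ht
  have hcard := Finset.card_le_card hsub
  have hpos := hne.card_pos
  generalize (Finset.univ.filter fun t => x ∈ inn Q s t).card = c at *
  have h3 := hU x hxU hx0
  rw [← hx] at h3
  rcases S.hs with rfl | rfl
  · refine ⟨rfl, ?_⟩; omega
  · omega

/-- The half-open data of a corner in polar coordinates: the edges of a corner at a vertex `V`
point in the directions `i V e^{iη}` and `i V e^{i(η + φ)}`, with `0 ≤ η` and `η + φ ≤ π`. -/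
lemma polar (S : StarData N k m Q s φ) (hsin : 0 < sin (2 * π * k / N)) {j : ℕ} {t : Fin m}
    {i : Fin 3} (hV : Q t i = vtx N (k * (j + 1))) :
    ∃ η : ℝ, 0 ≤ η ∧ η + φ t i ≤ π ∧ ∀ θ ∈ Set.Ioo η (η + φ t i), ∃ a b : ℝ, 0 < a ∧ 0 < b ∧
      Complex.I * vtx N (k * (j + 1)) * Complex.exp (θ * Complex.I) =
        a * (Q t (i + 1) - Q t i) + b * (Q t (i + 2) - Q t i) := by
  set V := vtx N (k * (j + 1)) with hVd
  have hV0 : V ≠ 0 := vtx_ne _ _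
  obtain ⟨hφ0, hφ1⟩ := S.hφ t i
  have hs1 : s = 1 := by
    refine (S.count_near hsin (j := j) (C := {t}) ?_ (Finset.singleton_nonempty t)
      (f := fun ε : ℝ => Q t i + ε * ((1 : ℝ) * (Q t (i + 1) - Q t i) +
        (1 : ℝ) * (Q t (i + 2) - Q t i))) (l := 𝓝[>] 0) ?_).1
    · have : Continuous fun ε : ℝ => Q t i + ε * ((1 : ℝ) * (Q t (i + 1) - Q t i) +
        (1 : ℝ) * (Q t (i + 2) - Q t i)) := by fun_prop
      have h := (this.tendsto 0).mono_left (nhdsWithin_le_nhds (s := Set.Ioi 0))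
      rw [← hVd, ← hV]
      simpa using h
    · simpa using S.eventually_inn t i one_pos one_pos
  obtain ⟨r, hr, hc⟩ := S.corner t i
  rw [hs1, Int.cast_one, one_mul] at hr
  have hne := S.ne t i
  -- polar coordinates of the first edge relative to `i V`
  obtain ⟨ρ, η, hρ, hη, he⟩ : ∃ ρ η : ℝ, 0 < ρ ∧ η ∈ Set.Ioc (-π) π ∧
      Q t (i + 1) - Q t i = ρ * (Complex.I * V * Complex.exp (η * Complex.I)) := by
    have hIV : Complex.I * V ≠ 0 := mul_ne_zero Complex.I_ne_zero hV0
    refine ⟨‖(Q t (i + 1) - Q t i) / (Complex.I * V)‖, ((Q t (i + 1) - Q t i) / (Complex.I * V)).arg,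
      norm_pos_iff.2 (div_ne_zero hne hIV), Complex.arg_mem_Ioc _, ?_⟩
    rw [mul_left_comm, Complex.norm_mul_exp_arg_mul_I, mul_div_cancel₀ _ hIV]
  have hb1 := S.below (k * (j + 1)) t (i + 1)
  have hb2 := S.below (k * (j + 1)) t (i + 2)
  have hVV : V * (starRingEnd ℂ) V = 1 := vtx_conj_self _ _
  have hexp : ∀ θ : ℝ, (Complex.I * V * Complex.exp (θ * Complex.I) * (starRingEnd ℂ) V).re =
      - sin θ := by
    intro θ
    rw [show Complex.I * V * Complex.exp (θ * Complex.I) * (starRingEnd ℂ) V =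
      Complex.I * Complex.exp (θ * Complex.I) * (V * (starRingEnd ℂ) V) by ring, hVV, mul_one,
      Complex.mul_re, Complex.exp_ofReal_mul_I_re, Complex.exp_ofReal_mul_I_im]
    simp
  have hVre : (Q t i * (starRingEnd ℂ) V).re = 1 := by rw [hV, hVV]; rfl
  have he2 : Q t (i + 2) - Q t i =
      (r * ρ : ℝ) * (Complex.I * V * Complex.exp ((η + φ t i : ℝ) * Complex.I)) := by
    rw [hc, he, Complex.ofReal_add, add_mul, Complex.exp_add]; push_cast; ring
  have hs0 : 0 ≤ sin η := by
    have h := congrArg (fun z => (z * (starRingEnd ℂ) V).re) he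
    simp only [sub_mul, Complex.sub_re, mul_assoc (ρ : ℂ), Complex.re_ofReal_mul, hexp, hVre] at h
    by_contra! hcon
    nlinarith
  have hs2 : 0 ≤ sin (η + φ t i) := by
    have h := congrArg (fun z => (z * (starRingEnd ℂ) V).re) he2
    simp only [sub_mul, Complex.sub_re, mul_assoc ((r * ρ : ℝ) : ℂ), Complex.re_ofReal_mul, hexp,
      hVre] at h
    by_contra! hcon
    nlinarith [mul_pos hr hρ]
  have h0 : 0 ≤ η := by
    by_contra! hcon
    exact absurd (sin_neg_of_neg_of_neg_pi_lt hcon hη.1) (not_lt.2 hs0)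
  have h1 : η + φ t i ≤ π := by
    by_contra! hcon
    have : sin (η + φ t i - 2 * π) < 0 :=
      sin_neg_of_neg_of_neg_pi_lt (by linarith [hη.2]) (by linarith)
    rw [sin_sub_two_pi] at this
    linarith
  refine ⟨η, h0, h1, ?_⟩
  rintro θ ⟨hθ1, hθ2⟩
  have p0 : 0 < sin (φ t i) := sin_pos_of_pos_of_lt_pi hφ0 hφ1
  have p1 : 0 < sin (η + φ t i - θ) := sin_pos_of_pos_of_lt_pi (by linarith) (by linarith)
  have p2 : 0 < sin (θ - η) := sin_pos_of_pos_of_lt_pi (by linarith) (by linarith)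
  refine ⟨sin (η + φ t i - θ) / (sin (φ t i) * ρ), sin (θ - η) / (sin (φ t i) * (r * ρ)),
    by positivity, by positivity, ?_⟩
  rw [he, he2]
  have key : (sin (φ t i) : ℂ) * Complex.exp (θ * Complex.I) =
      sin (η + φ t i - θ) * Complex.exp (η * Complex.I) +
      sin (θ - η) * Complex.exp ((η + φ t i : ℝ) * Complex.I) := by
    obtain ⟨u, rfl⟩ : ∃ u, θ = η + u := ⟨θ - η, by ring⟩
    rw [show η + φ t i - (η + u) = φ t i - u by ring, show η + u - η = u by ring,
      Complex.ofReal_add, Complex.ofReal_add, add_mul, add_mul, Complex.exp_add, Complex.exp_add,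
      Complex.exp_mul_I u, Complex.exp_mul_I (φ t i), sin_sub]
    push_cast
    ring
  have q0 : (sin (φ t i) : ℂ) ≠ 0 := by exact_mod_cast p0.ne'
  have q1 : (ρ : ℂ) ≠ 0 := by exact_mod_cast hρ.ne'
  have q2 : (r : ℂ) ≠ 0 := by exact_mod_cast hr.ne'
  rw [Complex.ofReal_div, Complex.ofReal_div, Complex.ofReal_mul, Complex.ofReal_mul,
    Complex.ofReal_mul]
  generalize (sin (φ t i) : ℂ) = s0 at *
  generalize (sin (η + φ t i - θ) : ℂ) = s1 at *
  generalize (sin (θ - η) : ℂ) = s2 at *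
  generalize Complex.exp (θ * Complex.I) = E0 at *
  generalize Complex.exp (η * Complex.I) = E1 at *
  generalize Complex.exp ((η + φ t i : ℝ) * Complex.I) = E2 at *
  field_simp
  linear_combination key

/-- The angles at a vertex of the star polygon add up to at most `π`. -/
lemma angle_le (S : StarData N k m Q s φ) (hsin : 0 < sin (2 * π * k / N)) (j : ℕ)
    (C : Finset (Fin m × Fin 3)) (hC : ∀ c ∈ C, Q c.1 c.2 = vtx N (k * (j + 1))) :
    ∑ c ∈ C, φ c.1 c.2 ≤ π := by
  classical
  set V := vtx N (k * (j + 1)) with hVd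
  have hp : ∀ c : Fin m × Fin 3, ∃ η : ℝ, c ∈ C → (0 ≤ η ∧ η + φ c.1 c.2 ≤ π ∧
      ∀ θ ∈ Set.Ioo η (η + φ c.1 c.2), ∃ a b : ℝ, 0 < a ∧ 0 < b ∧
      Complex.I * V * Complex.exp (θ * Complex.I) =
        a * (Q c.1 (c.2 + 1) - Q c.1 c.2) + b * (Q c.1 (c.2 + 2) - Q c.1 c.2)) := by
    intro c
    by_cases h : c ∈ C
    · obtain ⟨η, hη⟩ := S.polar hsin (hC c h)
      exact ⟨η, fun _ => hη⟩
    · exact ⟨0, fun h' => absurd h' h⟩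
  choose η hη using hp
  have hdisj : (C : Set (Fin m × Fin 3)).PairwiseDisjoint
      fun c => Set.Ioo (η c) (η c + φ c.1 c.2) := by
    intro c hc d hd hcd
    rw [Function.onFun, Set.disjoint_left]
    intro θ h1 h2
    obtain ⟨-, -, hc'⟩ := hη c hc
    obtain ⟨-, -, hd'⟩ := hη d hd
    obtain ⟨a, b, ha, hb, hab⟩ := hc' θ h1
    obtain ⟨a', b', ha', hb', hab'⟩ := hd' θ h2
    have hne : c.1 ≠ d.1 := by
      intro h
      have h2 : c.2 ≠ d.2 := fun h2 => hcd (Prod.ext h h2)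
      have h3 : Q c.1 c.2 = Q c.1 d.2 := by rw [hC c hc, h, hC d hd]
      have n1 := sub_ne_zero.1 (S.ne c.1 c.2)
      have n2 := sub_ne_zero.1 (S.ne c.1 d.2)
      have : d.2 = c.2 + 1 ∨ c.2 = d.2 + 1 := by
        generalize c.2 = x at *
        generalize d.2 = y at *
        revert h2; clear * -; revert x y; decide
      rcases this with h4 | h4
      · rw [← h4] at n1; exact n1 h3.symm
      · rw [← h4] at n2; exact n2 h3
    have e1 := S.eventually_inn c.1 c.2 ha hb
    have e2 := S.eventually_inn d.1 d.2 ha' hb'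
    rw [← hab, hC c hc] at e1
    rw [← hab', hC d hd] at e2
    have := (S.count_near hsin (j := j) (C := {c.1, d.1}) (l := 𝓝[>] 0)
      (f := fun ε : ℝ => V + ε * (Complex.I * V * Complex.exp (θ * Complex.I))) ?_ ⟨c.1, by simp⟩
      ?_).2
    · rw [Finset.card_pair hne] at this; omega
    · have : Continuous fun ε : ℝ => V + ε * (Complex.I * V * Complex.exp (θ * Complex.I)) := by
        fun_prop
      have h := (this.tendsto 0).mono_left (nhdsWithin_le_nhds (s := Set.Ioi 0))
      simpa using h
    · filter_upwards [e1, e2] with ε g1 g2 t ht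
      rw [Finset.mem_insert, Finset.mem_singleton] at ht
      rcases ht with rfl | rfl
      · exact g1
      · exact g2
  have hm := MeasureTheory.measure_biUnion_finset (μ := MeasureTheory.volume) hdisj
    (fun c _ => measurableSet_Ioo)
  have hle : MeasureTheory.volume (⋃ c ∈ C, Set.Ioo (η c) (η c + φ c.1 c.2)) ≤
      MeasureTheory.volume (Set.Icc 0 π) := by
    apply MeasureTheory.measure_mono
    intro x hx
    simp only [Set.mem_iUnion] at hx
    obtain ⟨c, hc, hx⟩ := hx
    obtain ⟨h1, h2, -⟩ := hη c hc
    exact ⟨h1.trans hx.1.le, hx.2.le.trans h2⟩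
  rw [hm, Real.volume_Icc, sub_zero] at hle
  simp only [Real.volume_Ioo, add_sub_cancel_left] at hle
  rw [← ENNReal.ofReal_sum_of_nonneg fun c _ => (S.hφ c.1 c.2).1.le] at hle
  exact (ENNReal.ofReal_le_ofReal_iff pi_pos.le).1 hle

end StarData

/-! ### The conjugate angle equations -/

namespace CTiling
variable {N M m : ℕ} {P : Fin m → Fin 3 → ℂ} {n : Fin m → Fin 3 → ℕ}

lemma exp_pi_fract (x : ℝ) : ∃ e : ℝ, (e = 1 ∨ e = -1) ∧
    Complex.exp ((π * x : ℝ) * Complex.I) =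
      e * Complex.exp ((π * Int.fract x : ℝ) * Complex.I) ∧
    sin (π * x) = e * sin (π * Int.fract x) := by
  have hx : π * x = π * Int.fract x + ⌊x⌋ * π := by
    have := Int.fract_add_floor x
    nth_rewrite 1 [← this]; ring
  refine ⟨(-1) ^ ⌊x⌋, ?_, ?_, ?_⟩
  · rcases Int.even_or_odd ⌊x⌋ with h | h
    · left; exact h.neg_one_zpow
    · right; exact h.neg_one_zpow
  · rw [hx, Complex.ofReal_add, add_mul, Complex.exp_add, mul_comm]
    congr 1
    push_cast
    rw [mul_assoc, Complex.exp_int_mul, Complex.exp_pi_mul_I]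
  · rw [hx, sin_add_int_mul_pi]

/-- The conjugate of a tiling is a family of triangles covering the star polygon. -/
lemma exists_star (T : CTiling N M m P n) {k : ℕ} (hk : k.Coprime M) :
    ∃ Q s, StarData N k m Q s (fun t i => π * Int.fract (k * n t i / M : ℝ)) ∧
      ∀ t i j, P t i = vtx N j → Q t i = vtx N (k * j) := by
  obtain ⟨Φ, hΦ, hne⟩ := T.exists_semi hk
  obtain ⟨S, hS, himg⟩ := T.img hk
  obtain ⟨s, hs, hsS⟩ : ∃ s : ℤ, (s = 1 ∨ s = -1) ∧ 0 < s * S := by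
    rcases lt_or_gt_of_ne hS with h | h
    · exact ⟨-1, Or.inr rfl, by push_cast; linarith⟩
    · exact ⟨1, Or.inl rfl, by push_cast; linarith⟩
  have hf : ∀ t i, 0 < π * Int.fract (k * n t i / M : ℝ) ∧
      π * Int.fract (k * n t i / M : ℝ) < π := by
    intro t i
    constructor
    · apply mul_pos pi_pos
      refine lt_of_le_of_ne (Int.fract_nonneg _) fun h0 => ?_
      obtain ⟨r, -, hr⟩ := himg hΦ t i
      obtain ⟨e, -, -, he⟩ := exp_pi_fract (k * n t i / M : ℝ)
      rw [he, ← h0] at hr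
      simp at hr
    · have := Int.fract_lt_one (k * n t i / M : ℝ)
      nlinarith [pi_pos]
  have hcor : ∀ t i, ∃ r : ℝ, 0 < s * r ∧ Φ (P t (i + 2)) - Φ (P t i) =
      r * Complex.exp ((π * Int.fract (k * n t i / M : ℝ) : ℝ) * Complex.I) *
        (Φ (P t (i + 1)) - Φ (P t i)) := by
    intro t i
    obtain ⟨r, h1, h2⟩ := himg hΦ t i
    obtain ⟨e, he, he1, he2⟩ := exp_pi_fract (k * n t i / M : ℝ)
    refine ⟨r * e, ?_, ?_⟩
    · have hp := sin_pos_of_pos_of_lt_pi (hf t i).1 (hf t i).2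
      rw [he2] at h2
      have : 0 < r * e * S := by
        by_contra! hcon
        have := mul_nonpos_of_nonpos_of_nonneg hcon hp.le
        nlinarith
      by_contra! hcon
      have h5 : (s * (r * e)) * (s * S) ≤ 0 := mul_nonpos_of_nonpos_of_nonneg hcon hsS.le
      have h6 : (s : ℝ) * s = 1 := by rcases hs with rfl | rfl <;> norm_num
      nlinarith
    · rw [h1, he1]; push_cast; ring
  refine ⟨fun t i => Φ (P t i), s, ⟨T.hN, hk.coprime_dvd_right T.dvd, hs, hf, ?_, hcor, ?_⟩, ?_⟩
  · intro t
    obtain ⟨r, h1, h2⟩ := hcor t 0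
    have hp := sin_pos_of_pos_of_lt_pi (hf t 0).1 (hf t 0).2
    have hn := Complex.normSq_pos.2 (hne t 0)
    simp only [zero_add] at h2 hn
    generalize (π * Int.fract (k * n t 0 / M : ℝ)) = θ at *
    have : cr (Φ (P t 1) - Φ (P t 0)) (Φ (P t 2) - Φ (P t 0)) =
        r * sin θ * Complex.normSq (Φ (P t 1) - Φ (P t 0)) := by
      rw [h2, cr, Complex.normSq_apply, mul_assoc, Complex.re_ofReal_mul, Complex.im_ofReal_mul,
        Complex.mul_re, Complex.mul_im, Complex.exp_ofReal_mul_I_re, Complex.exp_ofReal_mul_I_im]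
      ring
    simp only [this]
    have := mul_pos (mul_pos h1 hp) hn
    linarith
  · intro x w h1 h2
    exact T.crossing_phi hΦ x w h1 h2
  · intro t i j h
    simp only [h]
    exact hΦ.vtx (by have := T.hN; omega) T.dvd T.hM j

lemma fract_div_pos {k N : ℕ} (hN : 6 < N) (hk : k.Coprime N) : 0 < Int.fract (k / N : ℝ) := by
  refine lt_of_le_of_ne (Int.fract_nonneg _) fun h => ?_
  rw [eq_comm, Int.fract_eq_zero_iff] at h
  obtain ⟨l, hl⟩ := h
  have hN0 : (N : ℝ) ≠ 0 := by positivity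
  field_simp at hl
  have h2 : (N : ℤ) ∣ k := ⟨l, by rw [mul_comm]; exact_mod_cast hl.symm⟩
  have h3 : N ∣ k := by exact_mod_cast h2
  have := Nat.Coprime.eq_one_of_dvd hk.symm h3
  omega

open Classical in
/-- **The conjugate angle equation.** If `ω ^ k` lies in the open upper half plane, the conjugate
angles at a vertex add up to the angle of the star polygon with vertices `ω ^ (k * j)`. -/
theorem angle_eq (T : CTiling N M m P n) {k : ℕ} (hk : k.Coprime M)
    (hf : Int.fract (k / N : ℝ) < 1 / 2) {j : ℕ} (hj : j < N) :
    ∑ t, ∑ i, (if P t i = vtx N (j + 1) then Int.fract (k * n t i / M : ℝ) else 0) =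
      1 - 2 * Int.fract (k / N : ℝ) := by
  have hN0 : (N : ℝ) ≠ 0 := by have := T.hN; positivity
  have hpos := fract_div_pos T.hN (hk.coprime_dvd_right T.dvd)
  have hsin : 0 < sin (2 * π * k / N) := by
    have : 2 * π * k / N = 2 * π * Int.fract (k / N : ℝ) + ⌊(k / N : ℝ)⌋ * (2 * π) := by
      have := Int.fract_add_floor (k / N : ℝ)
      rw [mul_div_assoc]
      nth_rewrite 1 [← this]; ring
    rw [this, sin_add_int_mul_two_pi]
    apply sin_pos_of_pos_of_lt_pi
    · positivity
    · nlinarith [pi_pos]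
  obtain ⟨Q, s, S, hQ⟩ := T.exists_star hk
  have hle := S.angle_le hsin j (Finset.univ.filter fun c => P c.1 c.2 = vtx N (j + 1))
    (by intro c hc; exact hQ _ _ _ (by simpa using hc))
  rw [← Finset.mul_sum, Finset.sum_filter, Fintype.sum_prod_type] at hle
  simp only at hle
  obtain ⟨l, hl⟩ := T.angle_sum_mod hj
  obtain ⟨L, hL⟩ : ∃ L : ℤ,
      ∑ t, ∑ i, (if P t i = vtx N (j + 1) then Int.fract (k * n t i / M : ℝ) else 0) =
        L - 2 * Int.fract (k / N : ℝ) := by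
    refine ⟨k * l - 2 * ⌊(k / N : ℝ)⌋ -
      ∑ t, ∑ i, (if P t i = vtx N (j + 1) then ⌊(k * n t i / M : ℝ)⌋ else 0), ?_⟩
    have e : ∀ t i, (if P t i = vtx N (j + 1) then Int.fract (k * n t i / M : ℝ) else 0) =
        k * (((if P t i = vtx N (j + 1) then n t i else 0 : ℕ) : ℝ) / M) -
        ((if P t i = vtx N (j + 1) then ⌊(k * n t i / M : ℝ)⌋ else 0 : ℤ) : ℝ) := by
      intro t i
      split_ifs
      · rw [Int.fract]; ring
      · simp
    simp only [e, Finset.sum_sub_distrib, ← Finset.mul_sum, ← Finset.sum_div]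
    push_cast at hl ⊢
    rw [hl, ← Int.self_sub_floor]
    ring
  have hge : 0 ≤ ∑ t, ∑ i,
      (if P t i = vtx N (j + 1) then Int.fract (k * n t i / M : ℝ) else 0) :=
    Finset.sum_nonneg fun t _ => Finset.sum_nonneg fun i _ => by
      split_ifs
      · exact Int.fract_nonneg _
      · exact le_rfl
  have hle1 : ∑ t, ∑ i,
      (if P t i = vtx N (j + 1) then Int.fract (k * n t i / M : ℝ) else 0) ≤ 1 := by
    by_contra! hcon
    nlinarith [pi_pos]
  rw [hL] at hge hle1 ⊢
  have h1 : (0 : ℝ) < L := by linarith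
  have h2 : (L : ℝ) < 2 := by linarith
  have h3 : 0 < L := by exact_mod_cast h1
  have h4 : L < 2 := by exact_mod_cast h2
  have : L = 1 := by omega
  rw [this]; simp

end CTiling

/-! ### Residues of units -/

/-- Let `L` be a common denominator of `a` and `b`. The residues `x` of `κ a` and `z` of `κ b` cannot
satisfy the inequalities `x + z < 1 / 2` for `z < 1 / 2` and `x + z > 3 / 2` for `z > 1 / 2` for all
units `κ` modulo `L`: a unit close to `L / 2`, or close to half of that, violates them. In the
application `b = 1 / N`, and the parity hypotheses on `c = L b` and `w = L a` express that `L` is the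
least common denominator. -/
lemma units_core {L : ℤ} {a b : ℝ} {w c : ℤ} (hL : 0 < L) (ha : 0 < a) (hb : 0 < b)
    (hab : a + b < 1 / 2) (hw : L * a = w) (hc : L * b = c) (hodd : Odd c ∨ Odd w)
    (h1 : Odd L → Odd c) (h8 : Even L → Odd c → b ≤ 1 / 8)
    (h4 : ∀ l, L = 2 * l → Odd l → Even c → ∃ d, c = 2 * d ∧ Odd d)
    (H : ∀ κ : ℤ, IsCoprime κ L → ∀ (p q : ℤ) (x z : ℝ), κ * a = p + x → κ * b = q + z →
      0 ≤ x → x < 1 → 0 ≤ z → z < 1 →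
      (z < 1 / 2 → x + z < 1 / 2) ∧ (1 / 2 < z → 3 / 2 < x + z)) : False := by
  rcases Int.even_or_odd L with hLe | hLo
  · obtain ⟨l, rfl⟩ := hLe
    rw [← two_mul] at *
    push_cast at hw hc
    rcases Int.even_or_odd l with ⟨l', rfl⟩ | hlo
    · -- `4` divides `L`
      push_cast at hw hc
      rcases Int.even_or_odd c with hce | hco
      · obtain ⟨q, hq⟩ := hce
        obtain ⟨p, hp⟩ := hodd.resolve_left (Int.not_odd_iff_even.2 ⟨q, hq⟩)
        subst hp hq
        push_cast at hw hc
        have := (H (1 + (l' + l')) ⟨1 - (l' + l'), l', by ring⟩ p q (a + 1 / 2) b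
          (by push_cast; linarith) (by push_cast; linarith) (by linarith) (by linarith)
          (by linarith) (by linarith)).1 (by linarith)
        linarith
      · obtain ⟨q, hq⟩ := hco
        rcases Int.even_or_odd w with ⟨p, hp⟩ | ⟨p, hp⟩
        · subst hp hq
          push_cast at hw hc
          have := (H (1 + (l' + l')) ⟨1 - (l' + l'), l', by ring⟩ p q a (b + 1 / 2)
            (by push_cast; linarith) (by push_cast; linarith) (by linarith) (by linarith)
            (by linarith) (by linarith)).2 (by linarith)
          linarith
        · subst hp hq
          push_cast at hw hc
          have := (H (l' + l' - 1) ⟨-(l' + l' + 1), l', by ring⟩ p q (1 / 2 - a) (1 / 2 - b)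
            (by push_cast; linarith) (by push_cast; linarith) (by linarith) (by linarith)
            (by linarith) (by linarith)).1 (by linarith)
          linarith
    · -- `L = 2 l` with `l` odd: an odd number coprime to `l` is coprime to `L`
      have hcop : ∀ κ : ℤ, Odd κ → IsCoprime κ l → IsCoprime κ (2 * l) := by
        rintro κ ⟨r, rfl⟩ h
        exact IsCoprime.mul_right ⟨1, -r, by ring⟩ h
      have hl2 : IsCoprime (2 : ℤ) l := by
        obtain ⟨r, rfl⟩ := hlo
        exact ⟨-r, 1, by ring⟩
      rcases Int.even_or_odd c with hce | hco
      · obtain ⟨d, rfl, hd⟩ := h4 l rfl hlo hce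
        have hwo : Odd w := hodd.resolve_left (Int.not_odd_iff_even.2 hce)
        -- an odd `κ` with `2 κ + 1 = e l`, `e` odd
        obtain ⟨κ, e, hκ, he, hκe⟩ : ∃ κ e : ℤ, Odd κ ∧ Odd e ∧ 2 * κ + 1 = e * l := by
          obtain ⟨r, rfl⟩ := hlo
          rcases Int.even_or_odd r with hr | hr
          · exact ⟨3 * r + 1, 3, by obtain ⟨y, rfl⟩ := hr; exact ⟨3 * y, by ring⟩,
              ⟨1, rfl⟩, by ring⟩
          · exact ⟨r, 1, hr, ⟨0, rfl⟩, by ring⟩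
        have hκl : IsCoprime κ l := ⟨-2, e, by linarith⟩
        obtain ⟨q, hq⟩ := he.mul hd
        have hκr : 2 * (κ : ℝ) + 1 = e * l := by exact_mod_cast hκe
        have hqr : (e : ℝ) * d = 2 * q + 1 := by exact_mod_cast hq
        push_cast at hc
        have hz : (κ : ℝ) * b = q + (1 / 2 - b / 2) := by
          linear_combination (b / 2) * hκr + (e / 4 : ℝ) * hc + (1 / 2) * hqr
        obtain ⟨p, hp⟩ := he.mul hwo
        have hpr : (e : ℝ) * w = 2 * p + 1 := by exact_mod_cast hp
        have hx : (κ : ℝ) * a = p / 2 + 1 / 4 - a / 2 := by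
          linear_combination (a / 2) * hκr + (e / 4 : ℝ) * hw + (1 / 4) * hpr
        rcases Int.even_or_odd p with ⟨y, rfl⟩ | ⟨y, rfl⟩
        · push_cast at hx
          have := (H κ (hcop κ hκ hκl) y q (1 / 4 - a / 2) (1 / 2 - b / 2) (by linarith) hz
            (by linarith) (by linarith) (by linarith) (by linarith)).1 (by linarith)
          linarith
        · push_cast at hx
          have := (H κ (hcop κ hκ hκl) y q (3 / 4 - a / 2) (1 / 2 - b / 2) (by linarith) hz
            (by linarith) (by linarith) (by linarith) (by linarith)).1 (by linarith)
          linarith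
      · have hb8 := h8 (even_two_mul l) hco
        obtain ⟨q, rfl⟩ := hco
        have k2 : IsCoprime (l - 2) (2 * l) := hcop _ (by
          obtain ⟨r, rfl⟩ := hlo; exact ⟨r - 1, by ring⟩) (by
          obtain ⟨x, y, h⟩ := hl2; exact ⟨-x, y + x, by linear_combination h⟩)
        have k4 : IsCoprime (l - 4) (2 * l) := hcop _ (by
          obtain ⟨r, rfl⟩ := hlo; exact ⟨r - 2, by ring⟩) (by
          obtain ⟨x, y, h⟩ := hl2.pow_left (m := 2)
          exact ⟨-x, y + x, by linear_combination h⟩)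
        push_cast at hc
        rcases Int.even_or_odd w with ⟨p, rfl⟩ | ⟨p, rfl⟩
        · push_cast at hw
          have := (H (l - 2) k2 (p - 1) q (1 - 2 * a) (1 / 2 - 2 * b)
            (by push_cast; linarith) (by push_cast; linarith) (by linarith) (by linarith)
            (by linarith) (by linarith)).1 (by linarith)
          linarith
        · push_cast at hw
          by_cases a4 : a ≤ 1 / 4
          · have := (H (l - 2) k2 p q (1 / 2 - 2 * a) (1 / 2 - 2 * b)
              (by push_cast; linarith) (by push_cast; linarith) (by linarith) (by linarith)
              (by linarith) (by linarith)).1 (by linarith)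
            by_cases a8 : a ≤ 1 / 8
            · linarith
            · have := (H (l - 4) k4 (p - 1) q (3 / 2 - 4 * a) (1 / 2 - 4 * b)
                (by push_cast; linarith) (by push_cast; linarith) (by linarith) (by linarith)
                (by linarith) (by linarith)).1 (by linarith)
              linarith
          · have := (H (l - 2) k2 (p - 1) q (3 / 2 - 2 * a) (1 / 2 - 2 * b)
              (by push_cast; linarith) (by push_cast; linarith) (by linarith) (by linarith)
              (by linarith) (by linarith)).1 (by linarith)
            linarith
  · obtain ⟨q, rfl⟩ := h1 hLo
    obtain ⟨κ, rfl⟩ := hLo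
    push_cast at hc hw
    have hcop : IsCoprime κ (2 * κ + 1) := ⟨-2, 1, by ring⟩
    rcases Int.even_or_odd w with ⟨p, rfl⟩ | ⟨p, rfl⟩
    · push_cast at hw
      have := (H κ hcop (p - 1) q (1 - a / 2) (1 / 2 - b / 2)
        (by push_cast; linarith) (by push_cast; linarith) (by linarith) (by linarith)
        (by linarith) (by linarith)).1 (by linarith)
      linarith
    · push_cast at hw
      have := (H κ hcop p q (1 / 2 - a / 2) (1 / 2 - b / 2)
        (by push_cast; linarith) (by push_cast; linarith) (by linarith) (by linarith)
        (by linarith) (by linarith)).1 (by linarith)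
      linarith

/-! ### Multiple angles at a vertex -/

/-- Units modulo a divisor `L` of `M` lift to units modulo `M`. -/
lemma exists_lift {L M : ℕ} (hM : 0 < M) (hd : L ∣ M) {κ : ℤ} (hκ : IsCoprime κ (L : ℤ)) :
    ∃ k : ℕ, k.Coprime M ∧ ∃ y : ℤ, (k : ℤ) = κ + L * y := by
  have : NeZero M := ⟨hM.ne'⟩
  have hu : IsUnit (κ : ZMod L) := (ZMod.coe_int_isUnit_iff_isCoprime κ L).2 hκ.symm
  obtain ⟨U, hU⟩ := ZMod.unitsMap_surjective hd hu.unit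
  refine ⟨(U : ZMod M).val, ZMod.val_coe_unit_coprime U, ?_⟩
  have h1 : (((U : ZMod M).val : ℤ) : ZMod L) = (κ : ZMod L) := by
    have := congrArg Units.val hU
    rw [ZMod.unitsMap_val] at this
    simp only [IsUnit.unit_spec] at this
    rw [← this, ZMod.cast_eq_val, Int.cast_natCast]
  rw [ZMod.intCast_eq_intCast_iff_dvd_sub] at h1
  obtain ⟨y, hy⟩ := h1
  exact ⟨-y, by linarith⟩

lemma fract_ne {M n k : ℕ} (hn : 0 < n) (hnM : n < M) (hk : k.Coprime M) :
    Int.fract (k * n / M : ℝ) ≠ 0 := by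
  intro h
  rw [Int.fract_eq_zero_iff] at h
  obtain ⟨l, hl⟩ := h
  have hM : (M : ℝ) ≠ 0 := by have : 0 < M := by omega
                              positivity
  field_simp at hl
  have h1 : (M : ℤ) ∣ (k * n : ℕ) := ⟨l, by rw [mul_comm (M : ℤ)]; exact_mod_cast hl.symm⟩
  have h2 : M ∣ n := hk.symm.dvd_of_dvd_mul_left (by exact_mod_cast h1)
  exact absurd (Nat.le_of_dvd hn h2) (by omega)

/-- An angle `n π / M` cannot satisfy all conjugates of the inequality `a + 1 / N < 1 / 2`. -/
lemma no_double {N M n : ℕ} (hN : 6 < N) (hd : N ∣ M) (hn : 0 < n) (hnM : n < M)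
    (hab : (n / M : ℝ) + 1 / N < 1 / 2)
    (X : ∀ k : ℕ, k.Coprime M → Int.fract (k / N : ℝ) < 1 / 2 →
      Int.fract (k * n / M : ℝ) + Int.fract (k / N : ℝ) < 1 / 2) : False := by
  have hM : 0 < M := by omega
  have hMr : (0 : ℝ) < M := by exact_mod_cast hM
  have hNr : (0 : ℝ) < N := by positivity
  have hnr : (0 : ℝ) < n := by positivity
  obtain ⟨g, u, v, hg, huv, rfl, rfl⟩ := Nat.exists_coprime' (m := n) (n := M)
    (Nat.gcd_pos_of_pos_left _ hn)
  have hv : 0 < v := Nat.pos_of_mul_pos_right hM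
  have hvr : (v : ℝ) ≠ 0 := by positivity
  have hgr : (g : ℝ) ≠ 0 := by positivity
  obtain ⟨L, hL⟩ : ∃ L, L = Nat.lcm v N := ⟨_, rfl⟩
  have hLM : L ∣ v * g := hL ▸ Nat.lcm_dvd ⟨g, rfl⟩ hd
  have hvL : v ∣ L := hL ▸ Nat.dvd_lcm_left _ _
  have hNL : N ∣ L := hL ▸ Nat.dvd_lcm_right _ _
  have hL0 : 0 < L := Nat.pos_of_dvd_of_pos hLM hM
  obtain ⟨c, hc⟩ := hNL
  obtain ⟨e, he⟩ := hvL
  have hmin : ∀ {l}, v ∣ l → N ∣ l → L ∣ l := fun h1 h2 => hL ▸ Nat.lcm_dvd h1 h2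
  have hec : Even c → Odd e := by
    intro h
    rw [← Nat.not_even_iff_odd]
    rintro ⟨e', rfl⟩
    obtain ⟨c', rfl⟩ := h
    have h1 : L = 2 * (v * e') := by rw [he]; ring
    have h2 : L = 2 * (N * c') := by rw [hc]; ring
    have := Nat.le_of_dvd (Nat.pos_of_ne_zero (by rintro h; rw [h] at h1; omega))
      (hmin ⟨e', rfl⟩ ⟨c', by omega⟩)
    omega
  have hA : ((u * g : ℕ) / (v * g : ℕ) : ℝ) = u / v := by push_cast; field_simp
  have hwL : (L : ℝ) * ((u * g : ℕ) / (v * g : ℕ) : ℝ) = (e * u : ℕ) := by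
    rw [hA, he]; push_cast; field_simp
  have hcL : (L : ℝ) * (1 / N) = c := by rw [hc]; push_cast; field_simp
  refine units_core (L := L) (a := ((u * g : ℕ) / (v * g : ℕ) : ℝ)) (b := 1 / N)
    (w := (e * u : ℕ)) (c := c) (by exact_mod_cast hL0) (by positivity) (by positivity) hab
    (by exact_mod_cast hwL) (by exact_mod_cast hcL) ?_ ?_ ?_ ?_ ?_
  · rw [Int.odd_coe_nat, Int.odd_coe_nat]
    rcases Nat.even_or_odd c with h | h
    · right
      have h1 := hec h
      refine h1.mul ?_
      rw [← Nat.not_even_iff_odd]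
      intro h2
      have h3 : Even L := hc ▸ h.mul_left N
      rw [he, Nat.even_mul] at h3
      have h4 := h3.resolve_right (Nat.not_even_iff_odd.2 h1)
      have := Nat.dvd_gcd h2.two_dvd h4.two_dvd
      rw [huv] at this
      omega
    · exact Or.inl h
  · rw [Int.odd_coe_nat, Int.odd_coe_nat, hc, Nat.odd_mul]
    exact fun h => h.2
  · rw [Int.even_coe_nat, Int.odd_coe_nat, hc, Nat.even_mul]
    intro h1 h2
    have h3 := h1.resolve_right (Nat.not_even_iff_odd.2 h2)
    obtain ⟨r, hr⟩ := h3
    have : (8 : ℝ) ≤ N := by exact_mod_cast (by omega : 8 ≤ N)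
    exact one_div_le_one_div_of_le (by norm_num) this
  · intro l hl hlo hce
    rw [Int.even_coe_nat] at hce
    obtain ⟨d, rfl⟩ := hce
    refine ⟨d, by push_cast; ring, ?_⟩
    rw [hc] at hl
    push_cast at hl
    have : l = N * d := by linarith
    rw [this, Int.odd_mul] at hlo
    exact hlo.2
  · intro κ hκ p q x z hx hz hx0 hx1 hz0 hz1
    have hfr : ∀ (κ' : ℤ) (y : ℤ) (k : ℕ), (k : ℤ) = κ' + L * y →
        (k * (u * g : ℕ) / (v * g : ℕ) : ℝ) = κ' * ((u * g : ℕ) / (v * g : ℕ) : ℝ) +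
          ((y * (e * u : ℕ) : ℤ) : ℝ) ∧
        (k / N : ℝ) = κ' * (1 / N) + ((y * c : ℤ) : ℝ) := by
      intro κ' y k hk
      have hkr : (k : ℝ) = κ' + L * y := by exact_mod_cast hk
      constructor
      · rw [mul_div_assoc, hkr]; push_cast at hwL ⊢; linear_combination (y : ℝ) * hwL
      · rw [div_eq_mul_one_div, hkr]; push_cast; linear_combination (y : ℝ) * hcL
    constructor
    · intro hz2
      obtain ⟨k, hk, y, hy⟩ := exists_lift hM hLM hκ
      obtain ⟨h1, h2⟩ := hfr κ y k hy
      have e1 : Int.fract (k * (u * g : ℕ) / (v * g : ℕ) : ℝ) = x := by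
        rw [h1, Int.fract_add_intCast, hx, Int.fract_intCast_add, Int.fract_eq_self.2 ⟨hx0, hx1⟩]
      have e2 : Int.fract (k / N : ℝ) = z := by
        rw [h2, Int.fract_add_intCast, hz, Int.fract_intCast_add, Int.fract_eq_self.2 ⟨hz0, hz1⟩]
      have := X k hk (by rw [e2]; exact hz2)
      rwa [e1, e2] at this
    · intro hz2
      obtain ⟨k, hk, y, hy⟩ := exists_lift hM hLM hκ.neg_left
      obtain ⟨h1, h2⟩ := hfr (-κ) y k hy
      have hne := fract_ne hn hnM hk
      have e0 : (k * (u * g : ℕ) / (v * g : ℕ) : ℝ) = ((y * (e * u : ℕ) - p : ℤ) : ℝ) + (-x) := by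
        rw [h1]; push_cast at hx ⊢; linear_combination -hx
      have hx0' : x ≠ 0 := by
        rintro rfl
        rw [e0, neg_zero, add_zero, Int.fract_intCast] at hne
        exact hne rfl
      have hx0 := lt_of_le_of_ne hx0 hx0'.symm
      have e1 : Int.fract (k * (u * g : ℕ) / (v * g : ℕ) : ℝ) = 1 - x := by
        rw [Int.fract_eq_iff]
        refine ⟨by linarith, by linarith, (y * (e * u : ℕ) - p : ℤ) - 1, ?_⟩
        rw [e0]; push_cast; ring
      have e2 : Int.fract (k / N : ℝ) = 1 - z := by
        rw [Int.fract_eq_iff]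
        refine ⟨by linarith, by linarith, (y * c : ℤ) - q - 1, ?_⟩
        rw [h2]; push_cast; linear_combination -hz
      have := X k hk (by rw [e2]; linarith)
      rw [e1, e2] at this
      linarith

/-! ### The form of the vertex equations -/

/-- The conjugate angle equations at a vertex at which `c l` tiles have their angle `n l * π / M`. -/
def VertexEq (N M : ℕ) (n c : Fin 3 → ℕ) : Prop :=
  ∀ k : ℕ, k.Coprime M → Int.fract (k / N : ℝ) < 1 / 2 →
    ∑ l, c l * Int.fract (k * n l / M : ℝ) = 1 - 2 * Int.fract (k / N : ℝ)

namespace VertexEq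
variable {N M : ℕ} {n c : Fin 3 → ℕ}

lemma lt (hn : ∀ l, 0 < n l) (hs : n 0 + n 1 + n 2 = M) (l : Fin 3) : n l < M := by
  have h0 := hn 0
  have h1 := hn 1
  have h2 := hn 2
  fin_cases l <;> simp <;> omega

lemma one (h : VertexEq N M n c) (hN : 6 < N) (hn : ∀ l, 0 < n l) (hs : n 0 + n 1 + n 2 = M) :
    ∑ l, c l * (n l / M : ℝ) = 1 - 2 / N := by
  have hNr : (6 : ℝ) < N := by exact_mod_cast hN
  have e : Int.fract ((1 : ℕ) / N : ℝ) = 1 / N := by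
    rw [Nat.cast_one, Int.fract_eq_self]
    refine ⟨by positivity, ?_⟩
    rw [div_lt_one (by linarith)]; linarith
  have := h 1 (Nat.coprime_one_left M) (by
    rw [e]; exact one_div_lt_one_div_of_lt (by norm_num) (by linarith))
  rw [e] at this
  rw [show (2 / N : ℝ) = 2 * (1 / N) by ring, ← this]
  refine Finset.sum_congr rfl fun l _ => ?_
  have hlt : (n l : ℝ) < M := by exact_mod_cast lt hn hs l
  have hp : (0 : ℝ) < n l := by exact_mod_cast hn l
  rw [Nat.cast_one, one_mul, Int.fract_eq_self.2 ⟨div_nonneg hp.le (by linarith), (div_lt_one (by linarith)).2 hlt⟩]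

/-- At most two tiles meet at a vertex. -/
lemma small (h : VertexEq N M n c) (hN : 6 < N) (hd : N ∣ M) (hn : ∀ l, 0 < n l)
    (hs : n 0 + n 1 + n 2 = M) : c 0 + c 1 + c 2 ≤ 2 := by
  have hone := h.one hN hn hs
  have hNr : (6 : ℝ) < N := by exact_mod_cast hN
  have h2N : 0 < 2 / (N : ℝ) := by positivity
  have hMr : (0 : ℝ) < M := by
    have := hn 0
    have : 0 < M := by omega
    exact_mod_cast this
  have hsr : (n 0 / M : ℝ) + n 1 / M + n 2 / M = 1 := by
    rw [← add_div, ← add_div, div_eq_one_iff_eq hMr.ne']; exact_mod_cast hs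
  have hp : ∀ l, 0 < (n l / M : ℝ) := fun l => by have := hn l; positivity
  by_contra! hcon
  -- a label used at least twice, in a vertex with at least three tiles, is impossible
  have main : ∀ l, 2 ≤ c l → False := by
    intro l hl
    have hlt : ∀ g : Fin 3 → ℝ, (∀ i, 0 < g i) → 2 * g l < ∑ i, c i * g i := by
      intro g hg
      rw [← Finset.add_sum_erase _ _ (Finset.mem_univ l)]
      have hnn : ∀ i ∈ Finset.univ.erase l, 0 ≤ c i * g i := fun i _ =>
        mul_nonneg (Nat.cast_nonneg _) (hg i).le
      have hlr : (2 : ℝ) ≤ c l := by exact_mod_cast hl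
      by_cases h3 : 3 ≤ c l
      · have h3r : (3 : ℝ) ≤ c l := by exact_mod_cast h3
        have := Finset.sum_nonneg hnn
        nlinarith [hg l]
      · have : ∃ i ∈ Finset.univ.erase l, 0 < c i * g i := by
          have : ∃ i, i ≠ l ∧ 1 ≤ c i := by
            by_contra! hh
            have h0 := hh 0
            have h1 := hh 1
            have h2 := hh 2
            fin_cases l <;> simp at * <;> omega
          obtain ⟨i, hi, hci⟩ := this
          refine ⟨i, by simpa using hi, mul_pos (by exact_mod_cast hci) (hg i)⟩
        have := Finset.sum_pos' hnn this
        nlinarith [hg l]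
    refine no_double hN hd (hn l) (lt hn hs l) ?_ ?_
    · have := hlt (fun l => (n l / M : ℝ)) hp
      simp only [hone] at this
      have e : (2 / N : ℝ) = 2 * (1 / N) := by ring
      linarith
    · intro k hk hf
      have := hlt (fun l => Int.fract (k * n l / M : ℝ)) fun i =>
        lt_of_le_of_ne (Int.fract_nonneg _) (fract_ne (hn i) (lt hn hs i) hk).symm
      simp only [h k hk hf] at this
      linarith
  have h0 : c 0 ≤ 1 := by by_contra! hh; exact main 0 hh
  have h1 : c 1 ≤ 1 := by by_contra! hh; exact main 1 hh
  have h2 : c 2 ≤ 1 := by by_contra! hh; exact main 2 hh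
  have e0 : c 0 = 1 := by omega
  have e1 : c 1 = 1 := by omega
  have e2 : c 2 = 1 := by omega
  rw [Fin.sum_univ_three, e0, e1, e2] at hone
  simp only [Nat.cast_one, one_mul] at hone
  linarith

/-- If the tile is isosceles then the two tiles at a vertex do not have its apex angle and one of
its base angles there. -/
lemma no_iso (h : VertexEq N M n c) (hN : 6 < N) (hd : N ∣ M) (hn : ∀ l, 0 < n l)
    (hs : n 0 + n 1 + n 2 = M) (σ : Equiv.Perm (Fin 3)) (h0 : c (σ 0) = 1) (h1 : c (σ 1) = 1)
    (h2 : c (σ 2) = 0) (hiso : n (σ 1) = n (σ 2)) : False := by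
  have hNr : (6 : ℝ) < N := by exact_mod_cast hN
  have hM : 0 < M := by have := hn 0; omega
  have hMr : (0 : ℝ) < M := by exact_mod_cast hM
  have hsum : ∀ g : Fin 3 → ℝ, ∑ l, c l * g l = g (σ 0) + g (σ 1) := by
    intro g
    rw [← Equiv.sum_comp σ, Fin.sum_univ_three, h0, h1, h2]; simp
  have hsr : (n (σ 0) / M : ℝ) + n (σ 1) / M + n (σ 2) / M = 1 := by
    have : n (σ 0) + n (σ 1) + n (σ 2) = M := by
      rw [← hs, ← Fin.sum_univ_three (fun l => n (σ l)), ← Fin.sum_univ_three n]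
      exact Equiv.sum_comp σ n
    rw [← add_div, ← add_div, div_eq_one_iff_eq hMr.ne']; exact_mod_cast this
  have hone := h.one hN hn hs
  rw [hsum (fun l => (n l / M : ℝ))] at hone
  have hb : (n (σ 1) / M : ℝ) = 2 / N := by rw [← hiso] at hsr; linarith
  have ha : (n (σ 0) / M : ℝ) = 1 - 2 * (2 / N) := by rw [← hiso] at hsr; linarith
  -- an admissible conjugate for which the apex angle would be negative
  obtain ⟨κ, z, hκ, hz, hz1, hz2⟩ : ∃ (κ : ℤ) (z : ℝ), IsCoprime κ (N : ℤ) ∧ κ / N = z ∧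
      1 / 4 ≤ z ∧ z < 1 / 2 := by
    rcases Nat.even_or_odd N with ⟨r, hr⟩ | ⟨r, hr⟩
    · rw [← two_mul] at hr
      have hrr : (N : ℝ) = 2 * r := by exact_mod_cast hr
      rcases Nat.even_or_odd r with ⟨y, hy⟩ | ⟨y, hy⟩
      · refine ⟨r - 1, ((r : ℤ) - 1 : ℤ) / (N : ℝ), ⟨-(r + 1), y, ?_⟩, rfl, ?_, ?_⟩
        · rw [hr, hy]; push_cast; ring
        · rw [div_le_div_iff₀ (by norm_num) (by linarith)]; push_cast; linarith
        · rw [div_lt_div_iff₀ (by linarith) (by norm_num)]; push_cast; linarith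
      · have h8 : (8 : ℝ) ≤ N := by exact_mod_cast (by omega : 8 ≤ N)
        refine ⟨r - 2, ((r : ℤ) - 2 : ℤ) / (N : ℝ), ?_, rfl, ?_, ?_⟩
        · rw [hr]; push_cast
          refine IsCoprime.mul_right ⟨1, 1 - y, by rw [hy]; push_cast; ring⟩
            ⟨y, 1 - y, by rw [hy]; push_cast; ring⟩
        · rw [div_le_div_iff₀ (by norm_num) (by linarith)]; push_cast; linarith
        · rw [div_lt_div_iff₀ (by linarith) (by norm_num)]; push_cast; linarith
    · have hrr : (N : ℝ) = 2 * r + 1 := by exact_mod_cast hr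
      refine ⟨r, (r : ℤ) / (N : ℝ), ⟨-2, 1, by rw [hr]; push_cast; ring⟩, rfl, ?_, ?_⟩
      · rw [div_le_div_iff₀ (by norm_num) (by linarith)]; push_cast; linarith
      · rw [div_lt_div_iff₀ (by linarith) (by norm_num)]; push_cast; linarith
  obtain ⟨k, hk, y, hy⟩ := exists_lift hM hd hκ
  have hkr : (k : ℝ) = κ + N * y := by exact_mod_cast hy
  have hN0 : (N : ℝ) ≠ 0 := by positivity
  have hkz : (k / N : ℝ) = z + y := by rw [hkr, ← hz]; field_simp
  have e1 : Int.fract (k / N : ℝ) = z := by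
    rw [hkz, Int.fract_add_intCast, Int.fract_eq_self]; constructor <;> linarith
  have e2 : Int.fract (k * n (σ 1) / M : ℝ) = 2 * z := by
    rw [mul_div_assoc, hb, show (k * (2 / N) : ℝ) = 2 * (k / N) by ring, hkz,
      show 2 * (z + y) = 2 * z + (2 * y : ℤ) by push_cast; ring, Int.fract_add_intCast,
      Int.fract_eq_self]
    constructor <;> linarith
  have := h k hk (by rw [e1]; exact hz2)
  rw [hsum (fun l => Int.fract (k * n l / M : ℝ)), e1, e2] at this
  have hpos := lt_of_le_of_ne (Int.fract_nonneg _) (fract_ne (hn (σ 0)) (lt hn hs (σ 0)) hk).symm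
  linarith

end VertexEq

lemma exists_perm {x y z : Fin 3} (h1 : x ≠ y) (h2 : x ≠ z) (h3 : y ≠ z) :
    ∃ σ : Equiv.Perm (Fin 3), σ 0 = x ∧ σ 1 = y ∧ σ 2 = z := by
  revert x y z; decide

/-- All vertex equations have the same form. In the last case the tile is isosceles and the two
tiles at each vertex have base angles there. -/
lemma classify {a : Fin 3 → ℝ} {d : ℝ} (hd : 2 / 3 < d) (hd1 : d < 1) (ha : ∀ l, 0 < a l)
    (hs : ∑ l, a l = 1) {J : Type*} [Nonempty J] {c : J → Fin 3 → ℕ}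
    (hc : ∀ j, c j 0 + c j 1 + c j 2 ≤ 2) (he : ∀ j, ∑ l, c j l * a l = d)
    (hiso : ∀ (j : J) (σ : Equiv.Perm (Fin 3)), c j (σ 0) = 1 → c j (σ 1) = 1 → c j (σ 2) = 0 →
      a (σ 1) ≠ a (σ 2)) :
    ∃ σ : Equiv.Perm (Fin 3),
      (a (σ 0) = d ∧ ∀ j, c j (σ 0) = 1 ∧ c j (σ 1) = 0 ∧ c j (σ 2) = 0) ∨
      (a (σ 0) + a (σ 1) = d ∧ ∀ j, c j (σ 0) = 1 ∧ c j (σ 1) = 1 ∧ c j (σ 2) = 0) ∨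
      (2 * a (σ 0) = d ∧ ∀ j, c j (σ 0) = 2 ∧ c j (σ 1) = 0 ∧ c j (σ 2) = 0) ∨
      (a (σ 0) = a (σ 1) ∧ a (σ 0) + a (σ 1) = d ∧
        ∀ j, c j (σ 0) + c j (σ 1) = 2 ∧ c j (σ 2) = 0) := by
  have hs' : ∀ σ : Equiv.Perm (Fin 3), a (σ 0) + a (σ 1) + a (σ 2) = 1 := by
    intro σ
    rw [← hs, ← Equiv.sum_comp σ, Fin.sum_univ_three]
  have he' : ∀ (σ : Equiv.Perm (Fin 3)) j,
      c j (σ 0) * a (σ 0) + c j (σ 1) * a (σ 1) + c j (σ 2) * a (σ 2) = d := by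
    intro σ j
    rw [← he j, ← Equiv.sum_comp σ, Fin.sum_univ_three]
  have hc' : ∀ (σ : Equiv.Perm (Fin 3)) j, c j (σ 0) + c j (σ 1) + c j (σ 2) ≤ 2 := by
    intro σ j
    have : c j (σ 0) + c j (σ 1) + c j (σ 2) = c j 0 + c j 1 + c j 2 := by
      rw [← Fin.sum_univ_three (fun l => c j (σ l)), ← Fin.sum_univ_three (c j)]
      exact Equiv.sum_comp σ (c j)
    rw [this]; exact hc j
  obtain ⟨j₀⟩ := ‹Nonempty J›
  -- the possible counts at a vertex, in terms of the three angles
  have cases : ∀ p q r : ℕ, p + q + r ≤ 2 → (p = 0 ∧ q = 0 ∧ r = 0) ∨ (p = 1 ∧ q = 0 ∧ r = 0) ∨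
      (p = 0 ∧ q = 1 ∧ r = 0) ∨ (p = 0 ∧ q = 0 ∧ r = 1) ∨ (p = 2 ∧ q = 0 ∧ r = 0) ∨
      (p = 0 ∧ q = 2 ∧ r = 0) ∨ (p = 0 ∧ q = 0 ∧ r = 2) ∨ (p = 1 ∧ q = 1 ∧ r = 0) ∨
      (p = 1 ∧ q = 0 ∧ r = 1) ∨ (p = 0 ∧ q = 1 ∧ r = 1) := by omega
  have single : ∀ σ : Equiv.Perm (Fin 3), a (σ 0) = d →
      ∀ j, c j (σ 0) = 1 ∧ c j (σ 1) = 0 ∧ c j (σ 2) = 0 := by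
    intro σ h j
    have h1 := hs' σ
    have h2 := he' σ j
    have p0 := ha (σ 0)
    have p1 := ha (σ 1)
    have p2 := ha (σ 2)
    rcases cases _ _ _ (hc' σ j) with h | h | h | h | h | h | h | h | h | h <;>
      obtain ⟨e0, e1, e2⟩ := h <;> rw [e0, e1, e2] at h2 <;> push_cast at h2 <;>
      first
      | exact ⟨e0, e1, e2⟩
      | (exfalso; linarith)
  have iso : ∀ σ : Equiv.Perm (Fin 3), a (σ 0) = a (σ 1) → a (σ 0) + a (σ 1) = d →
      ∀ j, c j (σ 0) + c j (σ 1) = 2 ∧ c j (σ 2) = 0 := by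
    intro σ h h' j
    have h1 := hs' σ
    have h2 := he' σ j
    have p0 := ha (σ 0)
    have p1 := ha (σ 1)
    have p2 := ha (σ 2)
    rcases cases _ _ _ (hc' σ j) with h | h | h | h | h | h | h | h | h | h <;>
      obtain ⟨e0, e1, e2⟩ := h <;> rw [e0, e1, e2] at h2 ⊢ <;> push_cast at h2 <;>
      first
      | exact ⟨rfl, rfl⟩
      | (exfalso; linarith)
  have pair : ∀ σ : Equiv.Perm (Fin 3), c j₀ (σ 0) = 1 → c j₀ (σ 1) = 1 → c j₀ (σ 2) = 0 →
      a (σ 0) ≠ a (σ 1) → ∀ j, c j (σ 0) = 1 ∧ c j (σ 1) = 1 ∧ c j (σ 2) = 0 := by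
    intro σ g0 g1 g2 hne j
    have i1 := hiso j₀ σ g0 g1 g2
    have i2 := hiso j₀ (Equiv.swap 0 1 |>.trans σ)
    simp only [Equiv.trans_apply, Equiv.swap_apply_left, Equiv.swap_apply_right,
      Equiv.swap_apply_of_ne_of_ne (show (2 : Fin 3) ≠ 0 by decide)
        (show (2 : Fin 3) ≠ 1 by decide)] at i2
    have i2 := i2 g1 g0 g2
    have h0 := he' σ j₀
    rw [g0, g1, g2] at h0
    push_cast at h0
    have h1 := hs' σ
    have h2 := he' σ j
    have p0 := ha (σ 0)
    have p1 := ha (σ 1)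
    have p2 := ha (σ 2)
    rcases cases _ _ _ (hc' σ j) with h | h | h | h | h | h | h | h | h | h <;>
      obtain ⟨e0, e1, e2⟩ := h <;> rw [e0, e1, e2] at h2 <;> push_cast at h2 <;>
      first
      | exact ⟨e0, e1, e2⟩
      | (exfalso; linarith)
      | (exfalso; apply hne; linarith)
      | (exfalso; apply i1; linarith)
      | (exfalso; apply i2; linarith)
  have double : ∀ σ : Equiv.Perm (Fin 3), 2 * a (σ 0) = d → a (σ 0) ≠ a (σ 1) → a (σ 0) ≠ a (σ 2) →
      ∀ j, c j (σ 0) = 2 ∧ c j (σ 1) = 0 ∧ c j (σ 2) = 0 := by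
    intro σ h hne1 hne2 j
    have h1 := hs' σ
    have h2 := he' σ j
    have p0 := ha (σ 0)
    have p1 := ha (σ 1)
    have p2 := ha (σ 2)
    rcases cases _ _ _ (hc' σ j) with h | h | h | h | h | h | h | h | h | h <;>
      obtain ⟨e0, e1, e2⟩ := h <;> rw [e0, e1, e2] at h2 <;> push_cast at h2 <;>
      first
      | exact ⟨e0, e1, e2⟩
      | (exfalso; linarith)
      | (exfalso; apply hne1; linarith)
      | (exfalso; apply hne2; linarith)
  -- the vertex `j₀` has one of the three types for a suitable order of the angles
  obtain ⟨σ, hσ⟩ : ∃ σ : Equiv.Perm (Fin 3), (c j₀ (σ 0) = 1 ∧ c j₀ (σ 1) = 0 ∧ c j₀ (σ 2) = 0) ∨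
      (c j₀ (σ 0) = 1 ∧ c j₀ (σ 1) = 1 ∧ c j₀ (σ 2) = 0) ∨
      (c j₀ (σ 0) = 2 ∧ c j₀ (σ 1) = 0 ∧ c j₀ (σ 2) = 0) := by
    have h2 := he' (Equiv.refl _) j₀
    simp only [Equiv.refl_apply] at h2
    obtain ⟨σ1, x0, x1, x2⟩ := exists_perm (x := 1) (y := 0) (z := 2) (by decide) (by decide) (by decide)
    obtain ⟨σ2, y0, y1, y2⟩ := exists_perm (x := 2) (y := 0) (z := 1) (by decide) (by decide) (by decide)
    obtain ⟨σ3, z0, z1, z2⟩ := exists_perm (x := 0) (y := 2) (z := 1) (by decide) (by decide) (by decide)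
    obtain ⟨σ4, w0, w1, w2⟩ := exists_perm (x := 1) (y := 2) (z := 0) (by decide) (by decide) (by decide)
    rcases cases _ _ _ (hc j₀) with h | h | h | h | h | h | h | h | h | h
    · obtain ⟨e0, e1, e2⟩ := h
      rw [e0, e1, e2] at h2; push_cast at h2; exfalso; linarith
    · exact ⟨Equiv.refl _, Or.inl h⟩
    · exact ⟨σ1, Or.inl (by rw [x0, x1, x2]; tauto)⟩
    · exact ⟨σ2, Or.inl (by rw [y0, y1, y2]; tauto)⟩
    · exact ⟨Equiv.refl _, Or.inr (Or.inr h)⟩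
    · exact ⟨σ1, Or.inr (Or.inr (by rw [x0, x1, x2]; tauto))⟩
    · exact ⟨σ2, Or.inr (Or.inr (by rw [y0, y1, y2]; tauto))⟩
    · exact ⟨Equiv.refl _, Or.inr (Or.inl h)⟩
    · exact ⟨σ3, Or.inr (Or.inl (by rw [z0, z1, z2]; tauto))⟩
    · exact ⟨σ4, Or.inr (Or.inl (by rw [w0, w1, w2]; tauto))⟩
  have h2 := he' σ j₀
  rcases hσ with ⟨e0, e1, e2⟩ | ⟨e0, e1, e2⟩ | ⟨e0, e1, e2⟩
  · rw [e0, e1, e2] at h2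
    push_cast at h2
    have h : a (σ 0) = d := by linarith
    exact ⟨σ, Or.inl ⟨h, single σ h⟩⟩
  · rw [e0, e1, e2] at h2
    push_cast at h2
    have h : a (σ 0) + a (σ 1) = d := by linarith
    by_cases hne : a (σ 0) = a (σ 1)
    · exact ⟨σ, Or.inr (Or.inr (Or.inr ⟨hne, h, iso σ hne h⟩))⟩
    · exact ⟨σ, Or.inr (Or.inl ⟨h, pair σ e0 e1 e2 hne⟩)⟩
  · rw [e0, e1, e2] at h2
    push_cast at h2
    have h : 2 * a (σ 0) = d := by linarith
    by_cases hne1 : a (σ 0) = a (σ 1)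
    · have h' : a (σ 0) + a (σ 1) = d := by linarith
      exact ⟨σ, Or.inr (Or.inr (Or.inr ⟨hne1, h', iso σ hne1 h'⟩))⟩
    · by_cases hne2 : a (σ 0) = a (σ 2)
      · obtain ⟨ρ, r0, r1, r2⟩ := exists_perm (x := σ 0) (y := σ 2) (z := σ 1)
          (by simp) (by simp) (by simp)
        have g1 : a (ρ 0) = a (ρ 1) := by rw [r0, r1, hne2]
        have g2 : a (ρ 0) + a (ρ 1) = d := by rw [r0, r1]; linarith
        exact ⟨ρ, Or.inr (Or.inr (Or.inr ⟨g1, g2, iso ρ g1 g2⟩))⟩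
      · exact ⟨σ, Or.inr (Or.inr (Or.inl ⟨h, double σ h hne1 hne2⟩))⟩

/-! ### Matchings -/

/-- A graph that is the union of two matchings, one of them the perfect matching given by the
fixed-point-free involution `f` and the other listed in `l`, is bipartite: all its cycles
alternate between the matchings. The induction contracts the first pair `(a, b)` of the list,
replacing the path `f a, a, b, f b` by an edge `f a, f b`. -/
lemma exists_coloring {S : Type*} [DecidableEq S] (l : List (S × S)) :
    ∀ (f : S → S), (∀ s, f (f s) = s) → (∀ s, f s ≠ s) → (∀ p ∈ l, p.1 ≠ p.2) →
      l.Pairwise (fun p q => p.1 ≠ q.1 ∧ p.1 ≠ q.2 ∧ p.2 ≠ q.1 ∧ p.2 ≠ q.2) →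
      (∃ c0 : S → Bool, ∀ s, c0 (f s) = !c0 s) →
      ∃ c : S → Bool, (∀ s, c (f s) = !c s) ∧ ∀ p ∈ l, c p.1 ≠ c p.2 := by
  induction l with
  | nil => intro f _ _ _ _ ⟨c, hc⟩; exact ⟨c, hc, by simp⟩
  | cons p l ih =>
    obtain ⟨a, b⟩ := p
    intro f hf hne hl hpw h0
    rw [List.pairwise_cons] at hpw
    have hab : a ≠ b := hl (a, b) (by simp)
    have hl' : ∀ p ∈ l, p.1 ≠ p.2 := fun p hp => hl p (by simp [hp])
    by_cases hfab : f a = b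
    · obtain ⟨c, hc, hcl⟩ := ih f hf hne hl' hpw.2 h0
      refine ⟨c, hc, ?_⟩
      intro p hp
      rcases List.mem_cons.1 hp with rfl | hp
      · simp only; rw [← hfab, hc]; simp
      · exact hcl p hp
    · -- the involution `g` matches `a` with `b` and `f a` with `f b`
      let w : Equiv.Perm S := Equiv.swap a (f b)
      let g : S → S := fun s => w (f (w s))
      have hww : ∀ s, w (w s) = s := fun s => Equiv.swap_apply_self _ _ _
      have hg : ∀ s, g (g s) = s := by intro s; simp only [g, hww, hf]
      have hgne : ∀ s, g s ≠ s := by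
        intro s h
        have := congrArg w h
        simp only [g, hww] at this
        exact hne _ this
      obtain ⟨c0, hc0⟩ := h0
      obtain ⟨c, hc, hcl⟩ := ih g hg hgne hl' hpw.2
        ⟨fun s => c0 (w s), fun s => by simp only [g, hww, hc0]⟩
      have hfa : f a ≠ a := hne a
      have hfb : f b ≠ b := hne b
      have hfba : f b ≠ a := fun h => hfab (by rw [← h, hf])
      have hgfb : g (f b) = f a := by
        simp only [g, w, Equiv.swap_apply_right]
        refine Equiv.swap_apply_of_ne_of_ne hfa fun h => hab ?_
        rw [← hf a, h, hf]
      have hgo : ∀ s, s ≠ a → s ≠ b → s ≠ f a → s ≠ f b → g s = f s := by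
        intro s h1 h2 h3 h4
        simp only [g, w]
        rw [Equiv.swap_apply_of_ne_of_ne h1 h4]
        refine Equiv.swap_apply_of_ne_of_ne (fun h => h3 ?_) fun h => h2 ?_
        · rw [← h, hf]
        · rw [← hf s, h, hf]
      have hcf : c (f a) = !c (f b) := by rw [← hgfb, hc]
      let c' : S → Bool := fun s => if s = a then !c (f a) else if s = b then !c (f b) else c s
      have h'a : c' a = !c (f a) := by simp [c']
      have h'b : c' b = !c (f b) := by simp [c', hab.symm]
      have h'o : ∀ s, s ≠ a → s ≠ b → c' s = c s := by intro s h1 h2; simp [c', h1, h2]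
      refine ⟨c', ?_, ?_⟩
      · intro s
        by_cases h1 : s = a
        · rw [h1, h'a, h'o _ hfa hfab, Bool.not_not]
        by_cases h2 : s = b
        · rw [h2, h'b, h'o _ hfba hfb, Bool.not_not]
        by_cases h3 : s = f a
        · rw [h3, hf, h'a, h'o _ hfa hfab]
        by_cases h4 : s = f b
        · rw [h4, hf, h'b, h'o _ hfba hfb]
        · rw [h'o s h1 h2, h'o (f s) (fun h => h3 (by rw [← h, hf]))
            (fun h => h4 (by rw [← h, hf])), ← hgo s h1 h2 h3 h4, hc]
      · intro p hp
        rcases List.mem_cons.1 hp with rfl | hp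
        · simp only; rw [h'a, h'b, hcf]; simp
        · obtain ⟨q1, q2, q3, q4⟩ := hpw.1 p hp
          rw [h'o _ q1.symm q3.symm, h'o _ q2.symm q4.symm]
          exact hcl p hp

/-- If at each of the points `V j` there are exactly two of the ends `x t`, `y t` of the segments
`x t, y t`, then one can choose the order of the ends of each segment so that
at each `V j` there is one first end and one second end. -/
lemma exists_end_order {X : Type*} {m N : ℕ} (x : Fin m → Bool → X) (V : Fin N → X)
    (hV : Function.Injective V)
    (h : ∀ j, Nat.card {t // x t false = V j} + Nat.card {t // x t true = V j} = 2) :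
    ∃ e : Fin m → Bool, ∀ j, Nat.card {t // x t (e t) = V j} = 1 ∧
      Nat.card {t // x t (!e t) = V j} = 1 := by
  classical
  have hcard : ∀ e : Fin m → Bool, ∀ j, Nat.card {t // x t (e t) = V j} =
      (Finset.univ.filter fun t => x t (e t) = V j).card := by
    intro e j; rw [Nat.card_eq_fintype_card, Fintype.card_subtype]
  have hsl : ∀ j, (Finset.univ.filter fun s : Fin m × Bool => x s.1 s.2 = V j).card = 2 := by
    intro j
    rw [← h j, hcard (fun _ => false), hcard (fun _ => true), Finset.card_filter,
      Finset.card_filter, Finset.card_filter, Fintype.sum_prod_type, ← Finset.sum_add_distrib]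
    refine Finset.sum_congr rfl fun t _ => ?_
    rw [Fintype.sum_bool, add_comm]
  choose a b hab hset using fun j => Finset.card_eq_two.1 (hsl j)
  have hmem : ∀ j s, x s.1 s.2 = V j ↔ s = a j ∨ s = b j := by
    intro j s
    have : s ∈ Finset.univ.filter (fun s : Fin m × Bool => x s.1 s.2 = V j) ↔
        s ∈ ({a j, b j} : Finset (Fin m × Bool)) := by rw [hset j]
    simpa using this
  have ha : ∀ j, x (a j).1 (a j).2 = V j := fun j => (hmem j _).2 (Or.inl rfl)
  have hb : ∀ j, x (b j).1 (b j).2 = V j := fun j => (hmem j _).2 (Or.inr rfl)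
  obtain ⟨c, hc, hcl⟩ := exists_coloring ((List.finRange N).map fun j => (a j, b j))
    (fun s => (s.1, !s.2)) (by simp) (by rintro ⟨t, b⟩; simp) (by simpa using hab)
    (by
      rw [List.pairwise_map]
      refine (List.nodup_finRange N).imp fun {i j} hij => ?_
      have key : ∀ s s' : Fin m × Bool, x s.1 s.2 = V i → x s'.1 s'.2 = V j → s ≠ s' := by
        rintro s s' h1 h2 rfl
        exact hij (hV (h1.symm.trans h2))
      exact ⟨key _ _ (ha i) (ha j), key _ _ (ha i) (hb j), key _ _ (hb i) (ha j),
        key _ _ (hb i) (hb j)⟩)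
    ⟨fun s => s.2, by simp⟩
  have hcab : ∀ j, c (a j) ≠ c (b j) := fun j => hcl (a j, b j) (List.mem_map_of_mem (List.mem_finRange j))
  -- the slots of colour `v` at `V j`
  have hone : ∀ (v : Bool) (e : Fin m → Bool), (∀ t u, c (t, u) = v ↔ u = e t) → ∀ j,
      Nat.card {t // x t (e t) = V j} = 1 := by
    intro v e he j
    have : ∃ s : Fin m × Bool, c s = v ∧ x s.1 s.2 = V j ∧
        ∀ s', c s' = v → x s'.1 s'.2 = V j → s' = s := by
      have hj := hcab j
      by_cases hv : c (a j) = v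
      · refine ⟨a j, hv, ha j, fun s' h1 h2 => ?_⟩
        rcases (hmem j s').1 h2 with h | h
        · exact h
        · rw [h] at h1; exact absurd (hv.trans h1.symm) hj
      · have hv' : c (b j) = v := by
          revert hv hj; cases c (a j) <;> cases c (b j) <;> cases v <;> simp
        refine ⟨b j, hv', hb j, fun s' h1 h2 => ?_⟩
        rcases (hmem j s').1 h2 with h | h
        · rw [h] at h1; exact absurd h1 hv
        · exact h
    obtain ⟨⟨t, u⟩, h1, h2, h3⟩ := this
    rw [Nat.card_eq_one_iff_unique]
    have hu := (he t u).1 h1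
    refine ⟨⟨fun p q => ?_⟩, ⟨t, by rw [← hu]; exact h2⟩⟩
    have k : ∀ p : {t // x t (e t) = V j}, p.1 = t := fun p =>
      congrArg Prod.fst (h3 (p.1, e p.1) ((he _ _).2 rfl) p.2)
    exact Subtype.ext ((k p).trans (k q).symm)
  refine ⟨fun t => c (t, false), fun j => ⟨hone false (fun t => c (t, false)) ?_ j,
    hone true (fun t => !c (t, false)) ?_ j⟩⟩
  · intro t u
    have := hc (t, false)
    simp only [Bool.not_false] at this
    cases u
    · cases c (t, false) <;> simp
    · rw [this]; cases c (t, false) <;> simp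
  · intro t u
    have := hc (t, false)
    simp only [Bool.not_false] at this
    cases u
    · cases c (t, false) <;> simp
    · rw [this]; cases c (t, false) <;> simp

/-! ### Transfer to the complex plane -/

lemma angleAt_perm (T : Fin 3 → Pt) (σ : Equiv.Perm (Fin 3)) (i : Fin 3) :
    angleAt (fun i => T (σ i)) i = angleAt T (σ i) := by
  have h : ∀ (σ : Equiv.Perm (Fin 3)) (i : Fin 3),
      (σ (i + 1) = σ i + 1 ∧ σ (i + 2) = σ i + 2) ∨
      (σ (i + 1) = σ i + 2 ∧ σ (i + 2) = σ i + 1) := by decide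
  rcases h σ i with ⟨h1, h2⟩ | ⟨h1, h2⟩
  · simp only [angleAt, h1, h2]
  · simp only [angleAt, h1, h2]; exact EuclideanGeometry.angle_comm _ _ _

lemma hasAngles_perm (T : Fin 3 → Pt) (σ : Equiv.Perm (Fin 3)) (a : Fin 3 → ℝ) :
    HasAngles (fun i => T (σ i)) (a 0) (a 1) (a 2) ↔ ∀ i, angleAt T (σ i) = a i := by
  rw [HasAngles, angleAt_perm, angleAt_perm, angleAt_perm, Fin.forall_fin_succ,
    Fin.forall_fin_two]
  rfl

/-- The identification of the Euclidean plane with `ℂ`. -/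
def toC : Pt ≃ₗᵢ[ℝ] ℂ := Complex.orthonormalBasisOneI.repr.symm

lemma toC_apply (p : Pt) : toC p = p 0 + p 1 * Complex.I := by
  have : toC p = ∑ i, p i • Complex.orthonormalBasisOneI i :=
    (Complex.orthonormalBasisOneI.sum_repr_symm p).symm
  rw [this, Fin.sum_univ_two]
  simp [Complex.coe_orthonormalBasisOneI]

lemma toC_ngonVertex (N j : ℕ) : toC (ngonVertex N j) = vtx N j := by
  rw [toC_apply]
  have h0 : ngonVertex N j 0 = cos (2 * π * j / N) := by simp [ngonVertex]
  have h1 : ngonVertex N j 1 = sin (2 * π * j / N) := by simp [ngonVertex]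
  rw [h0, h1]
  apply Complex.ext
  · simp only [vtx_re, Complex.add_re, Complex.mul_re, Complex.ofReal_re, Complex.ofReal_im,
      Complex.I_re, Complex.I_im]; ring
  · simp only [vtx_im, Complex.add_im, Complex.mul_im, Complex.ofReal_re, Complex.ofReal_im,
      Complex.I_re, Complex.I_im]; ring

lemma toC_angle (p q r : Pt) :
    InnerProductGeometry.angle (toC p - toC q) (toC r - toC q) = EuclideanGeometry.angle p q r := by
  rw [← map_sub, ← map_sub, EuclideanGeometry.angle, vsub_eq_sub, vsub_eq_sub]
  exact LinearIsometry.angle_map toC.toLinearIsometry _ _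

lemma toC_hull {ι : Type*} (T : ι → Pt) :
    toC '' convexHull ℝ (Set.range T) = convexHull ℝ (Set.range fun i => toC (T i)) := by
  rw [Set.range_comp' toC T]
  exact LinearMap.image_convexHull (toC.toLinearEquiv : Pt →ₗ[ℝ] ℂ) _

lemma toC_interior (s : Set Pt) : interior (toC '' s) = toC '' interior s :=
  (toC.toHomeomorph.image_interior s).symm

lemma cr_ne_of_affineIndependent {T : Fin 3 → Pt} (h : AffineIndependent ℝ T) :
    cr (toC (T 1) - toC (T 0)) (toC (T 2) - toC (T 0)) ≠ 0 := by
  intro h0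
  have h' : AffineIndependent ℝ fun i => toC (T i) :=
    h.map' toC.toLinearEquiv.toLinearMap.toAffineMap toC.injective
  rw [affineIndependent_iff] at h'
  have key : ∀ p q : ℝ, p * (toC (T 1) - toC (T 0)) + q * (toC (T 2) - toC (T 0)) = 0 →
      p = 0 ∧ q = 0 := by
    intro p q hpq
    have := h' Finset.univ ![-p - q, p, q] (by simp [Fin.sum_univ_three]; ring) (by
      simp only [Fin.sum_univ_three, Matrix.cons_val, Complex.real_smul]
      push_cast; linear_combination hpq)
    exact ⟨this 1 (Finset.mem_univ _), this 2 (Finset.mem_univ _)⟩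
  set u := toC (T 1) - toC (T 0)
  set v := toC (T 2) - toC (T 0)
  simp only [cr] at h0
  have h1 := key (-v.re) u.re (by
    apply Complex.ext
    · simp; ring
    · simp; linarith)
  have h2 := key (-v.im) u.im (by
    apply Complex.ext
    · simp; linarith
    · simp; ring)
  have hu : u = 0 := Complex.ext h1.2 h2.2
  have h3 := key 1 0 (by rw [hu]; simp)
  exact one_ne_zero h3.1

/-- Rotation by the angle `n π / M` multiplies directions by `zt M ^ n`. -/
lemma dirn_of_angle {M n : ℕ} {u v : ℂ} (h : 0 < cr u v)
    (ha : InnerProductGeometry.angle u v = n * π / M) : dirn v = zt M ^ n * dirn u := by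
  have hu : u ≠ 0 := by rintro rfl; simp [cr] at h
  have hv : v ≠ 0 := by rintro rfl; simp [cr] at h
  have him : 0 < (v / u).im := by
    rw [Complex.div_im, ← sub_div]
    refine div_pos ?_ (Complex.normSq_pos.2 hu)
    simp only [cr] at h; linarith
  rw [InnerProductGeometry.angle_comm, Complex.angle_eq_abs_arg hv hu,
    abs_of_nonneg (Complex.arg_nonneg_iff.2 him.le)] at ha
  have hq : v / u = ‖v / u‖ * Complex.exp (Complex.arg (v / u) * Complex.I) :=
    (Complex.norm_mul_exp_arg_mul_I _).symm
  have hn : ((‖v / u‖ : ℝ) : ℂ) ≠ 0 := by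
    simpa using ⟨hv, hu⟩
  have hd : dirn (v / u) = zt M ^ n := by
    rw [hq, dirn, map_mul, Complex.conj_ofReal, mul_div_mul_left _ _ hn, ← Complex.exp_conj,
      ← Complex.exp_sub, ha, zt, ← Complex.exp_nat_mul]
    congr 1
    rw [map_mul, Complex.conj_ofReal, Complex.conj_I]
    push_cast; ring
  rw [← hd, dirn, dirn, dirn, map_div₀]
  have := conj_ne hu
  have := conj_ne hv
  field_simp

/-! ### Vertex equations of a tiling -/

lemma exists_denominator {N : ℕ} (hN : 0 < N) (a : Fin 3 → ℝ) (ha : ∀ l, 0 < a l)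
    (hs : a 0 + a 1 + a 2 = π) (hq : ∀ l, ∃ q : ℚ, a l = q * π) :
    ∃ (M : ℕ) (n : Fin 3 → ℕ), 0 < M ∧ Even M ∧ N ∣ M ∧ (∀ l, 0 < n l) ∧
      n 0 + n 1 + n 2 = M ∧ ∀ l, a l = n l * π / M := by
  choose q hq using hq
  have hq0 : ∀ l, 0 < q l := by
    intro l
    have := ha l
    rw [hq l] at this
    exact_mod_cast pos_of_mul_pos_left this pi_pos.le
  let D : ℕ := ∏ l, (q l).den
  have hD : 0 < D := Finset.prod_pos fun l _ => (q l).den_pos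
  let M : ℕ := 2 * N * D
  have hM : 0 < M := by positivity
  have hMr : (M : ℝ) ≠ 0 := by exact_mod_cast hM.ne'
  have hdvd : ∀ l, (q l).den ∣ M :=
    fun l => (Finset.dvd_prod_of_mem (fun l => (q l).den) (Finset.mem_univ l)).mul_left _
  have key : ∀ l, ∃ n : ℕ, (n : ℝ) = q l * M := by
    intro l
    obtain ⟨c, hc⟩ := hdvd l
    refine ⟨(q l).num.toNat * c, ?_⟩
    have h1 : (((q l).num.toNat : ℤ) : ℝ) = (q l).num := by
      rw [Int.toNat_of_nonneg (Rat.num_pos.2 (hq0 l)).le]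
    have h2 : ((q l : ℚ) : ℝ) * (q l).den = (q l).num := by exact_mod_cast Rat.mul_den_eq_num (q l)
    rw [hc]; push_cast at h1 ⊢
    rw [h1, ← h2]; ring
  choose n hn using key
  have han : ∀ l, a l = n l * π / M := by
    intro l; rw [hn, hq]; field_simp
  refine ⟨M, n, hM, ⟨N * D, by simp only [M]; ring⟩, ⟨2 * D, by simp only [M]; ring⟩, ?_, ?_, han⟩
  · intro l
    have h1 : (0 : ℝ) < q l := by exact_mod_cast hq0 l
    have h2 : (0 : ℝ) < M := by exact_mod_cast hM
    have : (0 : ℝ) < n l := by rw [hn]; positivity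
    exact_mod_cast this
  · rw [han, han, han, ← add_div, ← add_div, ← add_mul, ← add_mul, div_eq_iff hMr,
      mul_comm π] at hs
    have := mul_right_cancel₀ pi_pos.ne' hs
    exact_mod_cast this

lemma exists_cTiling {N M m : ℕ} (hN : 6 < N) (hM : 0 < M) (hev : Even M) (hd : N ∣ M)
    {n : Fin 3 → ℕ} (hn : ∀ l, 0 < n l) (hs : n 0 + n 1 + n 2 = M)
    {T : Fin m → Fin 3 → Pt} (hT : IsTiling N T) {L : Fin m → Equiv.Perm (Fin 3)}
    (hL : ∀ t l, angleAt (T t) (L t l) = n l * π / M) :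
    ∃ o : Fin m → Equiv.Perm (Fin 3), CTiling N M m (fun t i => toC (T t (o t i)))
      (fun t i => n ((L t).symm (o t i))) := by
  obtain ⟨haff, hdisj, hun⟩ := hT
  have ho : ∀ t, ∃ o : Equiv.Perm (Fin 3),
      0 < cr (toC (T t (o 1)) - toC (T t (o 0))) (toC (T t (o 2)) - toC (T t (o 0))) := by
    intro t
    rcases (cr_ne_of_affineIndependent (haff t)).lt_or_gt with h | h
    · refine ⟨Equiv.swap 1 2, ?_⟩
      rw [Equiv.swap_apply_left, Equiv.swap_apply_right,
        Equiv.swap_apply_of_ne_of_ne (by decide) (by decide)]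
      simp only [cr] at h ⊢
      linarith
    · exact ⟨1, h⟩
  choose o ho using ho
  have hrange : ∀ t, convexHull ℝ (Set.range fun i => toC (T t (o t i))) =
      toC '' triRegion (T t) := by
    intro t
    rw [triRegion, toC_hull, ← (o t).surjective.range_comp (fun i => toC (T t i))]
    rfl
  refine ⟨o, hN, hM, hev, hd, ho, fun A _ G => ?_, fun t i => hn _, fun t => ?_, fun t i => ?_,
    n, fun t => ⟨(o t).trans (L t).symm, fun i => rfl⟩⟩
  · refine tiling_chain (by omega) ho ?_ ?_ G
    · intro t s hts
      simp only [hrange, toC_interior]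
      exact (Set.disjoint_image_iff toC.injective).2 (hdisj hts)
    · simp only [hrange]
      rw [← Set.image_iUnion, hun, ngon, toC_hull]
      simp only [toC_ngonVertex]
  · have := Equiv.sum_comp ((o t).trans (L t).symm) n
    rw [Fin.sum_univ_three, Fin.sum_univ_three, hs] at this
    exact this
  · refine dirn_of_angle ?_ ?_
    · have h := ho t
      fin_cases i
      · exact h
      · simp [cr] at h ⊢; linarith
      · simp [cr] at h ⊢; linarith
    · rw [toC_angle]
      have := angleAt_perm (T t) (o t) i
      rw [angleAt] at this
      rw [this, ← hL, Equiv.apply_symm_apply]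

/-- The angle equations, with all their conjugates, at the vertices of the polygon. -/
lemma vertexEq_of_tiling {N M m : ℕ} (hN : 6 < N) (hM : 0 < M) (hev : Even M) (hd : N ∣ M)
    {n : Fin 3 → ℕ} (hn : ∀ l, 0 < n l) (hs : n 0 + n 1 + n 2 = M)
    {T : Fin m → Fin 3 → Pt} (hT : IsTiling N T) {L : Fin m → Equiv.Perm (Fin 3)}
    (hL : ∀ t l, angleAt (T t) (L t l) = n l * π / M) (j : Fin N) :
    VertexEq N M n (fun l => countAt (fun t i => T t (L t i)) l (ngonVertex N j)) := by
  classical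
  obtain ⟨o, C⟩ := exists_cTiling hN hM hev hd hn hs hT hL
  intro k hk hf
  -- `angle_eq` is indexed by the predecessor `i` of the vertex, cyclically
  obtain ⟨i, hi, hij⟩ : ∃ i < N, vtx N (i + 1) = vtx N j := by
    refine ⟨(j + (N - 1)) % N, Nat.mod_lt _ (by omega), (vtx_eq_iff (by omega) _ _).2 ?_⟩
    have h1 : (j + (N - 1)) % N + 1 ≡ j + (N - 1) + 1 [MOD N] := (Nat.mod_modEq _ _).add_right 1
    refine h1.trans ?_
    rw [show (j : ℕ) + (N - 1) + 1 = j + N by omega]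
    exact Nat.add_modEq_right
  have h := C.angle_eq hk hf hi
  rw [hij] at h
  rw [← h]
  have e : ∀ t, ∑ i, (if toC (T t (o t i)) = vtx N j then
      Int.fract (k * n ((L t).symm (o t i)) / M : ℝ) else 0) =
      ∑ l, (if T t (L t l) = ngonVertex N j then Int.fract (k * n l / M : ℝ) else 0) := by
    intro t
    refine Eq.trans ?_ (Equiv.sum_comp ((o t).trans (L t).symm) _)
    refine Finset.sum_congr rfl fun i _ => ?_
    simp only [Equiv.trans_apply, Equiv.apply_symm_apply, ← toC_ngonVertex,
      toC.injective.eq_iff]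
  refine Eq.trans ?_ (Finset.sum_congr rfl fun t _ => (e t).symm)
  rw [Finset.sum_comm]
  refine Finset.sum_congr rfl fun l _ => ?_
  have hc : countAt (fun t i => T t (L t i)) l (ngonVertex N j) =
      (Finset.univ.filter fun t => T t (L t l) = ngonVertex N j).card := by
    rw [countAt, Nat.card_eq_fintype_card, Fintype.card_subtype]
  rw [← Finset.sum_filter, Finset.sum_const, nsmul_eq_mul, ← hc]

/-! ### The vertex equations agree -/

lemma ngonVertex_injective {N : ℕ} (hN : 0 < N) :
    Function.Injective fun j : Fin N => ngonVertex N j := by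
  intro i j h
  have h' : vtx N i = vtx N j := by
    rw [← toC_ngonVertex, ← toC_ngonVertex]; exact congrArg toC h
  have := (vtx_eq_iff hN _ _).1 h'
  rw [Nat.ModEq, Nat.mod_eq_of_lt i.2, Nat.mod_eq_of_lt j.2] at this
  exact Fin.ext this

/-- If `N > 6` and `R_N` is tiled by triangles all similar to a triangle whose angles
`α, β, γ` are rational multiples of `π`, then after a suitable permutation of `α, β, γ`
and a suitable labeling of the vertices of each tile, the equations at the `N` vertices
of `R_N` are all the same, namely one of `α = δ_N`, `α + β = δ_N`, `2α = δ_N`. -/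
theorem statement2 (N : ℕ) (hN : 6 < N)
    (α β γ : ℝ) (hα0 : 0 < α) (hβ0 : 0 < β) (hγ0 : 0 < γ) (hsum : α + β + γ = π)
    (hαq : ∃ q : ℚ, α = q * π) (hβq : ∃ q : ℚ, β = q * π) (hγq : ∃ q : ℚ, γ = q * π)
    {m : ℕ} (T : Fin m → Fin 3 → Pt) (htile : IsTiling N T)
    (hang : ∀ t, SimilarTo (T t) α β γ) :
    ∃ (σ : Equiv.Perm (Fin 3)) (L : Fin m → Equiv.Perm (Fin 3)),
      (∀ t, HasAngles (fun i => T t (L t i))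
        (![α, β, γ] (σ 0)) (![α, β, γ] (σ 1)) (![α, β, γ] (σ 2))) ∧
      ((![α, β, γ] (σ 0) = ngonAngle N ∧
        (∀ j : Fin N,
         countAt (fun t i => T t (L t i)) 0 (ngonVertex N j) = 1 ∧
         countAt (fun t i => T t (L t i)) 1 (ngonVertex N j) = 0 ∧
         countAt (fun t i => T t (L t i)) 2 (ngonVertex N j) = 0)) ∨
       (![α, β, γ] (σ 0) + ![α, β, γ] (σ 1) = ngonAngle N ∧
        (∀ j : Fin N,
         countAt (fun t i => T t (L t i)) 0 (ngonVertex N j) = 1 ∧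
         countAt (fun t i => T t (L t i)) 1 (ngonVertex N j) = 1 ∧
         countAt (fun t i => T t (L t i)) 2 (ngonVertex N j) = 0)) ∨
       (2 * ![α, β, γ] (σ 0) = ngonAngle N ∧
        (∀ j : Fin N,
         countAt (fun t i => T t (L t i)) 0 (ngonVertex N j) = 2 ∧
         countAt (fun t i => T t (L t i)) 1 (ngonVertex N j) = 0 ∧
         countAt (fun t i => T t (L t i)) 2 (ngonVertex N j) = 0))) := by
  set a : Fin 3 → ℝ := ![α, β, γ] with ha
  have ha0 : ∀ l, 0 < a l := by intro l; fin_cases l <;> simpa [a]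
  have hasum : a 0 + a 1 + a 2 = π := hsum
  have haq : ∀ l, ∃ q : ℚ, a l = q * π := by intro l; fin_cases l <;> simpa [a]
  obtain ⟨M, n, hM, hev, hd, hn, hs, han⟩ := exists_denominator (by omega : 0 < N) a ha0 hasum haq
  choose L hL using hang
  have hL' : ∀ t l, angleAt (T t) (L t l) = a l := fun t => (hasAngles_perm (T t) (L t) a).1 (hL t)
  have hLσ : ∀ (σ : Equiv.Perm (Fin 3)) t, HasAngles (fun i => T t ((σ.trans (L t)) i))
      (a (σ 0)) (a (σ 1)) (a (σ 2)) := fun σ t =>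
    (hasAngles_perm (T t) (σ.trans (L t)) (a ∘ σ)).2 fun i => hL' t (σ i)
  let c : Fin N → Fin 3 → ℕ := fun j l => countAt (fun t i => T t (L t i)) l (ngonVertex N j)
  have hV : ∀ j, VertexEq N M n (c j) := fun j =>
    vertexEq_of_tiling hN hM hev hd hn hs htile (fun t l => (hL' t l).trans (han l)) j
  have hNr : (6 : ℝ) < N := by exact_mod_cast hN
  have hMr : (0 : ℝ) < M := by exact_mod_cast hM
  have hδ : ngonAngle N = π * (1 - 2 / N) := by rw [ngonAngle]; field_simp
  have hanπ : ∀ l, a l = π * (n l / M) := fun l => by rw [han]; ring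
  have hNz : Nonempty (Fin N) := ⟨⟨0, by omega⟩⟩
  obtain ⟨σ, hσ⟩ := classify (a := fun l => (n l / M : ℝ)) (d := 1 - 2 / N) (c := c)
    (by
      have : (2 : ℝ) / N < 1 / 3 := by rw [div_lt_div_iff₀ (by linarith) (by norm_num)]; linarith
      linarith)
    (by have : (0 : ℝ) < 2 / N := by positivity
        linarith)
    (fun l => by have := hn l; positivity)
    (by
      rw [Fin.sum_univ_three, ← add_div, ← add_div, div_eq_one_iff_eq hMr.ne']
      exact_mod_cast hs)
    (fun j => (hV j).small hN hd hn hs) (fun j => (hV j).one hN hn hs)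
    (fun j σ h0 h1 h2 h => (hV j).no_iso hN hd hn hs σ h0 h1 h2 (by
      have := (div_left_inj' hMr.ne').1 h
      exact_mod_cast this))
  rcases hσ with ⟨h1, h2⟩ | ⟨h1, h2⟩ | ⟨h1, h2⟩ | ⟨h0, h1, h2⟩
  · exact ⟨σ, fun t => σ.trans (L t), hLσ σ, Or.inl ⟨by rw [hδ, hanπ, h1], h2⟩⟩
  · exact ⟨σ, fun t => σ.trans (L t), hLσ σ, Or.inr (Or.inl
      ⟨by rw [hδ, hanπ, hanπ, ← mul_add, h1], h2⟩)⟩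
  · exact ⟨σ, fun t => σ.trans (L t), hLσ σ, Or.inr (Or.inr
      ⟨by rw [hδ, hanπ, mul_left_comm, h1], h2⟩)⟩
  · -- two equal angles: the labels `0` and `1` of some of the tiles have to be exchanged
    obtain ⟨e, he⟩ := exists_end_order
      (fun t b => T t (L t (σ (bif b then 1 else 0)))) (fun j : Fin N => ngonVertex N j)
      (ngonVertex_injective (by omega)) fun j => (h2 j).1
    let s : Bool → Equiv.Perm (Fin 3) := fun b => bif b then Equiv.swap 0 1 else 1
    have hs0 : ∀ b, s b 0 = bif b then 1 else 0 := by decide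
    have hs1 : ∀ b, s b 1 = bif !b then 1 else 0 := by decide
    have hs2 : ∀ b, s b 2 = 2 := by decide
    have ha01 : a (σ 0) = a (σ 1) := by rw [hanπ, hanπ]; exact congrArg (π * ·) h0
    refine ⟨σ, fun t => ((s (e t)).trans σ).trans (L t), fun t => ?_, Or.inr (Or.inl
      ⟨by rw [hδ, hanπ, hanπ, ← mul_add, h1], fun j => ⟨?_, ?_, ?_⟩⟩)⟩
    · have h := hLσ ((s (e t)).trans σ) t
      simp only [Equiv.trans_apply] at h ⊢
      rw [hs0, hs1, hs2] at h
      generalize e t = b at h ⊢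
      cases b
      · exact h
      · simp only [cond_true, cond_false, Bool.not_true, ha01] at h ⊢
        exact h
    · have := (he j).1
      simp only [countAt, Equiv.trans_apply, hs0]
      exact this
    · have := (he j).2
      simp only [countAt, Equiv.trans_apply, hs1]
      exact this
    · have := (h2 j).2
      simp only [countAt, Equiv.trans_apply, hs2]
      exact this

end
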